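/- arXiv:1612.00295 — 2 statements merged into one kernel-verified Lean document; each statement's English description precedes it below -/
import Mathlib

section
/- Let n ≥ 2, ν a unit vector in ℝⁿ, E ⊆ ν^⊥ an (n−1)-dimensional convex body with 0 ∈ E, and b = −hν for some h > 0. Let C = 𝒞(b, E) be the cone over E with vertex b and C_lat = 𝒞(b, ∂E) its lateral boundary, with ν_C the inner unit normal of C. Then for the Euclidean norm Φ(x) = |x|: ∫_{C_lat} dℋ^{n−1} = ℋ^{n−1}(C_lat) ≥ ω_{n−1} r^{n−2} √(h² + r²), where r > 0 satisfies ω_{n−1} r^{n−1} = ℋ^{n−1}(E) and ω_{n−1} = ℋ^{n−1}(𝔹^{n−1}). -/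
open MeasureTheory Metric

local notation "⟪" x ", " y "⟫" => @inner ℝ _ _ x y

/-- The cone `𝒞(p, S)`: union of all segments joining `p` to points of `S`. -/
def coneOver {n : ℕ} (p : EuclideanSpace ℝ (Fin n)) (S : Set (EuclideanSpace ℝ (Fin n))) :
    Set (EuclideanSpace ℝ (Fin n)) :=
  {y | ∃ t ∈ Set.Icc (0 : ℝ) 1, ∃ x ∈ S, y = (1 - t) • p + t • x}

/-- Relative boundary of `E` inside the ambient set `P`: the points of `E` that are not
interior to `E` relative to `P`. -/
def relBoundary {n : ℕ} (P E : Set (EuclideanSpace ℝ (Fin n))) :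
    Set (EuclideanSpace ℝ (Fin n)) :=
  E \ {x | ∃ ε > (0 : ℝ), ball x ε ∩ P ⊆ E}

section ConeLemmaAux

open Set Filter Topology
open scoped ENNReal NNReal Pointwise

/-- One-dimensional Brunn-Minkowski. -/
lemma cl_bm1 (A B C : Set ℝ) (hA : MeasurableSet A) (hB : MeasurableSet B)
    (hAn : A.Nonempty) (hBn : B.Nonempty) (hC : ∀ x ∈ A, ∀ y ∈ B, x + y ∈ C) :
    volume A + volume B ≤ volume C := by
  have key : ∀ K L : Set ℝ, IsCompact K → IsCompact L → K.Nonempty → L.Nonempty → K ⊆ A → L ⊆ B →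
      volume K + volume L ≤ volume C := by
    intro K L hK hL hKn hLn hKA hLB
    obtain ⟨a, haK, ha⟩ := hK.exists_isGreatest hKn
    obtain ⟨b, hbL, hb⟩ := hL.exists_isLeast hLn
    have h1 : volume ((fun x => b + x) '' K) = volume K := by
      rw [image_add_left]; exact measure_preimage_add _ _ _
    have h2 : volume ((fun x => a + x) '' L) = volume L := by
      rw [image_add_left]; exact measure_preimage_add _ _ _
    rw [← h1, ← h2]
    have hd : AEDisjoint volume ((fun x => b + x) '' K) ((fun x => a + x) '' L) := by
      refine measure_mono_null (t := {a + b}) ?_ (by simp)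
      rintro _ ⟨⟨x, hx, rfl⟩, ⟨y, hy, hxy⟩⟩
      have := ha hx
      have := hb hy
      simp only [mem_singleton_iff] at *
      linarith
    rw [← measure_union₀ _ hd]
    · apply measure_mono
      rintro _ (⟨x, hx, rfl⟩ | ⟨y, hy, rfl⟩)
      · have := hC x (hKA hx) b (hLB hbL)
        simpa [add_comm] using this
      · exact hC a (hKA haK) y (hLB hy)
    · exact ((hL.image (by fun_prop)).measurableSet).nullMeasurableSet
  obtain ⟨a0, ha0⟩ := hAn
  obtain ⟨b0, hb0⟩ := hBn
  rw [hA.measure_eq_iSup_isCompact volume, hB.measure_eq_iSup_isCompact volume]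
  refine ENNReal.biSup_add_biSup_le' (p := fun K => K ⊆ A) (q := fun K => K ⊆ B) ⟨∅, by simp⟩ ⟨∅, by simp⟩ ?_
  intro K hK L hL
  by_cases hKc : IsCompact K
  · by_cases hLc : IsCompact L
    · simp only [hKc, hLc, iSup_pos]
      refine le_trans (add_le_add (measure_mono (subset_insert a0 K)) (measure_mono (subset_insert b0 L))) ?_
      exact key _ _ (hKc.insert a0) (hLc.insert b0) (insert_nonempty _ _) (insert_nonempty _ _)
        (insert_subset ha0 hK) (insert_subset hb0 hL)
    · simp only [hKc, hLc, iSup_pos]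
      refine le_trans (add_le_add (measure_mono (subset_insert a0 K)) (le_refl _)) ?_
      have := key _ _ (hKc.insert a0) (isCompact_singleton (x := b0)) (insert_nonempty _ _) (singleton_nonempty _)
        (insert_subset ha0 hK) (by simpa using hb0)
      simpa using this
  · by_cases hLc : IsCompact L
    · simp only [hKc, hLc, iSup_pos]
      refine le_trans (add_le_add (le_refl _) (measure_mono (subset_insert b0 L))) ?_
      have := key _ _ (isCompact_singleton (x := a0)) (hLc.insert b0) (singleton_nonempty _) (insert_nonempty _ _) 
        (by simpa using ha0) (insert_subset hb0 hL)
      simpa using this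
    · simp [hKc, hLc]

lemma cl_bm1' (l : ℝ) (hl0 : 0 < l) (hl1 : l < 1)
    (A B C : Set ℝ) (hA : MeasurableSet A) (hB : MeasurableSet B)
    (hAn : A.Nonempty) (hBn : B.Nonempty) (hC : ∀ x ∈ A, ∀ y ∈ B, (1 - l) * x + l * y ∈ C) :
    ENNReal.ofReal (1 - l) * volume A + ENNReal.ofReal l * volume B ≤ volume C := by
  have h1 := Measure.addHaar_smul volume (1 - l) A
  have h2 := Measure.addHaar_smul volume l B
  simp only [Module.finrank_self, pow_one, abs_of_pos hl0, abs_of_pos (sub_pos.2 hl1)] at h1 h2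
  rw [← h1, ← h2]
  refine cl_bm1 _ _ _ (hA.const_smul₀ _) (hB.const_smul₀ _) (hAn.smul_set) (hBn.smul_set) ?_
  rintro _ ⟨x, hx, rfl⟩ _ ⟨y, hy, rfl⟩
  exact hC x hx y hy

lemma cl_pl_core (l : ℝ) (hl0 : 0 < l) (hl1 : l < 1) (f g h : ℝ → ℝ)
    (hf : Measurable f) (hg : Measurable g) (hh : Measurable h)
    (hf0 : ∀ x, 0 ≤ f x) (hg0 : ∀ x, 0 ≤ g x) (hh0 : ∀ x, 0 ≤ h x)
    (hf1 : ∀ x, f x ≤ 1) (hg1 : ∀ x, g x ≤ 1)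
    (hfs : ∀ t < 1, ∃ x, t < f x) (hgs : ∀ t < 1, ∃ x, t < g x)
    (H : ∀ t, 0 < t → t < 1 → ∀ x y, t < f x → t < g y → t < h ((1 - l) * x + l * y)) :
    ENNReal.ofReal (1 - l) * (∫⁻ x, ENNReal.ofReal (f x)) +
      ENNReal.ofReal l * (∫⁻ x, ENNReal.ofReal (g x)) ≤ ∫⁻ x, ENNReal.ofReal (h x) := by
  rw [lintegral_eq_lintegral_meas_lt _ (Eventually.of_forall hf0) hf.aemeasurable,
    lintegral_eq_lintegral_meas_lt _ (Eventually.of_forall hg0) hg.aemeasurable,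
    lintegral_eq_lintegral_meas_lt _ (Eventually.of_forall hh0) hh.aemeasurable]
  have anti : ∀ u : ℝ → ℝ, Antitone (fun t => volume {a | t < u a}) := by
    intro u s t hst
    exact measure_mono (fun a (ha : t < u a) => lt_of_le_of_lt hst ha)
  rw [← lintegral_const_mul _ (anti f).measurable, ← lintegral_const_mul _ (anti g).measurable,
    ← lintegral_add_left ((anti f).measurable.const_mul _)]
  apply setLIntegral_mono (anti h).measurable
  intro t ht
  have ht : 0 < t := ht
  by_cases h1 : t < 1
  · exact cl_bm1' l hl0 hl1 _ _ _ (measurableSet_lt measurable_const hf)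
      (measurableSet_lt measurable_const hg) (hfs t h1) (hgs t h1)
      (fun x hx y hy => H t ht h1 x y hx hy)
  · have e1 : {a | t < f a} = ∅ := by
      ext a; simp only [mem_ofPred_eq, mem_empty_iff_false, iff_false, not_lt]
      exact (hf1 a).trans (not_lt.1 h1)
    have e2 : {a | t < g a} = ∅ := by
      ext a; simp only [mem_ofPred_eq, mem_empty_iff_false, iff_false, not_lt]
      exact (hg1 a).trans (not_lt.1 h1)
    simp [e1, e2]

lemma cl_amgm (l : ℝ) (hl0 : 0 < l) (hl1 : l < 1) (a b : ℝ≥0∞) :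
    a ^ (1 - l) * b ^ l ≤ ENNReal.ofReal (1 - l) * a + ENNReal.ofReal l * b := by
  have h1 : 0 < 1 - l := sub_pos.2 hl1
  by_cases ha : a = ∞
  · subst ha
    rw [ENNReal.mul_top (by simpa using hl1)]; simp
  by_cases hb : b = ∞
  · subst hb
    rw [ENNReal.mul_top (by simpa using hl0)]; simp
  lift a to ℝ≥0 using ha
  lift b to ℝ≥0 using hb
  have := NNReal.geom_mean_le_arith_mean2_weighted (1 - l).toNNReal l.toNNReal a b (by
    rw [← Real.toNNReal_add h1.le hl0.le]; simp)
  rw [Real.coe_toNNReal _ h1.le, Real.coe_toNNReal _ hl0.le] at this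
  rw [← ENNReal.coe_rpow_of_nonneg _ h1.le, ← ENNReal.coe_rpow_of_nonneg _ hl0.le]
  simp only [ENNReal.ofReal]
  exact_mod_cast this

lemma cl_pl1_bdd (l : ℝ) (hl0 : 0 < l) (hl1 : l < 1) (f g h : ℝ → ℝ≥0∞)
    (hf : Measurable f) (hg : Measurable g) (hh : Measurable h)
    (hfb : (⨆ x, f x) ≠ ∞) (hgb : (⨆ x, g x) ≠ ∞)
    (H : ∀ x y, f x ^ (1 - l) * g y ^ l ≤ h ((1 - l) * x + l * y)) :
    (∫⁻ x, f x) ^ (1 - l) * (∫⁻ x, g x) ^ l ≤ ∫⁻ x, h x := by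
  have h1l : 0 < 1 - l := sub_pos.2 hl1
  set a := ⨆ x, f x with ha
  set b := ⨆ x, g x with hb
  by_cases ha0 : a = 0
  · have : ∀ x, f x = 0 := fun x => le_antisymm (ha0 ▸ le_iSup f x) bot_le
    simp [this, ENNReal.zero_rpow_of_pos h1l]
  by_cases hb0 : b = 0
  · have : ∀ x, g x = 0 := fun x => le_antisymm (hb0 ▸ le_iSup g x) bot_le
    simp [this, ENNReal.zero_rpow_of_pos hl0]
  set c := a ^ (1 - l) * b ^ l with hc
  have hc0 : c ≠ 0 := by
    simp [hc, ENNReal.rpow_eq_zero_iff, ha0, hb0, hfb, hgb]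
  have hct : c ≠ ∞ :=
    ENNReal.mul_ne_top (ENNReal.rpow_ne_top_of_nonneg h1l.le hfb)
      (ENNReal.rpow_ne_top_of_nonneg hl0.le hgb)
  have hfa : ∀ x, f x / a ≤ 1 := fun x => ENNReal.div_le_of_le_mul (by simpa using le_iSup f x)
  have hgb' : ∀ x, g x / b ≤ 1 := fun x => ENNReal.div_le_of_le_mul (by simpa using le_iSup g x)
  have sup : ∀ (u : ℝ → ℝ≥0∞) (e : ℝ≥0∞), e = (⨆ x, u x) → e ≠ 0 → e ≠ ∞ → 
      (∀ x, u x / e ≤ 1) → ∀ t < 1, ∃ x, t < (u x / e).toReal := by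
    intro u e he he0 het hu t ht
    have : ENNReal.ofReal t * e < ⨆ x, u x := by
      rw [← he]
      calc ENNReal.ofReal t * e < 1 * e := by
            apply ENNReal.mul_lt_mul_left he0 het
            simpa using ht
        _ = e := one_mul _
    obtain ⟨x, hx⟩ := lt_iSup_iff.1 this
    refine ⟨x, ?_⟩
    have h2 : ENNReal.ofReal t < u x / e := by
      rwa [ENNReal.lt_div_iff_mul_lt (Or.inl he0) (Or.inl het)]
    by_contra hcon
    rw [← ENNReal.ofReal_toReal (ne_top_of_le_ne_top (by simp) (hu x) : u x / e ≠ ∞)] at h2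
    exact absurd (ENNReal.ofReal_le_ofReal (not_lt.1 hcon)) (not_le.2 h2)
  have hco : ∀ x, ENNReal.ofReal (f x / a).toReal = f x / a := fun x =>
    ENNReal.ofReal_toReal (ne_top_of_le_ne_top (by simp) (hfa x))
  have hcg : ∀ x, ENNReal.ofReal (g x / b).toReal = g x / b := fun x =>
    ENNReal.ofReal_toReal (ne_top_of_le_ne_top (by simp) (hgb' x))
  have hch : ∀ x, ENNReal.ofReal (min (h x / c) 1).toReal = min (h x / c) 1 := fun x =>
    ENNReal.ofReal_toReal (ne_top_of_le_ne_top (by simp) (min_le_right _ _))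
  have := cl_pl_core l hl0 hl1 (fun x => (f x / a).toReal) (fun x => (g x / b).toReal)
    (fun x => (min (h x / c) 1).toReal) (by fun_prop) (by fun_prop) 
    ((hh.div_const c).min measurable_const).ennreal_toReal
    (fun _ => ENNReal.toReal_nonneg) (fun _ => ENNReal.toReal_nonneg)
    (fun _ => ENNReal.toReal_nonneg)
    (fun x => ENNReal.toReal_le_of_le_ofReal zero_le_one (by simpa using hfa x))
    (fun x => ENNReal.toReal_le_of_le_ofReal zero_le_one (by simpa using hgb' x))
    (sup f a ha ha0 hfb hfa) (sup g b hb hb0 hgb hgb')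
    (by
      intro t ht0 ht1 x y hx hy
      rw [← ENNReal.ofReal_lt_iff_lt_toReal ht0.le 
        (ne_top_of_le_ne_top (by simp) (min_le_right _ _)), lt_min_iff]
      refine ⟨?_, by simpa using ht1⟩
      rw [← ENNReal.ofReal_lt_iff_lt_toReal ht0.le
        (ne_top_of_le_ne_top (by simp) (hfa x))] at hx
      rw [← ENNReal.ofReal_lt_iff_lt_toReal ht0.le
        (ne_top_of_le_ne_top (by simp) (hgb' y))] at hy
      calc ENNReal.ofReal t = ENNReal.ofReal t ^ (1 - l) * ENNReal.ofReal t ^ l := by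
            rw [← ENNReal.rpow_add _ _ (by simpa using ht0) (by simp)]; simp
        _ < (f x / a) ^ (1 - l) * (g y / b) ^ l :=
            ENNReal.mul_lt_mul (ENNReal.rpow_lt_rpow hx h1l) (ENNReal.rpow_lt_rpow hy hl0)
        _ = (f x ^ (1 - l) * g y ^ l) / c := by
            rw [ENNReal.div_rpow_of_nonneg _ _ h1l.le, ENNReal.div_rpow_of_nonneg _ _ hl0.le,
              hc, div_eq_mul_inv, div_eq_mul_inv, div_eq_mul_inv, 
              ENNReal.mul_inv (Or.inr (ENNReal.rpow_ne_top_of_nonneg hl0.le hgb))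
               (Or.inl (ENNReal.rpow_ne_top_of_nonneg h1l.le hfb))]
            ring
        _ ≤ _ := ENNReal.div_le_div_right (H x y) c)
  simp only [hco, hcg, hch] at this
  have e1 : ∫⁻ x, f x / a = (∫⁻ x, f x) / a := by
    simp only [div_eq_mul_inv]; rw [lintegral_mul_const _ hf]
  have e2 : ∫⁻ x, g x / b = (∫⁻ x, g x) / b := by
    simp only [div_eq_mul_inv]; rw [lintegral_mul_const _ hg]
  have e3 : ∫⁻ x, h x / c = (∫⁻ x, h x) / c := by
    simp only [div_eq_mul_inv]; rw [lintegral_mul_const _ hh]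
  have h3 := (cl_amgm l hl0 hl1 _ _).trans (e1 ▸ e2 ▸ this)
  have h4 := h3.trans ((lintegral_mono fun x => min_le_left _ _).trans e3.le)
  rw [ENNReal.div_rpow_of_nonneg _ _ h1l.le, ENNReal.div_rpow_of_nonneg _ _ hl0.le] at h4
  have h5 : (∫⁻ x, f x) ^ (1 - l) * (∫⁻ x, g x) ^ l / c ≤ (∫⁻ x, h x) / c := by
    refine le_trans (le_of_eq ?_) h4
    rw [hc, div_eq_mul_inv, div_eq_mul_inv, div_eq_mul_inv, 
              ENNReal.mul_inv (Or.inr (ENNReal.rpow_ne_top_of_nonneg hl0.le hgb))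
               (Or.inl (ENNReal.rpow_ne_top_of_nonneg h1l.le hfb))]
    ring
  have h6 := mul_le_mul_left h5 c
  rwa [ENNReal.div_mul_cancel hc0 hct, ENNReal.div_mul_cancel hc0 hct] at h6

lemma cl_pl1 (l : ℝ) (hl0 : 0 < l) (hl1 : l < 1) (f g h : ℝ → ℝ≥0∞)
    (hf : Measurable f) (hg : Measurable g) (hh : Measurable h)
    (H : ∀ x y, f x ^ (1 - l) * g y ^ l ≤ h ((1 - l) * x + l * y)) :
    (∫⁻ x, f x) ^ (1 - l) * (∫⁻ x, g x) ^ l ≤ ∫⁻ x, h x := by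
  have h1l : 0 < 1 - l := sub_pos.2 hl1
  have conv : ∀ u : ℝ → ℝ≥0∞, Measurable u → 
      Tendsto (fun N : ℕ => ∫⁻ x, min (u x) (N : ℝ≥0∞)) atTop (𝓝 (∫⁻ x, u x)) := by
    intro u hu
    refine lintegral_tendsto_of_tendsto_of_monotone (fun N => (hu.min measurable_const).aemeasurable) ?_ ?_
    · refine Eventually.of_forall fun x i j hij => ?_
      exact min_le_min le_rfl (by exact_mod_cast hij)
    · refine Eventually.of_forall fun x => ?_
      have : Tendsto (fun N : ℕ => min (u x) (N : ℝ≥0∞)) atTop (𝓝 (min (u x) ∞)) :=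
        tendsto_const_nhds.min ENNReal.tendsto_nat_nhds_top
      simpa using this
  by_cases hf0 : ∫⁻ x, f x = 0
  · simp [hf0, ENNReal.zero_rpow_of_pos h1l]
  by_cases hg0 : ∫⁻ x, g x = 0
  · simp [hg0, ENNReal.zero_rpow_of_pos hl0]
  have lim := ENNReal.Tendsto.mul ((conv f hf).ennrpow_const (1 - l))
    (Or.inl (by simp [ENNReal.rpow_eq_zero_iff, hf0, not_lt.2 h1l.le])) ((conv g hg).ennrpow_const l)
    (Or.inl (by simp [ENNReal.rpow_eq_zero_iff, hg0, not_lt.2 hl0.le]))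
  refine le_of_tendsto' lim fun N => ?_
  refine cl_pl1_bdd l hl0 hl1 _ _ h (hf.min measurable_const) (hg.min measurable_const) hh ?_ ?_ ?_
  · exact ne_top_of_le_ne_top (ENNReal.natCast_ne_top N) (iSup_le fun x => min_le_right _ _)
  · exact ne_top_of_le_ne_top (ENNReal.natCast_ne_top N) (iSup_le fun x => min_le_right _ _)
  · intro x y
    refine le_trans ?_ (H x y)
    exact mul_le_mul' (ENNReal.rpow_le_rpow (min_le_left _ _) h1l.le)
      (ENNReal.rpow_le_rpow (min_le_left _ _) hl0.le)

/-- Prekopa-Leindler inequality. -/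
lemma cl_pl (l : ℝ) (hl0 : 0 < l) (hl1 : l < 1) (m : ℕ) : ∀ (f g h : (Fin m → ℝ) → ℝ≥0∞)
    (_ : Measurable f) (_ : Measurable g) (_ : Measurable h)
    (_ : ∀ x y, f x ^ (1 - l) * g y ^ l ≤ h ((1 - l) • x + l • y)),
    (∫⁻ x, f x) ^ (1 - l) * (∫⁻ x, g x) ^ l ≤ ∫⁻ x, h x := by
  induction m with
  | zero =>
    intro f g h hf hg hh H
    have : (volume : Measure (Fin 0 → ℝ)) = Measure.dirac default := by
      rw [volume_pi, Measure.pi_of_empty]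
      congr 1
      exact Subsingleton.elim _ _
    rw [this]
    simp only [lintegral_dirac]
    convert H default default
  | succ m ih =>
    intro f g h hf hg hh H
    have vp := (volume_preserving_piFinSuccAbove (fun _ : Fin (m + 1) => ℝ) 0).symm
    set e := (MeasurableEquiv.piFinSuccAbove (fun _ : Fin (m + 1) => ℝ) 0).symm with he
    have red : ∀ u : (Fin (m + 1) → ℝ) → ℝ≥0∞, Measurable u → 
        ∫⁻ x, u x = ∫⁻ s : ℝ, ∫⁻ y : Fin m → ℝ, u (e (s, y)) := by
      intro u hu
      rw [← vp.lintegral_comp hu, Measure.volume_eq_prod]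
      exact lintegral_prod _ (hu.comp e.measurable).aemeasurable
    rw [red f hf, red g hg, red h hh]
    refine cl_pl1 l hl0 hl1 _ _ _ ?_ ?_ ?_ ?_
    · exact (hf.comp e.measurable).lintegral_prod_right'
    · exact (hg.comp e.measurable).lintegral_prod_right'
    · exact (hh.comp e.measurable).lintegral_prod_right'
    · intro s t
      refine ih _ _ _ (hf.comp (e.measurable.comp (by fun_prop))) (hg.comp (e.measurable.comp (by fun_prop))) 
        (hh.comp (e.measurable.comp (by fun_prop))) ?_
      intro x y
      refine (H (e (s, x)) (e (t, y))).trans (le_of_eq ?_)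
      congr 1
      ext i
      refine Fin.cases ?_ (fun j => ?_) i
      · simp [he, MeasurableEquiv.piFinSuccAbove, Fin.insertNthEquiv]
      · simp [he, MeasurableEquiv.piFinSuccAbove, Fin.insertNthEquiv]


/-- Brunn-Minkowski for two compact sets of equal volume. -/
lemma cl_bm_vol (m : ℕ) (l : ℝ) (hl0 : 0 < l) (hl1 : l < 1) 
    (A B C : Set (EuclideanSpace ℝ (Fin m))) (hA : MeasurableSet A) (hB : MeasurableSet B)
    (hC : MeasurableSet C)
    (hAB : volume A = volume B) (hAt : volume A ≠ ∞)
    (H : ∀ x ∈ A, ∀ y ∈ B, (1 - l) • x + l • y ∈ C) : volume A ≤ volume C := by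
  have h1l : 0 < 1 - l := sub_pos.2 hl1
  have vp := PiLp.volume_preserving_toLp (Fin m)
  have key : ∀ S : Set (EuclideanSpace ℝ (Fin m)), MeasurableSet S → 
      ∫⁻ x : Fin m → ℝ, (S.indicator (fun _ => (1 : ℝ≥0∞)) (WithLp.toLp 2 x)) = volume S := by
    intro S hS
    have h2 := vp.lintegral_comp (f := S.indicator (fun _ => (1 : ℝ≥0∞))) (measurable_const.indicator hS)
    rw [h2, lintegral_indicator_const hS, one_mul]
  have := cl_pl l hl0 hl1 m (fun x => A.indicator (fun _ => (1 : ℝ≥0∞)) (WithLp.toLp 2 x))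
    (fun x => B.indicator (fun _ => (1 : ℝ≥0∞)) (WithLp.toLp 2 x))
    (fun x => C.indicator (fun _ => (1 : ℝ≥0∞)) (WithLp.toLp 2 x))
    ((measurable_const.indicator hA).comp vp.measurable)
    ((measurable_const.indicator hB).comp vp.measurable)
    ((measurable_const.indicator hC).comp vp.measurable) (by
      intro x y
      by_cases hx : WithLp.toLp 2 x ∈ A
      · by_cases hy : WithLp.toLp 2 y ∈ B
        · have := H _ hx _ hy
          simp [hx, hy, this]
        · simp [hy, ENNReal.zero_rpow_of_pos hl0]
      · simp [hx, ENNReal.zero_rpow_of_pos h1l])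
  rw [key A hA, key B hB, key C hC, ← hAB] at this
  refine le_trans (le_of_eq ?_) this
  by_cases h0 : volume A = 0
  · simp [h0, ENNReal.zero_rpow_of_pos hl0]
  · rw [← ENNReal.rpow_add _ _ h0 hAt]; simp

lemma cl_bm (m : ℕ) (μ : Measure (EuclideanSpace ℝ (Fin m))) [μ.IsAddHaarMeasure]
    (e : ℝ) (he : 0 < e)
    (A B C : Set (EuclideanSpace ℝ (Fin m))) (hA : MeasurableSet A) (hB : MeasurableSet B)
    (hC : MeasurableSet C)
    (hAB : μ A = μ B) (hAt : μ A ≠ ∞)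
    (H : ∀ x ∈ A, ∀ y ∈ B, x + e • y ∈ C) : ENNReal.ofReal ((1 + e) ^ m) * μ A ≤ μ C := by
  have hv := Measure.isAddLeftInvariant_eq_smul (volume : Measure (EuclideanSpace ℝ (Fin m))) μ
  set k := (volume : Measure (EuclideanSpace ℝ (Fin m))).addHaarScalarFactor μ
  have hvol : ∀ S, (volume : Measure (EuclideanSpace ℝ (Fin m))) S = k * μ S := by
    intro S; conv_lhs => rw [hv]
    rfl
  have hk : (k : ℝ≥0∞) ≠ 0 := by
    intro h0
    have h3 : (volume : Measure (EuclideanSpace ℝ (Fin m))) univ = 0 := by simp [hvol, h0]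
    exact (IsOpen.measure_ne_zero volume isOpen_univ univ_nonempty) h3
  have hC' : MeasurableSet ((1 + e)⁻¹ • C) := hC.const_smul₀ _
  have h1 := cl_bm_vol m (e / (1 + e)) (by positivity) (by rw [div_lt_one (by positivity)]; linarith)
    A B ((1 + e)⁻¹ • C) hA hB hC' (by rw [hvol, hvol, hAB]) 
    (by rw [hvol]; exact ENNReal.mul_ne_top (by simp) hAt) (by
      intro x hx y hy
      refine ⟨x + e • y, H x hx y hy, ?_⟩
      have e1 : 1 - e / (1 + e) = (1 + e)⁻¹ := by field_simp; ring
      simp only [smul_add, smul_smul, e1]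
      congr 2
      ring)
  rw [hvol, hvol] at h1
  rw [ENNReal.mul_le_mul_iff_right hk (by simp), Measure.addHaar_smul] at h1
  have h2 := mul_le_mul_right h1 (ENNReal.ofReal ((1 + e) ^ m))
  refine h2.trans (le_of_eq ?_)
  rw [← mul_assoc, ← ENNReal.ofReal_mul (by positivity), abs_of_pos (by positivity)]
  simp
  rw [mul_inv_cancel₀ (by positivity)]
  simp

abbrev ClV (m : ℕ) := EuclideanSpace ℝ (Fin m)

/-- Positive sublinear Lipschitz function (gauge of a convex body). -/
structure ClG {m : ℕ} (g : ClV m → ℝ) (K : ℝ≥0) : Prop where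
  add : ∀ x y, g (x + y) ≤ g x + g y
  smul : ∀ t : ℝ, 0 ≤ t → ∀ x, g (t • x) = t * g x
  pos : ∀ x, x ≠ 0 → 0 < g x
  lip : LipschitzWith K g

/-- The gradient. -/
noncomputable def clGrad {m : ℕ} (g : ClV m → ℝ) (x : ClV m) : ClV m :=
  (InnerProductSpace.toDual ℝ (ClV m)).symm (fderiv ℝ g x)

lemma clGrad_inner {m : ℕ} (g : ClV m → ℝ) (x v : ClV m) :
    inner ℝ (clGrad g x) v = fderiv ℝ g x v := by
  simp [clGrad]

lemma clGrad_norm_le {m : ℕ} {g : ClV m → ℝ} {K : ℝ≥0} (hg : ClG g K) (x : ClV m) :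
    ‖clGrad g x‖ ≤ K := by
  simp only [clGrad, LinearIsometryEquiv.norm_map]
  exact norm_fderiv_le_of_lipschitz ℝ hg.lip

lemma clGrad_measurable {m : ℕ} (g : ClV m → ℝ) : Measurable (clGrad g) :=
  (InnerProductSpace.toDual ℝ (ClV m)).symm.continuous.measurable.comp (measurable_fderiv ℝ g)

lemma clGrad_le {m : ℕ} {g : ClV m → ℝ} {K : ℝ≥0} (hg : ClG g K) (x v : ClV m)
    (hx : DifferentiableAt ℝ g x) : inner ℝ (clGrad g x) v ≤ g v := by
  rw [clGrad_inner]
  have h1 : HasDerivAt (fun t : ℝ => g (x + t • v)) (fderiv ℝ g x v) 0 := by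
    have h2 : HasDerivAt (fun t : ℝ => x + t • v) v 0 := by
      simpa using ((hasDerivAt_id (0:ℝ)).smul_const v).const_add x
    have h3 : HasFDerivAt g (fderiv ℝ g x) (x + (0:ℝ) • v) := by simpa using hx.hasFDerivAt
    exact h3.comp_hasDerivAt 0 h2
  refine le_of_tendsto h1.tendsto_slope_zero_right ?_
  filter_upwards [self_mem_nhdsWithin] with t ht
  have ht : 0 < t := ht
  have := hg.add x (t • v)
  rw [hg.smul t ht.le] at this
  simp only [zero_add, zero_smul, add_zero, smul_eq_mul]
  rw [inv_mul_le_iff₀ ht]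
  linarith

lemma clGrad_self {m : ℕ} {g : ClV m → ℝ} {K : ℝ≥0} (hg : ClG g K) (x : ClV m)
    (hx : DifferentiableAt ℝ g x) : inner ℝ (clGrad g x) x = g x := by
  rw [clGrad_inner]
  have h1 : HasDerivAt (fun t : ℝ => g (x + t • x)) (fderiv ℝ g x x) 0 := by
    have h2 : HasDerivAt (fun t : ℝ => x + t • x) x 0 := by
      simpa using ((hasDerivAt_id (0:ℝ)).smul_const x).const_add x
    have h3 : HasFDerivAt g (fderiv ℝ g x) (x + (0:ℝ) • x) := by simpa using hx.hasFDerivAt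
    exact h3.comp_hasDerivAt 0 h2
  refine tendsto_nhds_unique h1.tendsto_slope_zero_right (tendsto_const_nhds.congr' ?_)
  filter_upwards [self_mem_nhdsWithin] with t ht
  have ht : 0 < t := ht
  have h2 : x + t • x = (1 + t) • x := by rw [add_smul, one_smul]
  simp only [zero_add, zero_smul, add_zero, smul_eq_mul, h2]
  rw [hg.smul _ (by positivity)]
  field_simp
  ring

/-- Subgradient inequality. -/
lemma clGrad_sub {m : ℕ} {g : ClV m → ℝ} {K : ℝ≥0} (hg : ClG g K) (x y : ClV m)
    (hx : DifferentiableAt ℝ g x) : g x + inner ℝ (clGrad g x) (y - x) ≤ g y := by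
  rw [inner_sub_right, clGrad_self hg x hx]
  have := clGrad_le hg x y hx
  linarith

lemma clGrad_homog {m : ℕ} {g : ClV m → ℝ} {K : ℝ≥0} (hg : ClG g K) (x : ClV m) (t : ℝ)
    (ht : 0 < t) (hx : DifferentiableAt ℝ g x) :
    DifferentiableAt ℝ g (t • x) ∧ clGrad g (t • x) = clGrad g x := by
  have h1 : g = fun y => t * g (t⁻¹ • y) := by
    ext y; rw [hg.smul _ (by positivity)]; field_simp
  have h3 : HasFDerivAt g (fderiv ℝ g x) (t⁻¹ • (t • x)) := by
    rw [smul_smul, inv_mul_cancel₀ ht.ne', one_smul]; exact hx.hasFDerivAt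
  have h4 : HasFDerivAt (fun y : ClV m => t⁻¹ • y) (t⁻¹ • ContinuousLinearMap.id ℝ (ClV m)) (t • x) :=
    (hasFDerivAt_id (t • x)).fun_const_smul t⁻¹
  have h5 : HasFDerivAt (fun y => t * g (t⁻¹ • y)) 
     (t • ((fderiv ℝ g x).comp (t⁻¹ • ContinuousLinearMap.id ℝ (ClV m)))) (t • x) := 
    (HasFDerivAt.comp (t • x) h3 h4).const_mul t
  have h6 : (t • ((fderiv ℝ g x).comp (t⁻¹ • ContinuousLinearMap.id ℝ (ClV m)))) = fderiv ℝ g x := by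
    ext v
    simp [ht.ne']
  rw [h6, ← h1] at h5
  exact ⟨h5.differentiableAt, by simp only [clGrad, h5.fderiv]⟩

lemma cl_mink {m : ℕ} (hm : 1 ≤ m) (μ : Measure (ClV m)) [μ.IsAddHaarMeasure]
    {g : ClV m → ℝ} {K : ℝ≥0} (hg : ClG g K) (A : Set (ClV m)) (hA : A = {x | g x ≤ 1}) 
    (hAc : IsCompact A) (r : ℝ) (hr : 0 < r) (c : ClV m) (hvol : μ A = μ (closedBall c r)) :
    μ.real A ≤ ∫ x in A, (r * ‖clGrad g x‖ + inner ℝ (clGrad g x) c) ∂μ := by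
  set s : ClV m → ℝ := fun x => r * ‖clGrad g x‖ + inner ℝ (clGrad g x) c with hs
  have hsm : Measurable s := 
    ((clGrad_measurable g).norm.const_mul r).add ((clGrad_measurable g).inner measurable_const)
  set M : ℝ := r * K + K * ‖c‖ with hM
  have hM0 : 0 ≤ M := by positivity
  have hsM : ∀ x, |s x| ≤ M := by
    intro x
    have h1 := clGrad_norm_le hg x
    have h2 := abs_real_inner_le_norm (clGrad g x) c
    have h3 : ‖clGrad g x‖ * ‖c‖ ≤ K * ‖c‖ := by gcongr
    have h4 : r * ‖clGrad g x‖ ≤ r * K := by gcongr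
    calc |s x| ≤ |r * ‖clGrad g x‖| + |inner ℝ (clGrad g x) c| := abs_add_le _ _
      _ ≤ M := by rw [abs_of_nonneg (by positivity)]; linarith
  have hAm : MeasurableSet A := hAc.measurableSet
  have hAt : μ A ≠ ∞ := hAc.measure_lt_top.ne
  have hIn : IntegrableOn s A μ := by
    refine Measure.integrableOn_of_bounded hAt hsm.aestronglyMeasurable (M := M) ?_
    exact Eventually.of_forall fun x => hsM x
  have hmR : (1 : ℝ) ≤ m := by exact_mod_cast hm
  set B : ℝ := m + (m * (M + 1)) ^ 2 with hB
  set D : Set (ClV m) := {x | DifferentiableAt ℝ g x} with hD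
  have hDm : MeasurableSet D := measurableSet_of_differentiableAt ℝ g
  have hDn : μ Dᶜ = 0 := hg.lip.ae_differentiableAt
  have main : ∀ e : ℝ, 0 < e → e < (m * (M + 1))⁻¹ → 
      m * μ.real A ≤ m * (∫ x in A, s x ∂μ) + e * (B * μ.real A) := by
    intro e he0 he1
    have hme : m * (e * (M + 1)) ≤ 1 := by
      have : (0:ℝ) < m * (M + 1) := by positivity
      have := (lt_inv_comm₀ he0 this).1 he1
      have h4 := mul_le_mul_of_nonneg_left this.le he0.le
      rw [mul_inv_cancel₀ he0.ne'] at h4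
      linarith
    have he2 : e * (M + 1) ≤ 1 := by
      have : 0 ≤ e * (M + 1) := by positivity
      nlinarith
    have he3 : e ≤ 1 := by nlinarith
    have hes : ∀ x, |e * s x| ≤ e * M := by
      intro x; rw [abs_mul, abs_of_pos he0]; exact mul_le_mul_of_nonneg_left (hsM x) he0.le
    have h1es : ∀ x, 0 < 1 + e * s x := by
      intro x
      have := (abs_le.1 (hes x)).1
      nlinarith
    -- pointwise bound
    have ptw : ∀ x, (1 + (e * s x + e ^ 2)) ^ m ≤ 1 + m * e * s x + e ^ 2 * B := by
      intro x
      set y := e * s x + e ^ 2 with hy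
      have hy1 : |y| ≤ e * (M + 1) := by
        have h1 := hes x
        have h2 : e ^ 2 ≤ e := by nlinarith
        calc |y| ≤ |e * s x| + |e ^ 2| := abs_add_le _ _
          _ ≤ e * M + e := by rw [abs_of_nonneg (sq_nonneg e)]; linarith
          _ = _ := by ring
      have hmy : |(m:ℝ) * y| ≤ m * (e * (M + 1)) := by
        rw [abs_mul, Nat.abs_cast]; gcongr
      have h5 := Real.abs_exp_sub_one_sub_id_le (hmy.trans hme)
      have h6 : (1 + y) ^ m ≤ Real.exp (m * y) := by
        rw [mul_comm, Real.exp_mul, Real.rpow_natCast]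
        have h7 : 0 ≤ 1 + y := by
          have := h1es x; have := sq_nonneg e; simp only [hy]; linarith
        exact pow_le_pow_left₀ h7 (by linarith [Real.add_one_le_exp y]) m
      have h8 : ((m:ℝ) * y) ^ 2 ≤ (m * (e * (M + 1))) ^ 2 := sq_le_sq' (abs_le.1 hmy).1 (abs_le.1 hmy).2
      have h9 := (abs_le.1 h5).2
      calc (1 + y) ^ m ≤ 1 + m * y + (m * (e * (M + 1))) ^ 2 := by linarith
        _ = _ := by simp only [hy, hB]; ring
    have ptw0 : ∀ x, 0 ≤ 1 + m * e * s x + e ^ 2 * B := by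
      intro x
      refine le_trans ?_ (ptw x)
      exact pow_nonneg (by nlinarith [h1es x, sq_nonneg e]) m
    -- the sets
    set C : Set (ClV m) := A + e • closedBall c r with hC
    have hCm : MeasurableSet C := 
      (hAc.add ((isCompact_closedBall c r).smul e)).measurableSet
    have bm := cl_bm m μ e he0 A (closedBall c r) C hAm isClosed_closedBall.measurableSet hCm hvol hAt
      (fun x hx y hy => add_mem_add hx (smul_mem_smul_set hy))
    set Q : ℤ → Set (ClV m) := fun k => D ∩ {z | ⌊s z / e⌋ = k} with hQ
    have hQm : ∀ k, MeasurableSet (Q k) := fun k =>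
      hDm.inter ((Int.measurable_floor.comp (hsm.div_const e)) (measurableSet_singleton k))
    have hQd : Pairwise (Function.onFun Disjoint (fun k => A ∩ Q k)) := by
      intro i j hij
      refine Set.disjoint_left.2 ?_
      rintro x ⟨_, _, hx⟩ ⟨_, _, hy⟩
      exact hij (hx.symm.trans hy)
    have cover : C ∩ D ⊆ ⋃ k : ℤ, (1 + e ^ 2 * (k + 1) : ℝ) • (A ∩ Q k) := by
      rintro z ⟨⟨x, hx, _, ⟨y, hy, rfl⟩, rfl⟩, hzD⟩
      have hzD : DifferentiableAt ℝ g (x + e • y) := hzD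
      set z := x + e • y with hz
      refine mem_iUnion.2 ⟨⌊s z / e⌋, ?_⟩
      have hfl := Int.lt_floor_add_one (s z / e)
      rw [div_lt_iff₀ he0] at hfl
      set ρ : ℝ := 1 + e ^ 2 * (⌊s z / e⌋ + 1) with hρ
      have hρ1 : 1 + e * s z ≤ ρ := by
        have := mul_le_mul_of_nonneg_left hfl.le he0.le
        simp only [hρ]; nlinarith
      have hρ0 : 0 < ρ := (h1es z).trans_le hρ1
      have hgz : g z ≤ 1 + e * s z := by
        have h1 := clGrad_sub hg z x hzD
        have h2 : g x ≤ 1 := by rw [hA] at hx; exact hx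
        have h3 : x - z = -(e • y) := by simp [hz]
        rw [h3, inner_neg_right, inner_smul_right] at h1
        have h4 : inner ℝ (clGrad g z) y ≤ s z := by
          have h5 : y = c + (y - c) := by abel
          rw [h5, inner_add_right]
          have h6 := real_inner_le_norm (clGrad g z) (y - c)
          have h7 : ‖y - c‖ ≤ r := by simpa [dist_eq_norm] using hy
          have h8 : ‖clGrad g z‖ * ‖y - c‖ ≤ ‖clGrad g z‖ * r := by gcongr
          simp only [hs]; linarith
        have := mul_le_mul_of_nonneg_left h4 he0.le
        linarith
      obtain ⟨hd, hgr⟩ := clGrad_homog hg z ρ⁻¹ (inv_pos.2 hρ0) hzD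
      refine ⟨ρ⁻¹ • z, ⟨?_, hd, ?_⟩, ?_⟩
      · rw [hA]
        change g (ρ⁻¹ • z) ≤ 1
        rw [hg.smul _ (inv_pos.2 hρ0).le, inv_mul_le_iff₀ hρ0]
        linarith
      · change ⌊s (ρ⁻¹ • z) / e⌋ = _
        simp only [hs, hgr]
      · change ρ • (ρ⁻¹ • z) = z
        rw [smul_smul, mul_inv_cancel₀ hρ0.ne', one_smul]
    have up : μ C ≤ ∫⁻ x in A, ENNReal.ofReal (1 + m * e * s x + e ^ 2 * B) ∂μ := by
      calc μ C ≤ μ (C ∩ D) + μ Dᶜ := by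
            refine (measure_mono ?_).trans (measure_union_le _ _)
            intro x hx
            by_cases h : x ∈ D
            · exact Or.inl ⟨hx, h⟩
            · exact Or.inr h
        _ = μ (C ∩ D) := by rw [hDn, add_zero]
        _ ≤ μ (⋃ k : ℤ, (1 + e ^ 2 * (k + 1) : ℝ) • (A ∩ Q k)) := measure_mono cover
        _ ≤ ∑' k : ℤ, μ ((1 + e ^ 2 * (k + 1) : ℝ) • (A ∩ Q k)) := measure_iUnion_le _
        _ ≤ ∑' k : ℤ, ∫⁻ x in A ∩ Q k, ENNReal.ofReal (1 + m * e * s x + e ^ 2 * B) ∂μ := by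
            refine ENNReal.tsum_le_tsum fun k => ?_
            rw [Measure.addHaar_smul, ← setLIntegral_const]
            refine setLIntegral_mono' (hAm.inter (hQm k)) ?_
            rintro x ⟨hxA, hxD, hxk⟩
            have hxk : ⌊s x / e⌋ = k := hxk
            apply ENNReal.ofReal_le_ofReal
            refine le_trans ?_ (ptw x)
            have h1 := Int.floor_le (s x / e)
            have h2 := Int.lt_floor_add_one (s x / e)
            rw [hxk] at h1 h2
            rw [le_div_iff₀ he0] at h1
            rw [div_lt_iff₀ he0] at h2
            have h3 := h1es x
            have h4 := mul_le_mul_of_nonneg_left h1 he0.le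
            have h5 := mul_le_mul_of_nonneg_left h2.le he0.le
            have h6 : 0 ≤ 1 + e ^ 2 * (k + 1 : ℝ) := by nlinarith
            rw [finrank_euclideanSpace_fin, abs_of_nonneg (by positivity)]
            refine pow_le_pow_left₀ h6 ?_ m
            nlinarith
        _ = ∫⁻ x in ⋃ k, A ∩ Q k, ENNReal.ofReal (1 + m * e * s x + e ^ 2 * B) ∂μ := by
            rw [lintegral_iUnion (fun k => hAm.inter (hQm k)) hQd]
        _ ≤ _ := lintegral_mono_set (iUnion_subset fun k => inter_subset_left)
    have hi1 : IntegrableOn (fun x => m * e * s x) A μ := hIn.const_mul _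
    have hc1 : IntegrableOn (fun x => (1:ℝ)) A μ := integrableOn_const hAt
    have hc2 : IntegrableOn (fun x => e ^ 2 * B) A μ := integrableOn_const hAt
    have hi2 : IntegrableOn (fun x => 1 + m * e * s x) A μ := hc1.add hi1
    have hi3 : IntegrableOn (fun x => 1 + m * e * s x + e ^ 2 * B) A μ := hi2.add hc2
    rw [← ofReal_integral_eq_lintegral_ofReal hi3 (Eventually.of_forall ptw0)] at up
    have h10 := bm.trans up
    rw [← ofReal_measureReal hAt, ← ENNReal.ofReal_mul (by positivity), 
      ENNReal.ofReal_le_ofReal_iff (integral_nonneg ptw0)] at h10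
    rw [integral_add hi2 hc2, integral_add hc1 hi1, integral_const_mul, setIntegral_const,
      setIntegral_const] at h10
    simp only [smul_eq_mul, mul_one] at h10
    have h11 := one_add_mul_le_pow (show (-2:ℝ) ≤ e by linarith) m
    have h12 : 0 ≤ μ.real A := measureReal_nonneg
    have h13 := mul_le_mul_of_nonneg_right h11 h12
    have h14 : e * (m * μ.real A) ≤ e * (m * (∫ x in A, s x ∂μ) + e * (B * μ.real A)) := by
      nlinarith
    exact le_of_mul_le_mul_left h14 he0
  have lim : Tendsto (fun e : ℝ => m * (∫ x in A, s x ∂μ) + e * (B * μ.real A)) (𝓝[>] 0)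
      (𝓝 (m * (∫ x in A, s x ∂μ))) := by
    have : Continuous (fun e : ℝ => m * (∫ x in A, s x ∂μ) + e * (B * μ.real A)) := by fun_prop
    have h2 := this.tendsto 0
    simp only [zero_mul, add_zero] at h2
    exact h2.mono_left nhdsWithin_le_nhds
  have fin : m * μ.real A ≤ m * (∫ x in A, s x ∂μ) := by
    refine ge_of_tendsto lim ?_
    have : (0:ℝ) < (m * (M + 1))⁻¹ := by positivity
    filter_upwards [Ioo_mem_nhdsGT this] with e he
    exact main e he.1 he.2
  exact le_of_mul_le_mul_left fin (by linarith)

lemma cl_haus_le {X : Type*} {m k : ℕ} (d : ℝ) (hd : 0 ≤ d) (φ : X → ClV m) (Ψ : X → ClV k) (S : Set X)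
    (H : ∀ x ∈ S, ∀ y ∈ S, ‖φ x - φ y‖ ≤ ‖Ψ x - Ψ y‖) : μH[d] (φ '' S) ≤ μH[d] (Ψ '' S) := by
  rcases S.eq_empty_or_nonempty with rfl | ⟨x0, hx0⟩
  · simp
  haveI : Nonempty X := ⟨x0⟩
  set f : ClV k → ClV m := fun w => φ (Function.invFunOn Ψ S w) with hf
  have hinv : ∀ w ∈ Ψ '' S, Function.invFunOn Ψ S w ∈ S ∧ Ψ (Function.invFunOn Ψ S w) = w := by
    intro w hw
    exact ⟨Function.invFunOn_mem hw, Function.invFunOn_eq hw⟩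
  have hl : LipschitzOnWith 1 f (Ψ '' S) := by
    refine LipschitzOnWith.of_dist_le_mul ?_
    intro w hw w' hw'
    obtain ⟨h1, h2⟩ := hinv w hw
    obtain ⟨h3, h4⟩ := hinv w' hw'
    have := H _ h1 _ h3
    rw [h2, h4] at this
    simpa [dist_eq_norm, hf] using this
  have := hl.hausdorffMeasure_image_le hd
  simp only [NNReal.coe_one, ENNReal.coe_one, ENNReal.one_rpow, one_mul] at this
  refine le_trans (measure_mono ?_) this
  rintro _ ⟨x, hx, rfl⟩
  refine ⟨Ψ x, mem_image_of_mem _ hx, ?_⟩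
  obtain ⟨h1, h2⟩ := hinv (Ψ x) (mem_image_of_mem _ hx)
  have := H _ h1 _ hx
  rw [h2, sub_self, norm_zero] at this
  exact sub_eq_zero.1 (norm_le_zero_iff.1 this)

lemma cl_piece {m k : ℕ} {g : ClV m → ℝ} {K : ℝ≥0} (hg : ClG g K)
    (ι : ClV m →ₗᵢ[ℝ] ClV k) (ν b : ClV k) (hν : ‖ν‖ = 1) (hι : ∀ x, inner ℝ (ι x) ν = 0)
    (x0 : ClV m) (hx0 : g (-x0) ≤ 1) (h r : ℝ) (hh : 0 < h) (hr : 0 < r)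
    (S : Set (ClV m)) (hS : MeasurableSet S) (hSD : ∀ x ∈ S, DifferentiableAt ℝ g x)
    (u : ClV m) (hu : ‖u‖ = 1) (hSu : ∀ x ∈ S, 0 < inner ℝ (clGrad g x) u) :
    ENNReal.ofReal (r / √(h ^ 2 + r ^ 2)) * 
      ∫⁻ x in S, ENNReal.ofReal (1 + inner ℝ (clGrad g x) x0 + h ^ 2 / r * inner ℝ (clGrad g x) u)
        ∂μH[(m : ℝ)] ≤ 
    μH[(m : ℝ)] ((fun x => b + ι x + g x • (ι x0 + h • ν)) '' S) := by
  set w : ℝ := √(h ^ 2 + r ^ 2) with hw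
  have hw0 : 0 < w := Real.sqrt_pos.2 (by positivity)
  have hw2 : w ^ 2 = h ^ 2 + r ^ 2 := Real.sq_sqrt (by positivity)
  set σ : ℝ := r / w with hσ
  have hσ0 : 0 < σ := by positivity
  set κ : ℝ := h / w with hκ
  have hσκ : σ ^ 2 + κ ^ 2 = 1 := by
    simp only [hσ, hκ]; field_simp; linarith
  set q : ClV m := x0 + (h ^ 2 / r) • u with hq
  set R : ClV m →ₗ[ℝ] ClV m :=
    LinearMap.transvection ((σ - 1) • (innerSL ℝ u : ClV m →L[ℝ] ℝ).toLinearMap) u with hR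
  have hRdet : LinearMap.det R = σ := by
    rw [hR, LinearMap.transvection.det]
    simp [hu]
  set χ : ClV m → ClV m := fun x => x + g x • q with hχ
  have hcoef : ∀ x, 1 + inner ℝ (clGrad g x) x0 + h ^ 2 / r * inner ℝ (clGrad g x) u = 
      1 + fderiv ℝ g x q := by
    intro x
    rw [← clGrad_inner, hq, inner_add_right, inner_smul_right]; ring
  have hpos : ∀ x ∈ S, 0 < 1 + fderiv ℝ g x q := by
    intro x hx
    rw [← hcoef]
    have h1 := clGrad_le hg x (-x0) (hSD x hx)
    rw [inner_neg_right] at h1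
    have h2 := mul_pos (show 0 < h ^ 2 / r by positivity) (hSu x hx)
    linarith
  have hd : ∀ x ∈ S, HasFDerivWithinAt χ 
      (ContinuousLinearMap.id ℝ (ClV m) + (fderiv ℝ g x).smulRight q) S x := by
    intro x hx
    exact ((hasFDerivAt_id x).add ((hSD x hx).hasFDerivAt.smul_const q)).hasFDerivWithinAt
  have hinj : InjOn χ S := by
    have aux : ∀ x ∈ S, ∀ y ∈ S, χ x = χ y → 0 ≤ g x - g y := by
      intro x hx y hy hxy
      have h1 := clGrad_sub hg y x (hSD y hy)
      have h2 : x - y = -((g x - g y) • q) := by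
        have h3 : x + g x • q = y + g y • q := hxy
        rw [sub_smul, ← sub_eq_zero]
        rw [← sub_eq_zero] at h3
        rw [← h3]; abel
      rw [h2, inner_neg_right, inner_smul_right, clGrad_inner] at h1
      have h4 := hpos y hy
      by_contra h5
      push Not at h5
      nlinarith
    intro x hx y hy hxy
    have h1 := aux x hx y hy hxy
    have h2 := aux y hy x hx hxy.symm
    have h3 : g x = g y := by linarith
    have h4 : x + g x • q = y + g y • q := hxy
    rw [h3] at h4
    exact add_right_cancel h4
  have hdet : ∀ x, (ContinuousLinearMap.id ℝ (ClV m) + (fderiv ℝ g x).smulRight q).det = 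
      1 + fderiv ℝ g x q := by
    intro x
    have := LinearMap.transvection.det (fderiv ℝ g x).toLinearMap q
    have e : ((ContinuousLinearMap.id ℝ (ClV m) + (fderiv ℝ g x).smulRight q : ClV m →L[ℝ] ClV m) :
        ClV m →ₗ[ℝ] ClV m) = LinearMap.transvection (fderiv ℝ g x).toLinearMap q := by
      refine LinearMap.ext fun v => ?_
      rw [LinearMap.transvection.apply]
      rfl
    rw [ContinuousLinearMap.det, e]
    exact this
  have area := lintegral_abs_det_fderiv_eq_addHaar_image (μH[(m : ℝ)] : Measure (ClV m)) hS hd hinj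
  have e1 : ∫⁻ x in S, ENNReal.ofReal (1 + inner ℝ (clGrad g x) x0 + h ^ 2 / r * inner ℝ (clGrad g x) u)
        ∂μH[(m : ℝ)] = μH[(m : ℝ)] (χ '' S) := by
    rw [← area]
    refine setLIntegral_congr_fun hS ?_
    intro x hx
    simp only [hcoef, hdet, abs_of_pos (hpos x hx)]
  rw [e1]
  have e2 := Measure.addHaar_image_linearMap (μH[(m : ℝ)] : Measure (ClV m)) R (χ '' S)
  rw [hRdet, abs_of_pos hσ0] at e2
  rw [← e2, image_image]
  refine cl_haus_le _ (by positivity) _ _ _ ?_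
  intro x hx y hy
  set d : ℝ := g x - g y with hdd
  set v : ClV m := (x - y) + d • x0 with hv
  set p : ℝ := inner ℝ v u with hp
  have n1 : b + ι x + g x • (ι x0 + h • ν) - (b + ι y + g y • (ι x0 + h • ν)) = ι v + (d * h) • ν := by
    simp only [hv, hdd, map_add, map_sub, map_smul, smul_add, sub_smul, smul_smul, sub_mul]
    abel
  have n2 : R (χ x) - R (χ y) = v + ((σ - 1) * p + κ * (d * h)) • u := by
    rw [← map_sub]
    have e3 : χ x - χ y = v + (d * (h ^ 2 / r)) • u := by
      simp only [hχ, hv, hdd, hq, smul_add, sub_smul, smul_smul, sub_mul]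
      abel
    rw [e3, hR, LinearMap.transvection.apply]
    simp only [LinearMap.smul_apply, ContinuousLinearMap.coe_coe, innerSL_apply_apply, inner_add_right,
      inner_smul_right, real_inner_self_eq_norm_sq, hu, smul_eq_mul, add_assoc, ← add_smul]
    rw [real_inner_comm, ← hp]
    congr 2
    simp only [hσ, hκ]
    field_simp
    ring
  rw [n1, n2]
  refine (sq_le_sq₀ (norm_nonneg _) (norm_nonneg _)).1 ?_
  rw [norm_add_sq_real v, norm_add_sq_real (ι v), inner_smul_right, inner_smul_right, hι, norm_smul, norm_smul, hu, hν,
    LinearIsometry.norm_map, ← hp]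
  simp only [mul_one, mul_zero, add_zero, Real.norm_eq_abs, sq_abs]
  have q1 := sq_nonneg (σ * (d * h) - κ * p)
  have q2 : (σ ^ 2 + κ ^ 2) * (p ^ 2 + (d * h) ^ 2) = p ^ 2 + (d * h) ^ 2 := by
    rw [hσκ, one_mul]
  nlinarith [q1, q2]

lemma cl_area {m k : ℕ} (hm : 1 ≤ m) {g : ClV m → ℝ} {K : ℝ≥0} (hg : ClG g K)
    (ι : ClV m →ₗᵢ[ℝ] ClV k) (ν b : ClV k) (hν : ‖ν‖ = 1) (hι : ∀ x, inner ℝ (ι x) ν = 0)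
    (x0 : ClV m) (hx0 : g (-x0) ≤ 1) (h r : ℝ) (hh : 0 < h) (hr : 0 < r)
    (A : Set (ClV m)) (hA : MeasurableSet A) :
    ENNReal.ofReal (r / √(h ^ 2 + r ^ 2)) * 
      ∫⁻ x in A, ENNReal.ofReal (1 + inner ℝ (clGrad g x) x0 + h ^ 2 / r * ‖clGrad g x‖)
        ∂μH[(m : ℝ)] ≤ 
    μH[(m : ℝ)] ((fun x => b + ι x + g x • (ι x0 + h • ν)) '' (A \ {0})) := by
  set Ψ : ClV m → ClV k := fun x => b + ι x + g x • (ι x0 + h • ν) with hΨ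
  set μ : Measure (ClV m) := μH[(m : ℝ)] with hμ
  haveI : Nonempty (Fin m) := ⟨⟨0, hm⟩⟩
  set D : Set (ClV m) := {x | DifferentiableAt ℝ g x} with hD
  have hDm : MeasurableSet D := measurableSet_of_differentiableAt ℝ g
  have hDn : μ Dᶜ = 0 := hg.lip.ae_differentiableAt
  set A' := (A \ {0}) ∩ D with hA'
  have hA'm : MeasurableSet A' := (hA.diff (measurableSet_singleton 0)).inter hDm
  have hΨc : Continuous Ψ := by
    have := hg.lip.continuous
    have := ι.continuous
    fun_prop
  have hΨi : Function.Injective Ψ := by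
    intro x y hxy
    have hin : ∀ z, inner ℝ (Ψ z) ν = inner ℝ b ν + g z * h := by
      intro z
      simp only [hΨ, inner_add_left, inner_smul_left, hι, real_inner_self_eq_norm_sq, hν]
      simp
    have h1 := hin x
    rw [hxy, hin y] at h1
    have h2 : g x = g y := by
      have : g y * h = g x * h := by linarith
      exact (mul_right_cancel₀ hh.ne' this).symm
    have h3 : b + ι x + g x • (ι x0 + h • ν) = b + ι y + g y • (ι x0 + h • ν) := hxy
    rw [h2] at h3
    exact ι.injective (add_left_cancel (add_right_cancel h3))
  haveI : Nontrivial (ClV m) := inferInstance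
  haveI : Nonempty (sphere (0 : ClV m) 1) := (NormedSpace.sphere_nonempty.2 zero_le_one).to_subtype
  set us : ℕ → sphere (0 : ClV m) 1 := TopologicalSpace.denseSeq _ with hus
  have husn : ∀ i, ‖(us i : ClV m)‖ = 1 := fun i => by simpa using (us i).2
  have hx0' : ∀ x ∈ D, 0 ≤ 1 + inner ℝ (clGrad g x) x0 := by
    intro x hx
    have h1 := clGrad_le hg x (-x0) hx
    rw [inner_neg_right] at h1
    linarith
  refine ENNReal.le_of_forall_lt_one_mul_le ?_
  intro a ha
  set α := a.toReal with hα
  have hat : a ≠ ∞ := (ha.trans_le le_top).ne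
  have haα : a = ENNReal.ofReal α := (ENNReal.ofReal_toReal hat).symm
  have hα0 : 0 ≤ α := ENNReal.toReal_nonneg
  have hα1 : α < 1 := by
    rw [haα] at ha; simpa using ha
  set T : ℕ → Set (ClV m) := fun i => A' ∩ {x | α * ‖clGrad g x‖ < inner ℝ (clGrad g x) (us i : ClV m)} with hT
  have hTm : ∀ i, MeasurableSet (T i) := fun i =>
    hA'm.inter (measurableSet_lt ((clGrad_measurable g).norm.const_mul α) 
      ((clGrad_measurable g).inner measurable_const))
  have hTu : ⋃ i, T i = A' := by
    apply subset_antisymm (iUnion_subset fun i => inter_subset_left)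
    intro x hx
    have hxD : DifferentiableAt ℝ g x := hx.2
    have hxn : x ≠ 0 := hx.1.2
    have hG : clGrad g x ≠ 0 := by
      intro h0
      have h1 := clGrad_self hg x hxD
      rw [h0, inner_zero_left] at h1
      exact absurd h1 (hg.pos x hxn).ne
    have hGn : 0 < ‖clGrad g x‖ := norm_pos_iff.2 hG
    have hop : IsOpen {v : sphere (0 : ClV m) 1 | α * ‖clGrad g x‖ < inner ℝ (clGrad g x) (v : ClV m)} :=
      isOpen_lt continuous_const (by fun_prop)
    obtain ⟨i, hi⟩ := (TopologicalSpace.denseRange_denseSeq (sphere (0 : ClV m) 1)).exists_mem_open hop 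
      ⟨⟨‖clGrad g x‖⁻¹ • clGrad g x, by simp [norm_smul, hGn.ne']⟩, by
        change α * ‖clGrad g x‖ < inner ℝ (clGrad g x) (‖clGrad g x‖⁻¹ • clGrad g x)
        rw [inner_smul_right, real_inner_self_eq_norm_sq]
        field_simp
        exact hα1⟩
    exact mem_iUnion.2 ⟨i, hx, hi⟩
  set S : ℕ → Set (ClV m) := disjointed T with hS
  have hSm : ∀ i, MeasurableSet (S i) := fun i => MeasurableSet.disjointed hTm i
  have hSd : Pairwise (Function.onFun Disjoint S) := disjoint_disjointed T
  have hST : ∀ i, S i ⊆ T i := fun i => disjointed_subset T i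
  have hSu : ⋃ i, S i = A' := by rw [hS, iUnion_disjointed, hTu]
  have hAA : ∫⁻ x in A, ENNReal.ofReal (1 + inner ℝ (clGrad g x) x0 + h ^ 2 / r * ‖clGrad g x‖) ∂μ =
     ∫⁻ x in A', ENNReal.ofReal (1 + inner ℝ (clGrad g x) x0 + h ^ 2 / r * ‖clGrad g x‖) ∂μ := by
    refine setLIntegral_congr ?_
    have h1 : μ (D ∩ {0}ᶜ)ᶜ = 0 := by
      rw [compl_inter, compl_compl]
      exact measure_union_null hDn (measure_singleton 0)
    have h2 : ∀ᵐ x ∂μ, x ∈ D ∩ {0}ᶜ := h1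
    filter_upwards [h2] with x hx
    apply propext
    exact ⟨fun h => ⟨⟨h, hx.2⟩, hx.1⟩, fun h => h.1.1⟩
  rw [hAA, ← hSu, lintegral_iUnion hSm hSd, ← ENNReal.tsum_mul_left, ← ENNReal.tsum_mul_left]
  calc _ ≤ ∑' i, μH[(m : ℝ)] (Ψ '' (S i)) := by
        refine ENNReal.tsum_le_tsum fun i => ?_
        have pc := cl_piece hg ι ν b hν hι x0 hx0 h r hh hr (S i) (hSm i)
          (fun x hx => (hST i hx).1.2) (us i) (husn i)
          (fun x hx => lt_of_le_of_lt (by positivity) (hST i hx).2)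
        refine le_trans ?_ pc
        rw [mul_left_comm, ← lintegral_const_mul' _ _ hat]
        refine mul_le_mul_right (setLIntegral_mono' (hSm i) ?_) _
        intro x hx
        rw [haα, ← ENNReal.ofReal_mul hα0]
        apply ENNReal.ofReal_le_ofReal
        have h1 := hx0' x (hST i hx).1.2
        have h2 : α * ‖clGrad g x‖ < inner ℝ (clGrad g x) (us i : ClV m) := (hST i hx).2
        have h3 := mul_le_mul_of_nonneg_left h2.le (show 0 ≤ h ^ 2 / r by positivity)
        nlinarith
    _ = μH[(m : ℝ)] (⋃ i, Ψ '' (S i)) := by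
        rw [measure_iUnion]
        · intro i j hij
          exact (disjoint_image_iff hΨi).2 (hSd hij)
        · intro i
          exact (hSm i).image_of_continuousOn_injOn hΨc.continuousOn hΨi.injOn
    _ ≤ _ := by
        rw [← image_iUnion, hSu]
        exact measure_mono (image_mono inter_subset_left)

/-- An isometric parametrization of the hyperplane orthogonal to a unit vector. -/
lemma cl_param {m : ℕ} (ν : ClV (m + 1)) (hν : ‖ν‖ = 1) :
    ∃ ι : ClV m →ₗᵢ[ℝ] ClV (m + 1), (∀ x, inner ℝ (ι x) ν = 0) ∧
      ∀ y, inner ℝ y ν = 0 → ∃ x, ι x = y := by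
  have hν0 : ν ≠ 0 := by
    intro h; rw [h, norm_zero] at hν; exact zero_ne_one hν
  haveI : Fact (Module.finrank ℝ (ClV (m + 1)) = m + 1) := ⟨by simp⟩
  have hfr : Module.finrank ℝ (ℝ ∙ ν)ᗮ = m := Submodule.finrank_orthogonal_span_singleton hν0
  let e : (ℝ ∙ ν)ᗮ ≃ₗᵢ[ℝ] ClV m :=
    ((stdOrthonormalBasis ℝ (ℝ ∙ ν)ᗮ).reindex (finCongr hfr)).repr
  refine ⟨(ℝ ∙ ν)ᗮ.subtypeₗᵢ.comp e.symm.toLinearIsometry, ?_, ?_⟩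
  · intro x
    have := (e.symm x).2
    rw [Submodule.mem_orthogonal_singleton_iff_inner_left] at this
    exact this
  · intro y hy
    refine ⟨e ⟨y, (Submodule.mem_orthogonal_singleton_iff_inner_left).2 hy⟩, ?_⟩
    simp

/-- The gauge of a convex body containing the origin in its interior. -/
lemma cl_gauge {m : ℕ} (A : Set (ClV m)) (hAc : IsCompact A) (hAcv : Convex ℝ A) (hA0 : A ∈ 𝓝 0) :
    ∃ K, ClG (gauge A) K ∧ A = {x | gauge A x ≤ 1} := by
  obtain ⟨ε, hε, hball⟩ := Metric.mem_nhds_iff.1 hA0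
  have habs : Absorbent ℝ A := absorbent_nhds_zero hA0
  have hbd : Bornology.IsVonNBounded ℝ A := NormedSpace.isVonNBounded_of_isBounded ℝ hAc.isBounded
  lift ε to ℝ≥0 using hε.le
  refine ⟨ε⁻¹, ⟨?_, ?_, ?_, ?_⟩, ?_⟩
  · exact fun x y => gauge_add_le hAcv habs x y
  · intro t ht x
    rw [gauge_smul_of_nonneg ht, smul_eq_mul]
  · intro x hx
    exact (gauge_pos habs hbd).2 hx
  · exact hAcv.lipschitzWith_gauge (by exact_mod_cast hε) hball
  · ext x
    rw [mem_setOf_eq, gauge_le_one_iff_mem_closure hAcv hA0, hAc.isClosed.closure_eq]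

/-- The parametrized lateral surface lies in the lateral boundary of the cone. -/
lemma cl_lat {m : ℕ} (ν : ClV (m + 1)) (ι : ClV m →ₗᵢ[ℝ] ClV (m + 1))
    (hι : ∀ x, inner ℝ (ι x) ν = 0) (E : Set (ClV (m + 1))) (x0 : ClV m)
    (A : Set (ClV m)) (hA : A = {x | ι (x0 + x) ∈ E})
    (hAc : IsCompact A) (hAcv : Convex ℝ A) (hA0 : A ∈ 𝓝 0) (h : ℝ) (b : ClV (m + 1))
    (hb : b = -h • ν) {K : ℝ≥0} (hg : ClG (gauge A) K) (hA1 : A = {x | gauge A x ≤ 1}) :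
    (fun x => b + ι x + gauge A x • (ι x0 + h • ν)) '' (A \ {0}) ⊆
      coneOver b (relBoundary {x | inner ℝ x ν = 0} E) := by
  rintro _ ⟨x, ⟨hxA, hx0⟩, rfl⟩
  have hpos : 0 < gauge A x := hg.pos x hx0
  have hle : gauge A x ≤ 1 := by rw [hA1] at hxA; exact hxA
  have h1 : gauge A ((gauge A x)⁻¹ • x) = 1 := by
    rw [hg.smul _ (by positivity)]; field_simp
  have hmem : (gauge A x)⁻¹ • x ∈ A := by
    have h2 : (gauge A x)⁻¹ • x ∈ {x | gauge A x ≤ 1} := h1.le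
    rwa [← hA1] at h2
  refine ⟨gauge A x, ⟨hpos.le, hle⟩, ι (x0 + (gauge A x)⁻¹ • x), ⟨?_, ?_⟩, ?_⟩
  · rw [hA] at hmem; rw [hA]; exact hmem
  · rintro ⟨ε, hε, hsub⟩
    have hIn : (gauge A x)⁻¹ • x ∈ interior A := by
      rw [mem_interior_iff_mem_nhds, Metric.mem_nhds_iff]
      refine ⟨ε, hε, fun z hz => ?_⟩
      have : ι (x0 + z) ∈ E := by
        refine hsub ⟨?_, hι _⟩
        rw [mem_ball, ι.isometry.dist_eq, dist_add_left]
        exact hz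
      rw [hA]; exact this
    have := (gauge_lt_one_iff_mem_interior hAcv hA0).2 hIn
    linarith
  · simp only [map_add, map_smul, smul_add, smul_smul, mul_inv_cancel₀ hpos.ne', one_smul, hb, sub_smul]
    module

lemma cl_main {m : ℕ} (hm : 1 ≤ m) (ν : ClV (m + 1)) (hν : ‖ν‖ = 1) (E : Set (ClV (m + 1)))
    (hEcp : IsCompact E) (hEcv : Convex ℝ E) (h0E : (0 : ClV (m + 1)) ∈ E)
    (hEsub : E ⊆ {x | inner ℝ x ν = 0}) (h : ℝ) (hh : 0 < h) (b : ClV (m + 1)) (hb : b = -h • ν)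
    (ω : ℝ) (hω : ω = (μH[(m : ℝ)] (closedBall (0 : ClV m) 1)).toReal) (r : ℝ) (hr : 0 < r)
    (hrE : ω * r ^ m = (μH[(m : ℝ)] E).toReal) :
    ENNReal.ofReal (ω * r ^ (m - 1) * √(h ^ 2 + r ^ 2)) ≤
      μH[(m : ℝ)] (coneOver b (relBoundary {x | inner ℝ x ν = 0} E)) := by
  obtain ⟨ι, hι, hιs⟩ := cl_param ν hν
  set μ : Measure (ClV m) := μH[(m : ℝ)] with hμ
  haveI : μ.IsAddHaarMeasure := by rw [hμ]; infer_instance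
  have hω0 : 0 < ω := by
    rw [hω]
    refine ENNReal.toReal_pos (measure_closedBall_pos μ _ one_pos).ne' ?_
    exact measure_closedBall_lt_top.ne
  set E0 : Set (ClV m) := ι ⁻¹' E with hE0
  have hEE : E = ι '' E0 := by
    rw [hE0, image_preimage_eq_inter_range]
    refine (inter_eq_left.2 ?_).symm
    intro y hy
    exact hιs y (hEsub hy)
  have hE0cv : Convex ℝ E0 := hEcv.linear_preimage ι.toLinearMap
  have hE0c : IsCompact E0 := ι.isometry.isClosedEmbedding.isCompact_preimage hEcp
  have hμE : μH[(m : ℝ)] E = μ E0 := by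
    rw [hEE]
    exact ι.isometry.hausdorffMeasure_image (Or.inl (by positivity)) E0
  have hfin : μ E0 ≠ ∞ := hE0c.measure_lt_top.ne
  have ha : μ.real E0 = ω * r ^ m := by rw [hrE, hμE]; rfl
  have ha0 : 0 < ω * r ^ m := by positivity
  have hIn : (interior E0).Nonempty := by
    by_contra hne
    rw [not_nonempty_iff_eq_empty] at hne
    have h1 : frontier E0 = E0 := by rw [hE0c.isClosed.frontier_eq, hne, diff_empty]
    have h2 := hE0cv.addHaar_frontier μ
    rw [h1] at h2
    rw [measureReal_def, h2, ENNReal.toReal_zero] at ha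
    linarith
  obtain ⟨x0, hx0⟩ := hIn
  set A : Set (ClV m) := (fun x => x0 + x) ⁻¹' E0 with hA
  have hμA : μ A = μ E0 := measure_preimage_add μ x0 E0
  have hAc : IsCompact A := (Homeomorph.addLeft x0).isClosedEmbedding.isCompact_preimage hE0c
  have hAcv : Convex ℝ A := hE0cv.translate_preimage_right x0
  have hA0 : A ∈ 𝓝 0 := by
    have : ContinuousAt (fun x : ClV m => x0 + x) 0 := by fun_prop
    apply this
    beta_reduce
    rw [add_zero]
    exact mem_interior_iff_mem_nhds.1 hx0
  have hneg : -x0 ∈ A := by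
    simp only [hA, hE0, mem_preimage, add_neg_cancel, map_zero, h0E]
  obtain ⟨K, hg, hA1⟩ := cl_gauge A hAc hAcv hA0
  have hgx0 : gauge A (-x0) ≤ 1 := gauge_le_one_of_mem hneg
  refine le_trans ?_ (measure_mono (cl_lat ν ι hι E x0 A rfl hAc hAcv hA0 h b hb hg hA1))
  refine le_trans ?_ (cl_area hm hg ι ν b hν hι x0 hgx0 h r hh hr A hAc.measurableSet)
  set c : ClV m := (r ^ 2 / h ^ 2) • x0 with hc
  have hvol : μ A = μ (closedBall c r) := by
    rw [hμA, Measure.addHaar_closedBall μ c hr.le, finrank_euclideanSpace_fin,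
      ← ENNReal.ofReal_toReal hfin, ← measureReal_def, ha,
      ← Measure.addHaar_unitClosedBall_eq_addHaar_unitBall, mul_comm,
      ENNReal.ofReal_mul (by positivity), hω, ENNReal.ofReal_toReal measure_closedBall_lt_top.ne]
  have hmink := cl_mink hm μ hg A hA1 hAc r hr c hvol
  rw [measureReal_def, hμA, ← measureReal_def, ha] at hmink
  set s : ClV m → ℝ := fun x => r * ‖clGrad (gauge A) x‖ + inner ℝ (clGrad (gauge A) x) c with hs
  have hGm := clGrad_measurable (gauge A)
  have hsm : Measurable s := by
    refine (hGm.norm.const_mul r).add ?_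
    exact hGm.inner measurable_const
  have hμAf : IsFiniteMeasure (μ.restrict A) := ⟨by
    rw [Measure.restrict_apply_univ]; exact hAc.measure_lt_top⟩
  have hsi : Integrable s (μ.restrict A) := by
    refine Integrable.of_bound hsm.aestronglyMeasurable (r * K + K * ‖c‖) (Eventually.of_forall fun x => ?_)
    have h1 := clGrad_norm_le hg x
    have h2 := norm_inner_le_norm (𝕜 := ℝ) (clGrad (gauge A) x) c
    refine (norm_add_le _ _).trans ?_
    rw [norm_mul, norm_norm, Real.norm_of_nonneg hr.le]
    have h3 : ‖clGrad (gauge A) x‖ * ‖c‖ ≤ K * ‖c‖ := by gcongr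
    have h4 : r * ‖clGrad (gauge A) x‖ ≤ r * K := by gcongr
    linarith
  have hF : ∀ x, 1 + inner ℝ (clGrad (gauge A) x) x0 + h ^ 2 / r * ‖clGrad (gauge A) x‖ =
      1 + h ^ 2 / r ^ 2 * s x := by
    intro x
    simp only [hs, hc, inner_smul_right]
    field_simp
    ring
  have hFi : Integrable (fun x => 1 + h ^ 2 / r ^ 2 * s x) (μ.restrict A) :=
    (integrable_const _).add (hsi.const_mul _)
  simp only [hF]
  have hnn : 0 ≤ᵐ[μ.restrict A] fun x => 1 + h ^ 2 / r ^ 2 * s x := by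
    refine ae_restrict_of_ae ?_
    filter_upwards [hg.lip.ae_differentiableAt (μ := μ)] with x hx
    rw [← hF, Pi.zero_apply]
    have h1 := clGrad_le hg x (-x0) hx
    rw [inner_neg_right] at h1
    have h2 : 0 ≤ h ^ 2 / r * ‖clGrad (gauge A) x‖ := by positivity
    linarith
  rw [← ofReal_integral_eq_lintegral_ofReal hFi hnn, ← ENNReal.ofReal_mul (by positivity)]
  refine ENNReal.ofReal_le_ofReal ?_
  rw [integral_add (integrable_const _) (hsi.const_mul _), integral_const_mul, integral_const,
    smul_eq_mul, mul_one, measureReal_restrict_apply_univ, measureReal_def μ A, hμA, ← measureReal_def, ha]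
  have hw0 : 0 < √(h ^ 2 + r ^ 2) := by positivity
  have hw2 : √(h ^ 2 + r ^ 2) ^ 2 = h ^ 2 + r ^ 2 := Real.sq_sqrt (by positivity)
  set w := √(h ^ 2 + r ^ 2) with hw
  have hI : ω * r ^ m + h ^ 2 / r ^ 2 * (ω * r ^ m) ≤ ω * r ^ m + h ^ 2 / r ^ 2 * ∫ x in A, s x ∂μ := by
    gcongr
  refine le_trans (le_of_eq ?_) (mul_le_mul_of_nonneg_left hI (by positivity))
  obtain ⟨k, rfl⟩ : ∃ k, m = k + 1 := ⟨m - 1, by omega⟩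
  rw [Nat.add_sub_cancel]
  field_simp
  rw [hw2]
  ring

end ConeLemmaAux

/-- Euclidean cone lemma: the lateral area of the cone of height `h` over an
`(n-1)`-dimensional convex body `E ⊆ ν^⊥` with `0 ∈ E` is at least
`ω_{n-1} r^{n-2} √(h² + r²)`, where `ω_{n-1} r^{n-1} = ℋ^{n-1}(E)`. -/
theorem euclidean_cone_lateral_area_lower_bound
    (n : ℕ) (hn : 2 ≤ n)
    (ν : EuclideanSpace ℝ (Fin n)) (hν : ‖ν‖ = 1)
    (E : Set (EuclideanSpace ℝ (Fin n)))
    (hEcp : IsCompact E) (hEcv : Convex ℝ E) (h0E : (0 : EuclideanSpace ℝ (Fin n)) ∈ E)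
    (hEsub : E ⊆ {x : EuclideanSpace ℝ (Fin n) | ⟪x, ν⟫ = 0})
    (hEdim : affineSpan ℝ E = affineSpan ℝ {x : EuclideanSpace ℝ (Fin n) | ⟪x, ν⟫ = 0})
    (h : ℝ) (hh : 0 < h)
    (b : EuclideanSpace ℝ (Fin n)) (hb : b = -h • ν)
    (ω : ℝ)
    (hω : ω = (μH[(n : ℝ) - 1]
      (closedBall (0 : EuclideanSpace ℝ (Fin (n - 1))) 1)).toReal)
    (r : ℝ) (hr : 0 < r)
    (hrE : ω * r ^ (n - 1) = (μH[(n : ℝ) - 1] E).toReal) :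
    ENNReal.ofReal (ω * r ^ (n - 2) * Real.sqrt (h ^ 2 + r ^ 2)) ≤
      μH[(n : ℝ) - 1]
        (coneOver b (relBoundary {x : EuclideanSpace ℝ (Fin n) | ⟪x, ν⟫ = 0} E)) := by
  obtain ⟨m, rfl⟩ : ∃ m, n = m + 1 := ⟨n - 1, by omega⟩
  have e : ((m + 1 : ℕ) : ℝ) - 1 = m := by push_cast; ring
  rw [e] at hω hrE ⊢
  exact cl_main (by omega) ν hν E hEcp hEcv h0E hEsub h hh b hb ω hω r hr hrE
end

section
/- Let n ≥ 2, let Φ: ℝⁿ → [0,∞) be positively 1-homogeneous, convex and admissible with data (g_ν, φ_ν) for each unit ν. Fix a unit vector ν, an (n−1)-dimensional convex body E ⊆ ν^⊥ with 0 ∈ E, and b = −hν with h > 0. Set C = 𝒞(b, E) and C_lat = 𝒞(b, ∂E), with ν_C the inner unit normal of C. Then ∫_{C_lat} Φ(ν_C) dℋ^{n−1} ≥ ℋ^{n−1}(W_ν) r^{n−2} g_ν(h, r), where r > 0 satisfies r^{n−1} ℋ^{n−1}(W_ν) = ℋ^{n−1}(E) and W_ν = {z ∈ ν^⊥ : φ_ν*(z)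 ≤ 1} is the Wulff shape of φ_ν in ν^⊥, with φ_ν*(z) = sup{z·w : φ_ν(w) < 1}. -/
open MeasureTheory Metric

local notation "⟪" x ", " y "⟫" => @inner ℝ _ _ x y

/-- `v` is an inner unit normal of the convex set `E` at the boundary point `x`. -/
def IsInnerNormalAt {n : ℕ} (E : Set (EuclideanSpace ℝ (Fin n)))
    (x v : EuclideanSpace ℝ (Fin n)) : Prop :=
  ‖v‖ = 1 ∧ ∀ y ∈ E, 0 ≤ ⟪v, y - x⟫

/-- The dual function `φ*` of `φ` on the hyperplane `ν^⊥`: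
`φ*(z) = sup { ⟪z,w⟫ : w ∈ ν^⊥, φ(w) < 1 }`. -/
noncomputable def dualGauge {n : ℕ} (ν : EuclideanSpace ℝ (Fin n))
    (φ : EuclideanSpace ℝ (Fin n) → ℝ) (z : EuclideanSpace ℝ (Fin n)) : ℝ :=
  sSup {s : ℝ | ∃ w : EuclideanSpace ℝ (Fin n), ⟪w, ν⟫ = 0 ∧ φ w < 1 ∧ s = ⟪z, w⟫}

/-- The Wulff shape of `φ` in the hyperplane `ν^⊥`: `W_ν = {z ∈ ν^⊥ : φ*(z) ≤ 1}`. -/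
noncomputable def wulffShape {n : ℕ} (ν : EuclideanSpace ℝ (Fin n))
    (φ : EuclideanSpace ℝ (Fin n) → ℝ) : Set (EuclideanSpace ℝ (Fin n)) :=
  {z | ⟪z, ν⟫ = 0 ∧ dualGauge ν φ z ≤ 1}

section aux
open Set
open scoped Pointwise ENNReal NNReal


lemma vol_add_ge_compact {A B : Set ℝ} (hA : IsCompact A) (hB : IsCompact B)
    (hA0 : A.Nonempty) (hB0 : B.Nonempty) : volume A + volume B ≤ volume (A + B) := by
  obtain ⟨a, haA, ha⟩ := hA.exists_isGreatest hA0
  obtain ⟨b, hbB, hb⟩ := hB.exists_isLeast hB0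
  have h1 : volume A = volume ((fun x => b + x) '' A) := by
    rw [Set.image_add_left, measure_preimage_add]
  have h2 : volume B = volume ((fun x => a + x) '' B) := by
    rw [Set.image_add_left, measure_preimage_add]
  have hm2 : MeasurableSet ((fun x => a + x) '' B) :=
    (hB.image (by fun_prop)).measurableSet
  have hd : AEDisjoint volume ((fun x => b + x) '' A) ((fun x => a + x) '' B) := by
    refine measure_mono_null (t := {a + b}) ?_ (by simp)
    rintro _ ⟨⟨x, hx, rfl⟩, ⟨y, hy, hxy⟩⟩
    have := ha hx
    have := hb hy
    simp only [Set.mem_singleton_iff] at *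
    linarith
  rw [h1, h2, ← measure_union₀ hm2.nullMeasurableSet hd]
  apply measure_mono
  rintro _ (⟨x, hx, rfl⟩ | ⟨x, hx, rfl⟩)
  · exact ⟨x, hx, b, hbB, add_comm _ _⟩
  · exact ⟨a, haA, x, hx, rfl⟩

lemma vol_add_ge {A B : Set ℝ} (hA : MeasurableSet A) (hB : MeasurableSet B)
    (hA0 : A.Nonempty) (hB0 : B.Nonempty) : volume A + volume B ≤ volume (A + B) := by
  obtain ⟨a, ha⟩ := hA0
  obtain ⟨b, hb⟩ := hB0
  refine le_of_forall_lt fun c hc => ?_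
  have key : ∃ K ⊆ A, IsCompact K ∧ ∃ K' ⊆ B, IsCompact K' ∧ c < volume K + volume K' := by
    rw [hA.measure_eq_iSup_isCompact, hB.measure_eq_iSup_isCompact] at hc
    by_contra hcon
    push Not at hcon
    refine absurd hc (not_lt.2 ?_)
    simp only [iSup_and']
    refine ENNReal.biSup_add_biSup_le' ⟨∅, by simp⟩ ⟨∅, by simp⟩ ?_
    rintro K ⟨hK, hKc⟩ K' ⟨hK', hKc'⟩
    exact hcon K hK hKc K' hK' hKc'
  obtain ⟨K, hK, hKc, K', hK', hKc', h⟩ := key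
  refine h.trans_le ?_
  calc volume K + volume K' ≤ volume (insert a K) + volume (insert b K') := by
        gcongr <;> exact Set.subset_insert _ _
    _ ≤ volume (insert a K + insert b K') :=
        vol_add_ge_compact (hKc.insert a) (hKc'.insert b) ⟨a, by simp⟩ ⟨b, by simp⟩
    _ ≤ volume (A + B) := by
        gcongr
        · exact Set.insert_subset ha hK
        · exact Set.insert_subset hb hK'

lemma vol_comb_ge {A B : Set ℝ} (hA : MeasurableSet A) (hB : MeasurableSet B)
    (hA0 : A.Nonempty) (hB0 : B.Nonempty) {s t : ℝ} (hs : 0 < s) (ht : 0 < t) :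
    ENNReal.ofReal s * volume A + ENNReal.ofReal t * volume B ≤ volume (s • A + t • B) := by
  have h1 : ENNReal.ofReal s * volume A = volume (s • A) := by
    rw [Measure.addHaar_smul]; simp [abs_of_pos hs]
  have h2 : ENNReal.ofReal t * volume B = volume (t • B) := by
    rw [Measure.addHaar_smul]; simp [abs_of_pos ht]
  rw [h1, h2]
  exact vol_add_ge (hA.const_smul₀ s) (hB.const_smul₀ t) hA0.smul_set hB0.smul_set

lemma pl_normalized {s t : ℝ} (hs : 0 < s) (ht : 0 < t) (hst : s + t = 1) {f g h : ℝ → ℝ}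
    (hf : Measurable f) (hg : Measurable g) (hh : Measurable h)
    (hf0 : ∀ x, 0 ≤ f x) (hg0 : ∀ x, 0 ≤ g x) (hh0 : ∀ x, 0 ≤ h x)
    (hf1 : ∀ x, f x ≤ 1) (hg1 : ∀ x, g x ≤ 1)
    (hfs : ∀ c < 1, ∃ x, c < f x) (hgs : ∀ c < 1, ∃ x, c < g x)
    (H : ∀ x y, f x ^ s * g y ^ t ≤ h (s * x + t * y)) :
    ENNReal.ofReal s * (∫⁻ x, ENNReal.ofReal (f x)) +
      ENNReal.ofReal t * (∫⁻ x, ENNReal.ofReal (g x))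
      ≤ ∫⁻ x, ENNReal.ofReal (h x) := by
  rw [lintegral_eq_lintegral_meas_lt volume (Filter.Eventually.of_forall hf0) hf.aemeasurable,
    lintegral_eq_lintegral_meas_lt volume (Filter.Eventually.of_forall hg0) hg.aemeasurable,
    lintegral_eq_lintegral_meas_lt volume (Filter.Eventually.of_forall hh0) hh.aemeasurable]
  have hmeas : ∀ u : ℝ → ℝ, Measurable fun c => volume {a | c < u a} := by
    intro u
    apply Antitone.measurable
    intro c d hcd
    exact measure_mono fun x hx => lt_of_le_of_lt hcd hx
  rw [← lintegral_const_mul _ (hmeas f), ← lintegral_const_mul _ (hmeas g),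
    ← lintegral_add_left ((hmeas f).const_mul _)]
  refine setLIntegral_mono (hmeas h) fun c hc => ?_
  rcases lt_or_ge c 1 with hc1 | hc1
  · refine (vol_comb_ge (measurableSet_lt measurable_const hf) (measurableSet_lt measurable_const hg)
      (hfs c hc1) (hgs c hc1) hs ht).trans (measure_mono ?_)
    rintro _ ⟨_, ⟨x, hx, rfl⟩, _, ⟨y, hy, rfl⟩, rfl⟩
    simp only [Set.mem_ofPred_eq, smul_eq_mul] at *
    refine lt_of_lt_of_le ?_ (H x y)
    have hc0 : 0 < c := hc
    calc c = c ^ s * c ^ t := by rw [← Real.rpow_add hc0, hst, Real.rpow_one]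
      _ < f x ^ s * g y ^ t := by
        have := Real.rpow_lt_rpow hc0.le hx hs
        have := Real.rpow_lt_rpow hc0.le hy ht
        gcongr
  · have e1 : {a | c < f a} = ∅ := by ext x; simpa using (hf1 x).trans hc1
    have e2 : {a | c < g a} = ∅ := by ext x; simpa using (hg1 x).trans hc1
    simp [e1, e2]

lemma ennreal_amgm {s t : ℝ} (hs : 0 < s) (ht : 0 < t) (hst : s + t = 1) (a b : ℝ≥0∞) :
    a ^ s * b ^ t ≤ ENNReal.ofReal s * a + ENNReal.ofReal t * b := by
  by_cases ha : a = ∞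
  · simp [ha, hs, ENNReal.mul_top]
  by_cases hb : b = ∞
  · simp [hb, ht, ENNReal.mul_top]
  lift a to ℝ≥0 using ha
  lift b to ℝ≥0 using hb
  have := Real.geom_mean_le_arith_mean2_weighted hs.le ht.le a.2 b.2 hst
  rw [← ENNReal.coe_rpow_of_nonneg _ hs.le, ← ENNReal.coe_rpow_of_nonneg _ ht.le]
  rw [ENNReal.ofReal, ENNReal.ofReal]
  norm_cast
  rw [← NNReal.coe_le_coe]
  push_cast
  rw [Real.coe_toNNReal _ hs.le, Real.coe_toNNReal _ ht.le]
  exact this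

/-- one-dimensional case, bounded functions -/
lemma pl_real_bdd {s t : ℝ} (hs : 0 < s) (ht : 0 < t) (hst : s + t = 1) {f g h : ℝ → ℝ≥0∞}
    (hf : Measurable f) (hg : Measurable g) (hh : Measurable h) (N : ℝ≥0)
    (hfN : ∀ x, f x ≤ N) (hgN : ∀ x, g x ≤ N) (hhN : ∀ x, h x ≤ N)
    (H : ∀ x y, f x ^ s * g y ^ t ≤ h (s * x + t * y)) :
    (∫⁻ x, f x) ^ s * (∫⁻ x, g x) ^ t ≤ ∫⁻ x, h x := by
  set a := ⨆ x, f x with ha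
  set b := ⨆ x, g x with hb
  have haN : a ≠ ∞ := ((iSup_le hfN).trans_lt ENNReal.coe_lt_top).ne
  have hbN : b ≠ ∞ := ((iSup_le hgN).trans_lt ENNReal.coe_lt_top).ne
  by_cases ha0 : a = 0
  · have : ∀ x, f x = 0 := fun x => le_antisymm (ha0 ▸ le_iSup f x) bot_le
    simp [this, hs]
  by_cases hb0 : b = 0
  · have : ∀ x, g x = 0 := fun x => le_antisymm (hb0 ▸ le_iSup g x) bot_le
    simp [this, ht]
  set c := a ^ s * b ^ t with hc
  have hcN : c ≠ ∞ := ENNReal.mul_ne_top (ENNReal.rpow_ne_top_of_nonneg hs.le haN)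
    (ENNReal.rpow_ne_top_of_nonneg ht.le hbN)
  have hc0 : c ≠ 0 := mul_ne_zero (by simp [ENNReal.rpow_eq_zero_iff, ha0, haN])
    (by simp [ENNReal.rpow_eq_zero_iff, hb0, hbN])
  have hf1 : ∀ x, f x / a ≤ 1 := fun x => ENNReal.div_le_of_le_mul (by simpa using le_iSup f x)
  have hg1 : ∀ x, g x / b ≤ 1 := fun x => ENNReal.div_le_of_le_mul (by simpa using le_iSup g x)
  have hfT : ∀ x, f x / a ≠ ∞ := fun x => ((hf1 x).trans_lt ENNReal.one_lt_top).ne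
  have hgT : ∀ x, g x / b ≠ ∞ := fun x => ((hg1 x).trans_lt ENNReal.one_lt_top).ne
  have hhT : ∀ x, h x / c ≠ ∞ := fun x =>
    ENNReal.div_ne_top ((hhN x).trans_lt ENNReal.coe_lt_top).ne hc0
  have sup_aux : ∀ (u : ℝ → ℝ≥0∞) (a : ℝ≥0∞), a = ⨆ x, u x → a ≠ 0 → a ≠ ∞ →
      (∀ x, u x / a ≠ ∞) → ∀ d < (1:ℝ), ∃ x, d < (u x / a).toReal := by
    intro u a ha ha0 haN hT d hd
    by_contra hcon
    push Not at hcon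
    have h1 : a ≤ ENNReal.ofReal d * a := by
      conv_lhs => rw [ha]
      refine iSup_le fun x => ?_
      have := (ENNReal.le_ofReal_iff_toReal_le (hT x) (ENNReal.toReal_nonneg.trans (hcon x))).2 (hcon x)
      rwa [ENNReal.div_le_iff ha0 haN] at this
    have h2 : ENNReal.ofReal d * a < 1 * a := by
      rw [ENNReal.mul_lt_mul_iff_left ha0 haN]
      simpa using hd
    rw [one_mul] at h2
    exact absurd h1 (not_le.2 h2)
  have key := pl_normalized hs ht hst (f := fun x => (f x / a).toReal) (g := fun x => (g x / b).toReal)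
    (h := fun x => (h x / c).toReal) (by fun_prop) (by fun_prop) (by fun_prop)
    (fun _ => ENNReal.toReal_nonneg) (fun _ => ENNReal.toReal_nonneg)
    (fun _ => ENNReal.toReal_nonneg)
    (fun x => by simpa using ENNReal.toReal_mono ENNReal.one_ne_top (hf1 x))
    (fun x => by simpa using ENNReal.toReal_mono ENNReal.one_ne_top (hg1 x))
    (sup_aux f a ha ha0 haN hfT) (sup_aux g b hb hb0 hbN hgT)
    (by
      intro x y
      rw [ENNReal.toReal_rpow, ENNReal.toReal_rpow, ← ENNReal.toReal_mul]
      refine ENNReal.toReal_mono (hhT _) ?_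
      rw [ENNReal.div_rpow_of_nonneg _ _ hs.le, ENNReal.div_rpow_of_nonneg _ _ ht.le, hc,
        ← ENNReal.mul_div_mul_comm (Or.inl (by simp [ENNReal.rpow_eq_zero_iff, ha0, haN]))
          (Or.inl (ENNReal.rpow_ne_top_of_nonneg hs.le haN))]
      gcongr
      exact H x y)
  simp only [ENNReal.ofReal_toReal (hfT _), ENNReal.ofReal_toReal (hgT _),
    ENNReal.ofReal_toReal (hhT _)] at key
  have key2 := (ennreal_amgm hs ht hst _ _).trans key
  simp only [div_eq_mul_inv] at key2
  rw [lintegral_mul_const _ hf, lintegral_mul_const _ hg, lintegral_mul_const _ hh] at key2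
  simp only [← div_eq_mul_inv] at key2
  rw [ENNReal.div_rpow_of_nonneg _ _ hs.le, ENNReal.div_rpow_of_nonneg _ _ ht.le,
    ← ENNReal.mul_div_mul_comm (Or.inl (by simp [ENNReal.rpow_eq_zero_iff, ha0, haN]))
          (Or.inl (ENNReal.rpow_ne_top_of_nonneg hs.le haN)), ← hc,
    ENNReal.div_le_iff hc0 hcN, ENNReal.div_mul_cancel hc0 hcN] at key2
  exact key2

/-- The Prekopa-Leindler property of a measure. -/
def PLProp (E : Type*) [AddCommGroup E] [Module ℝ E] [MeasurableSpace E] (μ : Measure E) : Prop :=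
  ∀ s t : ℝ, 0 < s → 0 < t → s + t = 1 → ∀ f g h : E → ℝ≥0∞,
    Measurable f → Measurable g → Measurable h →
    (∀ x y, f x ^ s * g y ^ t ≤ h (s • x + t • y)) →
    (∫⁻ x, f x ∂μ) ^ s * (∫⁻ x, g x ∂μ) ^ t ≤ ∫⁻ x, h x ∂μ

lemma lintegral_eq_iSup_min {E : Type*} [MeasurableSpace E] (μ : Measure E) {f : E → ℝ≥0∞}
    (hf : Measurable f) : ∫⁻ x, f x ∂μ = ⨆ N : ℕ, ∫⁻ x, min (f x) N ∂μ := by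
  rw [← lintegral_iSup (fun N => hf.min measurable_const)
    (fun N M hNM x => by simp only; gcongr)]
  congr 1
  ext x
  rw [← inf_iSup_eq, ENNReal.iSup_natCast, inf_top_eq]

lemma plProp_real : PLProp ℝ volume := by
  intro s t hs ht hst f g h hf hg hh H
  by_cases hg0 : ∫⁻ x, g x = 0
  · simp [hg0, ht]
  by_cases hf0 : ∫⁻ x, f x = 0
  · simp [hf0, hs]
  have tf : ∀ u : ℝ → ℝ≥0∞, Measurable u → Filter.Tendsto (fun N : ℕ => ∫⁻ x, min (u x) N)
      Filter.atTop (nhds (∫⁻ x, u x)) := by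
    intro u hu
    rw [lintegral_eq_iSup_min _ hu]
    exact tendsto_atTop_iSup fun N M hNM => lintegral_mono fun x => by gcongr
  have T : Filter.Tendsto (fun N : ℕ => (∫⁻ x, min (f x) N) ^ s * (∫⁻ x, min (g x) N) ^ t)
      Filter.atTop (nhds ((∫⁻ x, f x) ^ s * (∫⁻ x, g x) ^ t)) := by
    refine ENNReal.Tendsto.mul ((ENNReal.continuous_rpow_const.tendsto _).comp (tf f hf)) ?_
      ((ENNReal.continuous_rpow_const.tendsto _).comp (tf g hg)) ?_
    · left; simp [ENNReal.rpow_eq_zero_iff, hf0, not_lt.2 hs.le]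
    · left; simp [ENNReal.rpow_eq_zero_iff, hg0, not_lt.2 ht.le]
  refine le_of_tendsto' T fun N => ?_
  calc _ ≤ ∫⁻ x, min (h x) N := by
        refine pl_real_bdd hs ht hst (hf.min measurable_const) (hg.min measurable_const)
          (hh.min measurable_const) N (fun x => by simp) (fun x => by simp) (fun x => by simp) ?_
        intro x y
        refine le_min ((mul_le_mul' ?_ ?_).trans (H x y)) ?_
        · gcongr; exact min_le_left _ _
        · gcongr; exact min_le_left _ _
        · calc _ ≤ (N:ℝ≥0∞) ^ s * (N:ℝ≥0∞) ^ t := by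
                gcongr <;> exact min_le_right _ _
            _ = N := by
                rw [← ENNReal.rpow_add_of_nonneg _ _ hs.le ht.le, hst, ENNReal.rpow_one]
    _ ≤ ∫⁻ x, h x := lintegral_mono fun x => min_le_left _ _

lemma PLProp.prod {E : Type*} [AddCommGroup E] [Module ℝ E] [MeasurableSpace E] {μ : Measure E}
    [SFinite μ] (h1 : PLProp E μ) : PLProp (ℝ × E) ((volume : Measure ℝ).prod μ) := by
  intro s t hs ht hst f g h hf hg hh H
  rw [lintegral_prod _ hf.aemeasurable, lintegral_prod _ hg.aemeasurable,
    lintegral_prod _ hh.aemeasurable]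
  refine plProp_real s t hs ht hst _ _ _ hf.lintegral_prod_right' hg.lintegral_prod_right'
    hh.lintegral_prod_right' fun x y => ?_
  refine h1 s t hs ht hst _ _ _ (by fun_prop) (by fun_prop) (by fun_prop) fun x' y' => ?_
  exact H (x, x') (y, y')

lemma PLProp.map {E F : Type*} [AddCommGroup E] [Module ℝ E] [MeasurableSpace E] {μ : Measure E}
    [AddCommGroup F] [Module ℝ F] [MeasurableSpace F] {μ' : Measure F} (h1 : PLProp E μ)
    (e : E → F) (he : MeasurePreserving e μ μ') (hadd : ∀ x y, e (x + y) = e x + e y)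
    (hsmul : ∀ (c : ℝ) x, e (c • x) = c • e x) : PLProp F μ' := by
  intro s t hs ht hst f g h hf hg hh H
  rw [← he.lintegral_comp hf, ← he.lintegral_comp hg, ← he.lintegral_comp hh]
  refine h1 s t hs ht hst _ _ _ (hf.comp he.measurable) (hg.comp he.measurable)
    (hh.comp he.measurable) fun x y => ?_
  rw [hadd, hsmul, hsmul]
  exact H _ _

lemma plProp_pi (m : ℕ) : PLProp (Fin m → ℝ) volume := by
  induction m with
  | zero =>
    intro s t hs ht hst f g h hf hg hh H
    have : ∀ u : (Fin 0 → ℝ) → ℝ≥0∞, ∫⁻ x, u x = u 0 := by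
      intro u
      rw [lintegral_unique]
      have h1 : ∀ d, u d = u 0 := fun d => by rw [Subsingleton.elim d 0]
      rw [h1]
      simp [volume_pi, -Matrix.zero_empty]
    rw [this, this, this]
    have := H 0 0
    simpa using this
  | succ m ih =>
    refine (PLProp.prod ih).map _ (volume_preserving_piFinSuccAbove (fun _ : Fin (m+1) => ℝ) 0).symm
      ?_ ?_
    · intro x y
      ext i
      refine Fin.cases ?_ (fun j => ?_) i <;> simp [MeasurableEquiv.piFinSuccAbove]
    · intro c x
      ext i
      refine Fin.cases ?_ (fun j => ?_) i <;> simp [MeasurableEquiv.piFinSuccAbove]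

lemma PLProp.smul {E : Type*} [AddCommGroup E] [Module ℝ E] [MeasurableSpace E] {μ : Measure E}
    (h1 : PLProp E μ) (c : ℝ≥0∞) : PLProp E (c • μ) := by
  intro s t hs ht hst f g h hf hg hh H
  have := h1 s t hs ht hst f g h hf hg hh H
  simp only [lintegral_smul_measure, smul_eq_mul]
  rw [ENNReal.mul_rpow_of_nonneg _ _ hs.le, ENNReal.mul_rpow_of_nonneg _ _ ht.le]
  calc _ = (c ^ s * c ^ t) * ((∫⁻ x, f x ∂μ) ^ s * (∫⁻ x, g x ∂μ) ^ t) := by ring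
    _ = c * _ := by rw [← ENNReal.rpow_add_of_nonneg _ _ hs.le ht.le, hst, ENNReal.rpow_one]
    _ ≤ _ := by gcongr

lemma plProp_euclidean (m : ℕ) (μ : Measure (EuclideanSpace ℝ (Fin m))) [μ.IsAddHaarMeasure] :
    PLProp (EuclideanSpace ℝ (Fin m)) μ := by
  rw [Measure.isAddLeftInvariant_eq_smul μ volume]
  have : PLProp (EuclideanSpace ℝ (Fin m)) volume :=
    (plProp_pi m).map _ (PiLp.volume_preserving_toLp (Fin m))
      (fun x y => rfl) (fun c x => rfl)
  exact this.smul _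

/-- multiplicative Brunn-Minkowski -/
lemma brunn_minkowski_mul {m : ℕ} (μ : Measure (EuclideanSpace ℝ (Fin m))) [μ.IsAddHaarMeasure]
    {A B : Set (EuclideanSpace ℝ (Fin m))} (hA : IsOpen A) (hB : MeasurableSet B)
    {s t : ℝ} (hs : 0 < s) (ht : 0 < t) (hst : s + t = 1) :
    μ A ^ s * μ B ^ t ≤ μ (s • A + t • B) := by
  have hm : MeasurableSet (s • A + t • B) := ((hA.smul₀ hs.ne').add_right).measurableSet
  have := plProp_euclidean m μ s t hs ht hst (A.indicator 1) (B.indicator 1)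
    ((s • A + t • B).indicator 1) (measurable_one.indicator hA.measurableSet)
    (measurable_one.indicator hB) (measurable_one.indicator hm) ?_
  · simpa [lintegral_indicator_one, hA.measurableSet, hB, hm] using this
  · intro x y
    by_cases hx : x ∈ A
    · by_cases hy : y ∈ B
      · have : s • x + t • y ∈ s • A + t • B :=
          Set.add_mem_add (Set.smul_mem_smul_set hx) (Set.smul_mem_smul_set hy)
        simp [hx, hy, this]
      · simp [hy, ht]
    · simp [hx, hs]

/-- Brunn-Minkowski for sets with volume ratio `r^m`. -/
lemma brunn_minkowski_ratio {m : ℕ} (μ : Measure (EuclideanSpace ℝ (Fin m))) [μ.IsAddHaarMeasure]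
    {A B : Set (EuclideanSpace ℝ (Fin m))} (hA : IsOpen A) (hB : MeasurableSet B)
    {r : ℝ} (hr : 0 < r) (hAB : μ A = ENNReal.ofReal (r ^ m) * μ B)
    {a b : ℝ} (ha : 0 < a) (hb : 0 < b) :
    ENNReal.ofReal ((a * r + b) ^ m) * μ B ≤ μ (a • A + b • B) := by
  have hA' : IsOpen (r⁻¹ • A) := hA.smul₀ (by positivity)
  have hμ : μ (r⁻¹ • A) = μ B := by
    rw [Measure.addHaar_smul, hAB, finrank_euclideanSpace_fin, ← mul_assoc,
      ← ENNReal.ofReal_mul (abs_nonneg _), abs_of_pos (by positivity)]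
    rw [inv_pow, inv_mul_cancel₀ (by positivity)]
    simp
  have hc : 0 < a * r + b := by positivity
  have h1 := brunn_minkowski_mul μ hA' hB (s := a * r / (a * r + b)) (t := b / (a * r + b))
    (by positivity) (by positivity) (by field_simp)
  rw [hμ, ← ENNReal.rpow_add_of_nonneg _ _ (by positivity) (by positivity), ← add_div,
    div_self hc.ne', ENNReal.rpow_one] at h1
  have h2 : a • A + b • B = (a * r + b) • ((a * r / (a * r + b)) • r⁻¹ • A +
      (b / (a * r + b)) • B) := by
    rw [smul_add]
    simp only [smul_smul]
    congr 2
    · field_simp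
    · field_simp
  rw [h2, Measure.addHaar_smul, finrank_euclideanSpace_fin, abs_of_pos (by positivity)]
  gcongr



instance haar_hausdorff_euclidean (m : ℕ) :
    (μH[(m : ℝ)] : Measure (EuclideanSpace ℝ (Fin m))).IsAddHaarMeasure := by
  have := isAddHaarMeasure_hausdorffMeasure (E := EuclideanSpace ℝ (Fin m))
  rwa [finrank_euclideanSpace_fin] at this

/-- the (rescaled) normal vector of the oblique graph with differential `L` -/
noncomputable def nrm {m n : ℕ} (ι : EuclideanSpace ℝ (Fin m) →ₗᵢ[ℝ] EuclideanSpace ℝ (Fin n))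
    (ν : EuclideanSpace ℝ (Fin n)) (e0 : EuclideanSpace ℝ (Fin m)) (h : ℝ)
    (L : EuclideanSpace ℝ (Fin m) →L[ℝ] ℝ) : EuclideanSpace ℝ (Fin n) :=
  (1 + L e0) • ν - h • ι ((InnerProductSpace.toDual ℝ _).symm L)

section area
variable {m n : ℕ} (ι : EuclideanSpace ℝ (Fin m) →ₗᵢ[ℝ] EuclideanSpace ℝ (Fin n))
    (ν : EuclideanSpace ℝ (Fin n)) (e0 : EuclideanSpace ℝ (Fin m)) (h : ℝ)

lemma nrm_sq (hν : ‖ν‖ = 1) (hι : ∀ x, ⟪ι x, ν⟫ = 0) (L : EuclideanSpace ℝ (Fin m) →L[ℝ] ℝ) :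
    ‖nrm ι ν e0 h L‖ ^ 2 = (1 + L e0) ^ 2 + h ^ 2 * ‖L‖ ^ 2 := by
  rw [nrm, norm_sub_sq_real, norm_smul, norm_smul, hν, ι.norm_map, LinearIsometryEquiv.norm_map,
    inner_smul_left, inner_smul_right, real_inner_comm, hι]
  simp [mul_pow]

lemma hausdorff_linear_graph (hν : ‖ν‖ = 1) (hι : ∀ x, ⟪ι x, ν⟫ = 0) (hh : 0 < h)
    (L : EuclideanSpace ℝ (Fin m) →L[ℝ] ℝ) (A : Set (EuclideanSpace ℝ (Fin m))) :
    μH[(m : ℝ)] ((fun x => ι x + L x • (ι e0 + h • ν)) '' A) =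
      ENNReal.ofReal ‖nrm ι ν e0 h L‖ * μH[(m : ℝ)] A := by
  set s := ‖nrm ι ν e0 h L‖ with hs
  set a := 1 + L e0 with ha
  set l := (InnerProductSpace.toDual ℝ _).symm L with hl
  have hs2 : s ^ 2 = a ^ 2 + h ^ 2 * ‖L‖ ^ 2 := nrm_sq ι ν e0 h hν hι L
  have hs0 : 0 ≤ s := norm_nonneg _
  have hln : ‖l‖ = ‖L‖ := LinearIsometryEquiv.norm_map _ _
  have hlx : ∀ x, ⟪l, x⟫ = L x := fun x => InnerProductSpace.toDual_symm_apply
  have hll : L l = ‖L‖ ^ 2 := by rw [← hlx, real_inner_self_eq_norm_sq, hln]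
  have hsa : 0 < s + a := by
    by_cases hL : L = 0
    · have : a = 1 := by simp [ha, hL]
      linarith
    by_cases ha0 : 0 < a
    · linarith
    by_contra hcon
    have : 0 < ‖L‖ := norm_pos_iff.2 hL
    have : 0 < h ^ 2 * ‖L‖ ^ 2 := by positivity
    nlinarith
  have hs1 : 0 < s := by
    by_contra hcon
    have : s = 0 := le_antisymm (not_lt.1 hcon) hs0
    rw [this] at hs2
    have : a = 0 := by nlinarith [sq_nonneg a, sq_nonneg h, sq_nonneg ‖L‖, mul_nonneg (sq_nonneg h) (sq_nonneg ‖L‖)]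
    linarith
  set T := LinearMap.transvection (L : EuclideanSpace ℝ (Fin m) →ₗ[ℝ] ℝ)
    (e0 + (h ^ 2 / (s + a)) • l) with hT
  have hdet : LinearMap.det T = s := by
    rw [hT, LinearMap.transvection.det]
    simp only [ContinuousLinearMap.coe_coe, map_add, map_smul, hll, smul_eq_mul]
    rw [← add_assoc, ← ha]
    field_simp
    nlinarith
  set d := (s + a) • ν - h • ι l with hd
  have hdn : ‖d‖ ^ 2 = 2 * s * (s + a) := by
    rw [hd, norm_sub_sq_real, norm_smul, norm_smul, hν, ι.norm_map, inner_smul_left,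
      inner_smul_right, real_inner_comm, hι, hln]
    simp only [mul_pow, Real.norm_eq_abs, sq_abs]
    simp
    nlinarith
  have hνν : ⟪ν, ν⟫ = 1 := by rw [real_inner_self_eq_norm_sq, hν]; norm_num
  have hι' : ∀ x, ⟪ν, ι x⟫ = 0 := fun x => by rw [real_inner_comm]; exact hι x
  have hR : ∀ x, (ℝ ∙ d).reflection (ι x + L x • (ι e0 + h • ν)) = -ι (T x) := by
    intro x
    rw [Submodule.reflection_singleton_apply]
    have h1 : ⟪d, ι x + L x • (ι e0 + h • ν)⟫ = s * h * L x := by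
      simp only [hd, inner_sub_left, inner_add_right, inner_smul_left, inner_smul_right, hι, hι',
        hνν, ι.inner_map_map, hlx]
      simp [ha]
      ring
    have h2 : T x = x + L x • (e0 + (h ^ 2 / (s + a)) • l) := rfl
    rw [h1, h2]
    have h3 : s * h * L x / (‖d‖:ℝ) ^ 2 = h * L x / (2 * (s + a)) := by
      rw [hdn]; field_simp
    simp only [RCLike.ofReal_real_eq_id, id_eq]
    rw [h3, hd]
    simp only [map_add, map_smul]
    match_scalars <;> field_simp <;> ring
  have hiso : Isometry fun x => -(ι x) := by
    have := (LinearIsometryEquiv.neg ℝ (E := EuclideanSpace ℝ (Fin n))).isometry.comp ι.isometry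
    exact this
  rw [← (ℝ ∙ d).reflection.isometry.hausdorffMeasure_image (Or.inl (Nat.cast_nonneg m)),
    Set.image_image]
  simp only [hR]
  rw [← Set.image_image (fun x => -(ι x)) T, hiso.hausdorffMeasure_image (Or.inl (Nat.cast_nonneg m)),
    Measure.addHaar_image_linearMap, hdet, abs_of_pos hs1]

lemma nrm_lip (hν : ‖ν‖ = 1) (hh : 0 < h) (L L' : EuclideanSpace ℝ (Fin m) →L[ℝ] ℝ) :
    ‖nrm ι ν e0 h L‖ ≤ ‖nrm ι ν e0 h L'‖ + (‖e0‖ + h) * ‖L - L'‖ := by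
  have : nrm ι ν e0 h L - nrm ι ν e0 h L' = ((L - L') e0) • ν -
      h • ι ((InnerProductSpace.toDual ℝ _).symm (L - L')) := by
    simp only [nrm, map_sub, sub_apply]
    module
  have h2 : ‖nrm ι ν e0 h L - nrm ι ν e0 h L'‖ ≤ (‖e0‖ + h) * ‖L - L'‖ := by
    rw [this]
    refine (norm_sub_le _ _).trans ?_
    rw [norm_smul, norm_smul, hν, ι.norm_map, LinearIsometryEquiv.norm_map, Real.norm_eq_abs h,
      abs_of_pos hh]
    have := (L - L').le_opNorm e0
    nlinarith
  have := norm_le_insert' (nrm ι ν e0 h L) (nrm ι ν e0 h L')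
  linarith

/-- oblique graph map -/
noncomputable def gmap (f : EuclideanSpace ℝ (Fin m) → ℝ) (x : EuclideanSpace ℝ (Fin m)) :
    EuclideanSpace ℝ (Fin n) := ι x + f x • (ι e0 + h • ν)

/-- left inverse of the oblique graph map -/
noncomputable def gproj : EuclideanSpace ℝ (Fin n) →L[ℝ] EuclideanSpace ℝ (Fin m) :=
  ContinuousLinearMap.adjoint ι.toContinuousLinearMap -
    ((h⁻¹ • innerSL ℝ ν).smulRight e0)

lemma gproj_gmap (hν : ‖ν‖ = 1) (hι : ∀ x, ⟪ι x, ν⟫ = 0) (hh : 0 < h)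
    (f : EuclideanSpace ℝ (Fin m) → ℝ) (x : EuclideanSpace ℝ (Fin m)) :
    gproj ι ν e0 h (gmap ι ν e0 h f x) = x := by
  have hνν : ⟪ν, ν⟫ = 1 := by rw [real_inner_self_eq_norm_sq, hν]; norm_num
  have hι' : ∀ x, ⟪ν, ι x⟫ = 0 := fun x => by rw [real_inner_comm]; exact hι x
  have h1 : ∀ y, ContinuousLinearMap.adjoint ι.toContinuousLinearMap (ι y) = y := by
    intro y
    refine ext_inner_left ℝ fun z => ?_
    rw [ContinuousLinearMap.adjoint_inner_right]
    exact ι.inner_map_map z y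
  have h2 : ContinuousLinearMap.adjoint ι.toContinuousLinearMap ν = 0 := by
    refine ext_inner_left ℝ fun z => ?_
    rw [ContinuousLinearMap.adjoint_inner_right]
    simpa using hι z
  simp only [gproj, gmap, sub_apply, map_add, map_smul, h1, h2,
    ContinuousLinearMap.smulRight_apply, smul_apply, innerSL_apply_apply, hι', hνν]
  simp
  rw [smul_inv_smul₀ hh.ne']
  simp

lemma measurable_gmap {f : EuclideanSpace ℝ (Fin m) → ℝ} (hf : Measurable f) :
    Measurable (gmap ι ν e0 h f) := by
  unfold gmap
  exact ι.continuous.measurable.add (hf.smul_const _)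

lemma measurableSet_gmap_image (hν : ‖ν‖ = 1) (hι : ∀ x, ⟪ι x, ν⟫ = 0) (hh : 0 < h)
    {f : EuclideanSpace ℝ (Fin m) → ℝ} (hf : Measurable f) {B : Set (EuclideanSpace ℝ (Fin m))}
    (hB : MeasurableSet B) : MeasurableSet (gmap ι ν e0 h f '' B) := by
  have : gmap ι ν e0 h f '' B = gproj ι ν e0 h ⁻¹' B ∩
      {y | gmap ι ν e0 h f (gproj ι ν e0 h y) = y} := by
    ext y
    constructor
    · rintro ⟨x, hx, rfl⟩
      simp [gproj_gmap ι ν e0 h hν hι hh, hx]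
    · rintro ⟨h1, h2⟩
      exact ⟨_, h1, h2⟩
  rw [this]
  have hm : Measurable (gproj ι ν e0 h) := (gproj ι ν e0 h).continuous.measurable
  exact (hm hB).inter (measurableSet_eq_fun ((measurable_gmap ι ν e0 h hf).comp hm) measurable_id)

lemma piece_bound (hν : ‖ν‖ = 1) (hι : ∀ x, ⟪ι x, ν⟫ = 0) (hh : 0 < h)
    {f : EuclideanSpace ℝ (Fin m) → ℝ} {B : Set (EuclideanSpace ℝ (Fin m))}
    {L : EuclideanSpace ℝ (Fin m) →L[ℝ] ℝ} {δ : ℝ≥0} (hL : ApproximatesLinearOn f L B δ) :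
    ENNReal.ofReal ‖nrm ι ν e0 h L‖ * μH[(m : ℝ)] B ≤
      ((1 + δ * (‖ι e0 + h • ν‖₊ * ‖gproj ι ν e0 h‖₊) : ℝ≥0) : ℝ≥0∞) ^ (m : ℝ) *
        μH[(m : ℝ)] (gmap ι ν e0 h f '' B) := by
  rw [← hausdorff_linear_graph ι ν e0 h hν hι hh L B]
  have h1 : (fun x => ι x + L x • (ι e0 + h • ν)) '' B =
      ((fun x => ι x + L x • (ι e0 + h • ν)) ∘ gproj ι ν e0 h) '' (gmap ι ν e0 h f '' B) := by
    rw [Set.image_image]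
    simp only [Function.comp, gproj_gmap ι ν e0 h hν hι hh]
  rw [h1]
  refine LipschitzOnWith.hausdorffMeasure_image_le ?_ (Nat.cast_nonneg m)
  refine LipschitzOnWith.of_dist_le_mul ?_
  rintro _ ⟨x, hx, rfl⟩ _ ⟨y, hy, rfl⟩
  simp only [Function.comp, gproj_gmap ι ν e0 h hν hι hh]
  rw [dist_eq_norm, dist_eq_norm]
  have h2 : ‖x - y‖ ≤ ‖gproj ι ν e0 h‖ * ‖gmap ι ν e0 h f x - gmap ι ν e0 h f y‖ := by
    have := (gproj ι ν e0 h).le_opNorm (gmap ι ν e0 h f x - gmap ι ν e0 h f y)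
    rwa [map_sub, gproj_gmap ι ν e0 h hν hι hh, gproj_gmap ι ν e0 h hν hι hh] at this
  have h3 : (ι x + L x • (ι e0 + h • ν)) - (ι y + L y • (ι e0 + h • ν)) =
      (gmap ι ν e0 h f x - gmap ι ν e0 h f y) - (f x - f y - L (x - y)) • (ι e0 + h • ν) := by
    simp only [gmap, map_sub]
    module
  rw [h3]
  refine (norm_sub_le _ _).trans ?_
  rw [norm_smul]
  have h4 := hL x hx y hy
  have h5 : ‖f x - f y - L (x - y)‖ * ‖ι e0 + h • ν‖ ≤
      δ * (‖gproj ι ν e0 h‖ * ‖gmap ι ν e0 h f x - gmap ι ν e0 h f y‖) * ‖ι e0 + h • ν‖ := by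
    gcongr
    exact h4.trans (by gcongr)
  push_cast
  linarith

lemma area_approx (hm : 0 < m) (hν : ‖ν‖ = 1) (hι : ∀ x, ⟪ι x, ν⟫ = 0) (hh : 0 < h)
    {f : EuclideanSpace ℝ (Fin m) → ℝ} (hf : Measurable f) {B : Set (EuclideanSpace ℝ (Fin m))}
    (hB : MeasurableSet B) (hd : ∀ x ∈ B, DifferentiableAt ℝ f x) {δ : ℝ≥0} (hδ : δ ≠ 0) :
    ∫⁻ x in B, ENNReal.ofReal ‖nrm ι ν e0 h (fderiv ℝ f x)‖ ∂μH[(m : ℝ)] ≤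
      ((1 + δ * (‖ι e0 + h • ν‖₊ * ‖gproj ι ν e0 h‖₊) : ℝ≥0) : ℝ≥0∞) ^ (m : ℝ) *
        μH[(m : ℝ)] (gmap ι ν e0 h f '' B) +
      ENNReal.ofReal ((‖e0‖ + h) * δ) * μH[(m : ℝ)] B := by
  obtain ⟨t, A, ht, htm, hBt, hA, -⟩ := exists_partition_approximatesLinearOn_of_hasFDerivWithinAt
    f B (fderiv ℝ f) (fun x hx => (hd x hx).hasFDerivAt.hasFDerivWithinAt) (fun _ => δ) (fun _ => hδ)
  have hBU : B = ⋃ i, B ∩ t i := by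
    rw [← Set.inter_iUnion]; exact (Set.inter_eq_left.2 hBt).symm
  have hdis : Pairwise (Function.onFun Disjoint fun i => B ∩ t i) := fun i j hij =>
    (ht hij).mono Set.inter_subset_right Set.inter_subset_right
  have hinj : Function.Injective (gmap ι ν e0 h f) :=
    Function.LeftInverse.injective (gproj_gmap ι ν e0 h hν hι hh f)
  have hpiece : ∀ i, ∫⁻ x in B ∩ t i, ENNReal.ofReal ‖nrm ι ν e0 h (fderiv ℝ f x)‖ ∂μH[(m : ℝ)] ≤
      ((1 + δ * (‖ι e0 + h • ν‖₊ * ‖gproj ι ν e0 h‖₊) : ℝ≥0) : ℝ≥0∞) ^ (m : ℝ) *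
        μH[(m : ℝ)] (gmap ι ν e0 h f '' (B ∩ t i)) +
      ENNReal.ofReal ((‖e0‖ + h) * δ) * μH[(m : ℝ)] (B ∩ t i) := by
    intro i
    have hms := hB.inter (htm i)
    let u : EuclideanSpace ℝ (Fin m) := EuclideanSpace.single ⟨0, hm⟩ 1
    have hu : ‖u‖ = 1 := by simp [u]
    have hae : ∀ᵐ x ∂(μH[(m : ℝ)] : Measure (EuclideanSpace ℝ (Fin m))).restrict (B ∩ t i),
        ‖fderiv ℝ f x - A i‖ ≤ δ := by
      have h1 : ApproximatesLinearOn (fun x => f x • u) ((A i).smulRight u) (B ∩ t i) δ := by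
        intro x hx y hy
        have := hA i x hx y hy
        have e : f x • u - f y • u - ((A i).smulRight u) (x - y) = (f x - f y - A i (x - y)) • u := by
          simp only [ContinuousLinearMap.smulRight_apply]
          module
        rw [e, norm_smul, hu, mul_one]
        exact this
      have h2 := h1.norm_fderiv_sub_le μH[(m : ℝ)] hms (fun x => (fderiv ℝ f x).smulRight u)
        (fun x hx => ((hd x hx.1).hasFDerivAt.smul_const u).hasFDerivWithinAt)
      filter_upwards [h2] with x hx
      have e : (fderiv ℝ f x).smulRight u - (A i).smulRight u = (fderiv ℝ f x - A i).smulRight u := by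
        ext z : 1
        simp [sub_smul]
      rw [e, ← NNReal.coe_le_coe, coe_nnnorm, ContinuousLinearMap.norm_smulRight_apply, hu,
        mul_one] at hx
      exact hx
    calc _ ≤ ∫⁻ x in B ∩ t i, (ENNReal.ofReal ‖nrm ι ν e0 h (A i)‖ +
          ENNReal.ofReal ((‖e0‖ + h) * δ)) ∂μH[(m : ℝ)] := by
          refine lintegral_mono_ae ?_
          filter_upwards [hae] with x hx
          rw [← ENNReal.ofReal_add (norm_nonneg _) (by positivity)]
          refine ENNReal.ofReal_le_ofReal ?_
          refine (nrm_lip ι ν e0 h hν hh _ (A i)).trans ?_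
          gcongr
      _ = ENNReal.ofReal ‖nrm ι ν e0 h (A i)‖ * μH[(m : ℝ)] (B ∩ t i) +
          ENNReal.ofReal ((‖e0‖ + h) * δ) * μH[(m : ℝ)] (B ∩ t i) := by
          rw [setLIntegral_const, add_mul]
      _ ≤ _ := add_le_add (piece_bound ι ν e0 h hν hι hh (hA i)) le_rfl
  conv_lhs => rw [hBU]
  refine (lintegral_iUnion_le _ _).trans ((ENNReal.tsum_le_tsum hpiece).trans ?_)
  rw [ENNReal.tsum_add, ENNReal.tsum_mul_left, ENNReal.tsum_mul_left,
    ← measure_iUnion hdis (fun i => hB.inter (htm i)), ← hBU, ← measure_iUnion, ← Set.image_iUnion,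
    ← hBU]
  · intro i j hij
    exact (Set.disjoint_image_iff hinj).2 (hdis hij)
  · exact fun i => measurableSet_gmap_image ι ν e0 h hν hι hh hf (hB.inter (htm i))

lemma area_lower (hm : 0 < m) (hν : ‖ν‖ = 1) (hι : ∀ x, ⟪ι x, ν⟫ = 0) (hh : 0 < h)
    {f : EuclideanSpace ℝ (Fin m) → ℝ} (hf : Measurable f) {B : Set (EuclideanSpace ℝ (Fin m))}
    (hB : MeasurableSet B) (hd : ∀ x ∈ B, DifferentiableAt ℝ f x)
    (hBfin : μH[(m : ℝ)] B ≠ ∞) :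
    ∫⁻ x in B, ENNReal.ofReal ‖nrm ι ν e0 h (fderiv ℝ f x)‖ ∂μH[(m : ℝ)] ≤
        μH[(m : ℝ)] (gmap ι ν e0 h f '' B) := by
  by_cases htop : μH[(m : ℝ)] (gmap ι ν e0 h f '' B) = ∞
  · rw [htop]; exact le_top
  set C : ℝ≥0 := ‖ι e0 + h • ν‖₊ * ‖gproj ι ν e0 h‖₊ with hC
  have T : Filter.Tendsto (fun δ : ℝ≥0 => ((1 + δ * C : ℝ≥0) : ℝ≥0∞) ^ (m : ℝ) *
        μH[(m : ℝ)] (gmap ι ν e0 h f '' B) +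
      ENNReal.ofReal ((‖e0‖ + h) * δ) * μH[(m : ℝ)] B) (nhdsWithin 0 (Set.Ioi 0))
      (nhds (((1 + (0:ℝ≥0) * C : ℝ≥0) : ℝ≥0∞) ^ (m : ℝ) *
        μH[(m : ℝ)] (gmap ι ν e0 h f '' B) +
      ENNReal.ofReal ((‖e0‖ + h) * (0 : ℝ≥0)) * μH[(m : ℝ)] B)) := by
    refine Filter.Tendsto.mono_left ?_ nhdsWithin_le_nhds
    refine Filter.Tendsto.add ?_ ?_
    · refine ENNReal.Tendsto.mul_const ?_ (Or.inr htop)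
      refine (ENNReal.continuous_rpow_const.tendsto _).comp ?_
      have : Continuous fun δ : ℝ≥0 => ((1 + δ * C : ℝ≥0) : ℝ≥0∞) :=
        ENNReal.continuous_coe.comp (by fun_prop)
      exact this.tendsto 0
    · refine ENNReal.Tendsto.mul_const ?_ (Or.inr hBfin)
      have : Continuous fun δ : ℝ≥0 => ENNReal.ofReal ((‖e0‖ + h) * δ) :=
        ENNReal.continuous_ofReal.comp (by fun_prop)
      exact this.tendsto 0
  have T' := ge_of_tendsto (b := ∫⁻ x in B, ENNReal.ofReal ‖nrm ι ν e0 h (fderiv ℝ f x)‖ ∂μH[(m : ℝ)])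
    T (by
    filter_upwards [self_mem_nhdsWithin] with δ hδ
    exact area_approx ι ν e0 h hm hν hι hh hf hB hd (ne_of_gt hδ))
  simpa using T'

lemma area_lintegral (hm : 0 < m) (hν : ‖ν‖ = 1) (hι : ∀ x, ⟪ι x, ν⟫ = 0) (hh : 0 < h)
    {f : EuclideanSpace ℝ (Fin m) → ℝ} (hf : Measurable f) {B : Set (EuclideanSpace ℝ (Fin m))}
    (hB : MeasurableSet B) (hd : ∀ x ∈ B, DifferentiableAt ℝ f x)
    (hBfin : μH[(m : ℝ)] B ≠ ∞) {k : EuclideanSpace ℝ (Fin n) → ℝ≥0∞} (hk : Measurable k) :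
    ∫⁻ x in B, ENNReal.ofReal ‖nrm ι ν e0 h (fderiv ℝ f x)‖ * k (gmap ι ν e0 h f x) ∂μH[(m : ℝ)] ≤
        ∫⁻ y in gmap ι ν e0 h f '' B, k y ∂μH[(m : ℝ)] := by
  have hF := measurable_gmap ι ν e0 h hf
  have hJ : Measurable fun x => ENNReal.ofReal ‖nrm ι ν e0 h (fderiv ℝ f x)‖ := by
    refine ENNReal.measurable_ofReal.comp (Measurable.norm ?_)
    have h1 : Continuous (nrm ι ν e0 h) := by
      unfold nrm
      have := ι.continuous
      have h2 := ((InnerProductSpace.toDual ℝ (EuclideanSpace ℝ (Fin m))).symm).continuous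
      fun_prop
    exact h1.measurable.comp (measurable_fderiv ℝ f)
  have key : Measure.map (gmap ι ν e0 h f) ((μH[(m : ℝ)].restrict B).withDensity
      fun x => ENNReal.ofReal ‖nrm ι ν e0 h (fderiv ℝ f x)‖) ≤
      μH[(m : ℝ)].restrict (gmap ι ν e0 h f '' B) := by
    refine Measure.le_iff.2 fun S hS => ?_
    rw [Measure.map_apply hF hS, withDensity_apply _ (hF hS), Measure.restrict_restrict (hF hS),
      Measure.restrict_apply hS]
    refine (area_lower ι ν e0 h hm hν hι hh hf ((hF hS).inter hB) (fun x hx => hd x hx.2)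
      (ne_top_of_le_ne_top hBfin (measure_mono Set.inter_subset_right))).trans (measure_mono ?_)
    rintro _ ⟨x, ⟨hx1, hx2⟩, rfl⟩
    exact ⟨hx1, x, hx2, rfl⟩
  calc _ = ∫⁻ y, k y ∂(Measure.map (gmap ι ν e0 h f) ((μH[(m : ℝ)].restrict B).withDensity
      fun x => ENNReal.ofReal ‖nrm ι ν e0 h (fderiv ℝ f x)‖)) := by
        exact ((lintegral_map hk hF).trans
          (lintegral_withDensity_eq_lintegral_mul _ hJ (hk.comp hF))).symm
    _ ≤ _ := lintegral_mono' key le_rfl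

end area

lemma convex_grad_ineq {V : Type*} [NormedAddCommGroup V] [NormedSpace ℝ V] {f : V → ℝ}
    (hf : ConvexOn ℝ univ f) {x : V} {L : V →L[ℝ] ℝ} (hL : HasFDerivAt f L x) (z : V) :
    f x + L z ≤ f (x + z) := by
  have h1 : ConvexOn ℝ univ (fun s : ℝ => f (x + s • z)) := by
    refine ⟨convex_univ, fun a _ b _ s t hs ht hst => ?_⟩
    have := hf.2 (mem_univ (x + a • z)) (mem_univ (x + b • z)) hs ht hst
    refine le_trans (le_of_eq ?_) this
    obtain rfl : t = 1 - s := by linarith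
    change f (x + (s * a + (1 - s) * b) • z) = _
    congr 1
    module
  have h2 : HasDerivAt (fun s : ℝ => f (x + s • z)) (L z) 0 := by
    have h3 : HasDerivAt (fun s : ℝ => x + s • z) z 0 := by
      simpa using ((hasDerivAt_id (0:ℝ)).smul_const z).const_add x
    have h4 : HasFDerivAt f L (x + (0:ℝ) • z) := by simpa using hL
    exact h4.comp_hasDerivAt 0 h3
  have := h1.le_slope_of_hasDerivAt (mem_univ 0) (mem_univ 1) zero_lt_one h2
  rw [slope_def_field] at this
  simp at this
  linarith

lemma gauge_convexOn {V : Type*} [NormedAddCommGroup V] [NormedSpace ℝ V] {K : Set V}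
    (hK : Convex ℝ K) (h0 : K ∈ nhds (0 : V)) : ConvexOn ℝ univ (gauge K) := by
  refine ⟨convex_univ, fun x _ y _ a b ha hb _ => ?_⟩
  refine (gauge_add_le hK (absorbent_nhds_zero h0) _ _).trans (le_of_eq ?_)
  rw [gauge_smul_of_nonneg ha, gauge_smul_of_nonneg hb]

section wulff
variable {m : ℕ} (μ : Measure (EuclideanSpace ℝ (Fin m))) [μ.IsAddHaarMeasure]
  {K W : Set (EuclideanSpace ℝ (Fin m))} {φ : EuclideanSpace ℝ (Fin m) → ℝ}

lemma sublevel_gauge (hK : Convex ℝ K) (h0 : K ∈ nhds (0 : EuclideanSpace ℝ (Fin m)))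
    {t : ℝ} (ht : 0 < t) : {x | gauge K x < t} = t • interior K := by
  ext x
  rw [Set.mem_smul_set_iff_inv_smul_mem₀ ht.ne', ← gauge_lt_one_iff_mem_interior hK h0,
    gauge_smul_of_nonneg (inv_nonneg.2 ht.le), smul_eq_mul, inv_mul_lt_iff₀ ht, mul_one]
  rfl

lemma lintegral_pow_Ioo (k : ℕ) {τ : ℝ} (hτ : 0 ≤ τ) :
    ∫⁻ t in Ioo 0 τ, ENNReal.ofReal ((k + 1) * t ^ k) = ENNReal.ofReal (τ ^ (k + 1)) := by
  rw [← ofReal_integral_eq_lintegral_ofReal]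
  · congr 1
    rw [← integral_Ioc_eq_integral_Ioo, ← intervalIntegral.integral_of_le hτ,
      intervalIntegral.integral_const_mul, integral_pow]
    have : (k + 1 : ℝ) ≠ 0 := by positivity
    field_simp
    simp
  · refine (Continuous.integrableOn_Icc (a := 0) (b := τ) (by fun_prop)).mono_set Ioo_subset_Icc_self
  · filter_upwards [ae_restrict_mem measurableSet_Ioo] with t ht
    have := ht.1.le
    positivity

lemma wulff_step (hK : Convex ℝ K) (h0 : K ∈ nhds (0 : EuclideanSpace ℝ (Fin m)))
    (hKfin : μ (interior K) ≠ ∞)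
    (hm : 0 < m) (hW : IsCompact W) (hφ : Continuous φ) (hWφ : ∀ z ∈ W, ∀ y, ⟪y, z⟫ ≤ φ y)
    {r : ℝ} (hr : 0 < r) (hKW : μ (interior K) = ENNReal.ofReal (r ^ m) * μ W)
    {C : ℝ} (hC : ∀ z ∈ W, gauge K (-z) ≤ C) {ε : ℝ} (hε : 0 < ε) (hτ : 0 ≤ 1 - C * ε)
    (hτ1 : 0 ≤ C) :
    ENNReal.ofReal ((1 - C * ε) ^ m) * (ENNReal.ofReal (r ^ (m - 1)) * μ W) ≤
      ∫⁻ x in interior K, ENNReal.ofReal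
        (φ (-((InnerProductSpace.toDual ℝ _).symm (fderiv ℝ (gauge K) x)))) ∂μ := by
  set p := gauge K with hp
  set A := interior K with hA
  set τ := 1 - C * ε with hτd
  set ψ : EuclideanSpace ℝ (Fin m) → ℝ :=
    fun x => φ (-((InnerProductSpace.toDual ℝ _).symm (fderiv ℝ p x))) with hψ
  obtain ⟨Lp, hLp⟩ := hK.lipschitz_gauge h0
  have hpm : Measurable p := hLp.continuous.measurable
  have hAm : MeasurableSet A := isOpen_interior.measurableSet
  have hψm : Measurable ψ := by
    have h2 := ((InnerProductSpace.toDual ℝ (EuclideanSpace ℝ (Fin m))).symm).continuous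
    exact (hφ.comp (continuous_neg.comp h2)).measurable.comp (measurable_fderiv ℝ p)
  have hcv := gauge_convexOn hK h0
  -- the two regions
  set D : Set (EuclideanSpace ℝ (Fin m) × ℝ) :=
    {q | q.1 ∈ A ∧ q.2 ∈ Ioo 0 τ ∧ p q.1 - ε * ψ q.1 < q.2} with hD
  set D0 : Set (EuclideanSpace ℝ (Fin m) × ℝ) :=
    {q | q.1 ∈ A ∧ q.2 ∈ Ioo 0 τ ∧ p q.1 < q.2} with hD0
  have hDm : MeasurableSet D := by
    refine (measurable_fst hAm).inter ((measurable_snd measurableSet_Ioo).inter ?_)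
    refine measurableSet_lt ?_ measurable_snd
    exact (hpm.comp measurable_fst).sub ((hψm.comp measurable_fst).const_mul ε)
  have hD0m : MeasurableSet D0 := by
    refine (measurable_fst hAm).inter ((measurable_snd measurableSet_Ioo).inter ?_)
    exact measurableSet_lt (hpm.comp measurable_fst) measurable_snd
  have hD0fin : (μ.prod volume) D0 ≠ ∞ := by
    have : D0 ⊆ A ×ˢ Ioo 0 τ := fun q hq => ⟨hq.1, hq.2.1⟩
    refine ne_top_of_le_ne_top ?_ (measure_mono this)
    rw [Measure.prod_prod, Real.volume_Ioo]
    exact ENNReal.mul_ne_top hKfin ENNReal.ofReal_ne_top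
  have hupper : (μ.prod volume) D ≤ (μ.prod volume) D0 +
      ENNReal.ofReal ε * ∫⁻ x in A, ENNReal.ofReal (ψ x) ∂μ := by
    rw [Measure.prod_apply hDm, Measure.prod_apply hD0m, ← lintegral_const_mul _ hψm.ennreal_ofReal,
      ← lintegral_indicator hAm, ← lintegral_add_right _
        ((hψm.ennreal_ofReal.const_mul _).indicator hAm)]
    refine lintegral_mono fun x => ?_
    by_cases hx : x ∈ A
    · have hsub : Prod.mk x ⁻¹' D ⊆ (Prod.mk x ⁻¹' D0) ∪ Ioc (p x - ε * ψ x) (p x) := by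
        intro t ht
        by_cases h' : p x < t
        · exact Or.inl ⟨hx, ht.2.1, h'⟩
        · exact Or.inr ⟨ht.2.2, not_lt.1 h'⟩
      refine (measure_mono hsub).trans ((measure_union_le _ _).trans ?_)
      rw [indicator_of_mem hx, Real.volume_Ioc, ← ENNReal.ofReal_mul hε.le]
      simp
    · have : Prod.mk x ⁻¹' D = ∅ := by
        ext t; simp [hD, hx]
      rw [this]; simp
  have hlower : (μ.prod volume) D0 + ENNReal.ofReal (ε * r ^ (m - 1)) * μ W *
      ENNReal.ofReal (τ ^ m) ≤ (μ.prod volume) D := by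
    rw [Measure.prod_apply_symm hDm, Measure.prod_apply_symm hD0m]
    have e1 : m = (m - 1) + 1 := by omega
    conv_lhs => rw [show τ ^ m = τ ^ (m - 1 + 1) by rw [← e1]]
    rw [← lintegral_pow_Ioo (m - 1) hτ, ← lintegral_const_mul _ (by fun_prop),
      ← lintegral_indicator measurableSet_Ioo, ← lintegral_add_right _
        (Measurable.indicator (by fun_prop) measurableSet_Ioo)]
    refine lintegral_mono fun t => ?_
    by_cases ht : t ∈ Ioo 0 τ
    · rw [indicator_of_mem ht]
      have ht1 : t < 1 := by
        have : 0 ≤ C * ε := by positivity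
        linarith [ht.2]
      have hs0 : (fun x => (x, t)) ⁻¹' D0 ⊆ t • A := by
        intro x hx
        rw [hA, ← sublevel_gauge hK h0 ht.1]
        exact hx.2.2
      have hs1 : (t • A + ε • (-W) : Set _) ≤ᵐ[μ] ((fun x => (x, t)) ⁻¹' D) := by
        filter_upwards [hLp.ae_differentiableAt (μ := μ)] with x hxd hx
        obtain ⟨y, hy, w, hw, rfl⟩ := hx
        obtain ⟨z, hz, rfl⟩ := hw
        rw [hA, ← sublevel_gauge hK h0 ht.1] at hy
        have hz' : -z ∈ W := hz
        have hy' : p y < t := hy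
        have h1 : p (y + ε • z) ≤ p y + ε * C := by
          refine (gauge_add_le hK (absorbent_nhds_zero h0) _ _).trans ?_
          have := hC _ hz'
          rw [neg_neg] at this
          rw [gauge_smul_of_nonneg hε.le, smul_eq_mul]
          gcongr
        have h2 := convex_grad_ineq hcv hxd.hasFDerivAt (-(ε • z))
        have h3 := hWφ _ hz' (-((InnerProductSpace.toDual ℝ _).symm (fderiv ℝ p (y + ε • z))))
        rw [inner_neg_left, inner_neg_right, neg_neg, InnerProductSpace.toDual_symm_apply] at h3
        refine ⟨?_, ht, ?_⟩
        · rw [hA]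
          rw [← gauge_lt_one_iff_mem_interior hK h0]
          have := ht.2
          change p (y + ε • z) < 1
          nlinarith
        · change p (y + ε • z) - ε * ψ (y + ε • z) < t
          simp only [map_neg, map_smul, smul_eq_mul, add_neg_cancel_right] at h2
          have h4 : ε * fderiv ℝ p (y + ε • z) z ≤ ε * ψ (y + ε • z) :=
            mul_le_mul_of_nonneg_left h3 hε.le
          have h5 : gauge K y = p y := rfl
          have h6 : gauge K (y + ε • z) = p (y + ε • z) := rfl
          rw [h5, h6] at h2
          linarith
      refine le_trans ?_ (measure_mono_ae hs1)
      have hnegW : μ (-W) = μ W := Measure.measure_neg μ W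
      have hBM := brunn_minkowski_ratio μ (A := A) (B := -W) isOpen_interior
        hW.measurableSet.neg hr (by rw [hnegW]; exact hKW) ht.1 hε
      refine le_trans ?_ hBM
      rw [hnegW]
      refine (add_le_add (measure_mono hs0) le_rfl).trans ?_
      rw [Measure.addHaar_smul, hKW, finrank_euclideanSpace, Fintype.card_fin, ← mul_assoc,
        abs_of_nonneg (pow_nonneg ht.1.le _), ← ENNReal.ofReal_mul (pow_nonneg ht.1.le _),
        mul_right_comm, ← ENNReal.ofReal_mul (by positivity), ← add_mul,
        ← ENNReal.ofReal_add (by have := ht.1.le; positivity) (by have := ht.1.le; positivity)]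
      gcongr
      have hb := pow_add_mul_le_add_pow (a := t * r) (b := ε) (by have := ht.1; positivity) (by have := ht.1; positivity) m
      refine le_trans (le_of_eq ?_) hb
      obtain ⟨k, rfl⟩ : ∃ k, m = k + 1 := ⟨m - 1, e1⟩
      simp only [Nat.add_sub_cancel]
      push_cast
      ring
    · rw [indicator_of_notMem ht]
      have : (fun x => (x, t)) ⁻¹' D0 = ∅ := by
        ext x
        simp only [hD0, mem_preimage, mem_empty_iff_false, iff_false]
        exact fun h => ht h.2.1
      rw [this]; simp
  have hfin := hlower.trans hupper
  rw [ENNReal.add_le_add_iff_left hD0fin, ENNReal.ofReal_mul hε.le, mul_assoc, mul_assoc,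
    ENNReal.mul_le_mul_iff_right (by simpa using hε) ENNReal.ofReal_ne_top] at hfin
  refine le_trans (le_of_eq ?_) hfin
  ring

lemma wulff_ineq (hK : Convex ℝ K) (h0 : K ∈ nhds (0 : EuclideanSpace ℝ (Fin m)))
    (hKfin : μ (interior K) ≠ ∞)
    (hm : 0 < m) (hW : IsCompact W) (hφ : Continuous φ) (hWφ : ∀ z ∈ W, ∀ y, ⟪y, z⟫ ≤ φ y)
    {r : ℝ} (hr : 0 < r) (hKW : μ (interior K) = ENNReal.ofReal (r ^ m) * μ W) :
    ENNReal.ofReal (r ^ (m - 1)) * μ W ≤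
      ∫⁻ x in interior K, ENNReal.ofReal
        (φ (-((InnerProductSpace.toDual ℝ _).symm (fderiv ℝ (gauge K) x)))) ∂μ := by
  obtain ⟨Lp, hLp⟩ := hK.lipschitz_gauge h0
  obtain ⟨C, hC⟩ := hW.exists_bound_of_continuousOn
    (f := fun z => gauge K (-z)) (hLp.continuous.comp continuous_neg).continuousOn
  have hC' : ∀ z ∈ W, gauge K (-z) ≤ max C 0 := fun z hz =>
    (le_abs_self _).trans ((hC z hz).trans (le_max_left _ _))
  set C' := max C 0
  have T : Filter.Tendsto (fun ε : ℝ => ENNReal.ofReal ((1 - C' * ε) ^ m) *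
      (ENNReal.ofReal (r ^ (m - 1)) * μ W)) (nhdsWithin 0 (Ioi 0))
      (nhds (ENNReal.ofReal ((1 - C' * 0) ^ m) * (ENNReal.ofReal (r ^ (m - 1)) * μ W))) := by
    refine Filter.Tendsto.mono_left ?_ nhdsWithin_le_nhds
    refine ENNReal.Tendsto.mul_const ?_ (Or.inr (ENNReal.mul_ne_top ENNReal.ofReal_ne_top
      hW.measure_lt_top.ne))
    have : Continuous fun ε : ℝ => ENNReal.ofReal ((1 - C' * ε) ^ m) :=
      ENNReal.continuous_ofReal.comp (by fun_prop)
    exact this.tendsto 0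
  have hev : ∀ᶠ ε : ℝ in nhdsWithin 0 (Ioi 0), 0 ≤ 1 - C' * ε := by
    refine nhdsWithin_le_nhds ?_
    have hc : ContinuousAt (fun ε : ℝ => 1 - C' * ε) 0 := by fun_prop
    have := hc.eventually (lt_mem_nhds (a := 0) (by simp))
    filter_upwards [this] with e he using he.le
  have T' := le_of_tendsto T (b := ∫⁻ x in interior K, ENNReal.ofReal
        (φ (-((InnerProductSpace.toDual ℝ _).symm (fderiv ℝ (gauge K) x)))) ∂μ) (by
    filter_upwards [self_mem_nhdsWithin, hev] with ε h1 h2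
    exact wulff_step μ hK h0 hKfin hm hW hφ hWφ hr hKW hC' h1 h2 (le_max_right _ _))
  simpa using T'

end wulff

lemma support_line (g : ℝ × ℝ → ℝ)
    (hghom : ∀ l : ℝ, 0 < l → ∀ p : ℝ × ℝ, 0 ≤ p.1 → 0 ≤ p.2 →
      g (l * p.1, l * p.2) = l * g p)
    (hgconv : ConvexOn ℝ (Set.Ici (0 : ℝ) ×ˢ Set.Ici (0 : ℝ)) g)
    (hgmono : ∀ t : ℝ, 0 ≤ t → MonotoneOn (fun s => g (s, t)) (Set.Ici (0 : ℝ)))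
    {h r : ℝ} (hh : 0 < h) (hr : 0 < r) :
    ∃ α β : ℝ, 0 ≤ α ∧ (∀ s t, 0 ≤ s → 0 ≤ t → α * s + β * t ≤ g (s, t)) ∧
      α * h + β * r = g (h, r) := by
  set γ : ℝ → ℝ := fun s => g (s, r) with hγ
  have hγc : ConvexOn ℝ (Ici 0) γ := by
    refine ⟨convex_Ici 0, fun x hx y hy a b ha hb hab => ?_⟩
    have := hgconv.2 (x := (x, r)) ⟨hx, hr.le⟩ (y := (y, r)) ⟨hy, hr.le⟩ ha hb hab
    refine le_trans (le_of_eq ?_) this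
    change g (a • x + b • y, r) = g (a • x + b • y, a • r + b • r)
    congr 2
    rw [← add_smul, hab, one_smul]
  have hinter : h ∈ interior (Ici (0:ℝ)) := by rw [interior_Ici]; exact hh
  set α := derivWithin γ (Ioi h) h with hα
  have hleft : ∀ y, 0 ≤ y → y < h → slope γ y h ≤ α := fun y hy hyh =>
    (hγc.slope_le_leftDeriv_of_mem_interior hy hinter hyh).trans
      (hγc.leftDeriv_le_rightDeriv_of_mem_interior hinter)
  have hα0 : 0 ≤ α := by
    refine le_trans ?_ (hleft 0 le_rfl hh)
    rw [slope_def_field]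
    have := hgmono r hr.le (mem_Ici.2 le_rfl) (mem_Ici.2 hh.le) hh.le
    refine div_nonneg (sub_nonneg.2 this) (by linarith)
  have hsub : ∀ y, 0 ≤ y → γ h + α * (y - h) ≤ γ y := by
    intro y hy
    rcases lt_trichotomy y h with hyh | rfl | hyh
    · have := hleft y hy hyh
      rw [slope_def_field, div_le_iff₀ (by linarith)] at this
      linarith
    · simp
    · have := hγc.rightDeriv_le_slope_of_mem_interior hinter (mem_Ici.2 hy) hyh
      rw [slope_def_field, le_div_iff₀ (by linarith)] at this
      linarith
  have hpos : ∀ s t, 0 ≤ s → 0 < t → α * s + ((γ h - α * h) / r) * t ≤ g (s, t) := by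
    intro s t hs ht
    have h1 := hsub (s * r / t) (by positivity)
    have h2 := hghom (t / r) (by positivity) (s * r / t, r) (by positivity) hr.le
    have e1 : t / r * (s * r / t) = s := by field_simp
    have e2 : t / r * r = t := by field_simp
    simp only [e1, e2] at h2
    rw [h2]
    have h3 := mul_le_mul_of_nonneg_left h1 (show 0 ≤ t / r by positivity)
    refine le_trans (le_of_eq ?_) h3
    field_simp
    ring
  refine ⟨α, (γ h - α * h) / r, hα0, ?_, by field_simp; simp [hγ]⟩
  intro s t hs ht
  rcases ht.eq_or_lt with rfl | ht
  swap
  · exact hpos s t hs ht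
  set β := (γ h - α * h) / r
  have key : ∀ δ : ℝ, 0 < δ → α * s ≤ g (s, 0) + δ * (g (0, 1) - β) := by
    intro δ hδ
    have h1 := hpos s δ hs hδ
    have h2 := hgconv.2 (x := (2 * s, 0)) ⟨by simpa using hs, mem_Ici.2 le_rfl⟩ (y := (0, 2 * δ))
      ⟨mem_Ici.2 le_rfl, by simpa using hδ.le⟩ 
      (show (0:ℝ) ≤ 1 / 2 by norm_num) (show (0:ℝ) ≤ 1 / 2 by norm_num) (by norm_num)
    have h3 := hghom 2 two_pos (s, 0) hs le_rfl
    have h4 := hghom (2 * δ) (by positivity) (0, 1) le_rfl zero_le_one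
    simp only [Prod.smul_mk, smul_eq_mul, Prod.mk_add_mk, mul_zero, mul_one, add_zero, zero_add] at h2 h3 h4
    rw [h3, h4, show (1/2 : ℝ) * (2 * s) = s by ring, show (1/2 : ℝ) * (2 * δ) = δ by ring] at h2
    linarith
  have T : Filter.Tendsto (fun δ : ℝ => g (s, 0) + δ * (g (0, 1) - β)) (nhdsWithin 0 (Ioi 0))
      (nhds (g (s, 0) + 0 * (g (0, 1) - β))) := by
    refine Filter.Tendsto.mono_left ?_ nhdsWithin_le_nhds
    exact (by fun_prop : Continuous fun δ : ℝ => g (s, 0) + δ * (g (0, 1) - β)).tendsto 0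
  have := ge_of_tendsto T (b := α * s) (by
    filter_upwards [self_mem_nhdsWithin] with δ hδ using key δ hδ)
  simpa using this

section
variable {m : ℕ} (μ : Measure (EuclideanSpace ℝ (Fin m))) [μ.IsAddHaarMeasure]

lemma integral_deriv_zero {S : Set (EuclideanSpace ℝ (Fin m))} (hS : IsCompact S)
    (hcv : Convex ℝ S) {f : EuclideanSpace ℝ (Fin m) → ℝ} {D : ℝ≥0} (hf : LipschitzWith D f)
    (hf1 : ∀ x, f x ≤ 0 ↔ x ∈ S) (hf2 : ∀ x, f x < 0 ↔ x ∈ interior S)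
    (v : EuclideanSpace ℝ (Fin m)) :
    ∫ x in interior S, fderiv ℝ f x v ∂μ = 0 := by
  have hg := hf.min_const 0
  have hgs : HasCompactSupport fun x => min (f x) 0 := by
    refine HasCompactSupport.intro hS fun x hx => ?_
    rw [← hf1] at hx
    exact min_eq_right (not_le.1 hx).le
  have h1 : LipschitzWith 0 (fun _ : EuclideanSpace ℝ (Fin m) => (1:ℝ)) := LipschitzWith.const 1
  have key := LipschitzWith.integral_lineDeriv_mul_eq (μ := μ) h1 hg hgs (-v)
  have hc : ∀ x w : EuclideanSpace ℝ (Fin m), lineDeriv ℝ (fun _ => (1:ℝ)) x w = 0 := by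
    intro x w; simp [lineDeriv]
  simp only [hc, zero_mul, integral_zero, neg_neg, mul_one] at key
  rw [← integral_indicator isOpen_interior.measurableSet]
  refine Eq.trans ?_ key.symm
  refine integral_congr_ae ?_
  have hfr : ∀ᵐ x ∂μ, x ∉ frontier S := measure_eq_zero_iff_ae_notMem.1 (hcv.addHaar_frontier μ)
  filter_upwards [hf.ae_differentiableAt (μ := μ), hfr] with x hx hxf
  by_cases hxi : x ∈ interior S
  · rw [indicator_of_mem hxi, ← hx.lineDeriv_eq_fderiv]
    refine Filter.EventuallyEq.lineDeriv_eq ?_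
    filter_upwards [isOpen_interior.mem_nhds hxi] with y hy
    exact (min_eq_left ((hf2 y).2 hy).le).symm
  · rw [indicator_of_notMem hxi]
    have hxS : x ∈ Sᶜ := fun hxS => hxf ⟨subset_closure hxS, hxi⟩
    have : (fun x => min (f x) 0) =ᶠ[nhds x] fun _ => (0:ℝ) := by
      filter_upwards [hS.isClosed.isOpen_compl.mem_nhds hxS] with y hy
      have : ¬ f y ≤ 0 := fun h => hy ((hf1 y).1 h)
      exact min_eq_right (not_le.1 this).le
    rw [this.lineDeriv_eq]
    simp [lineDeriv]

/-- The function whose graph (over the base) is the lateral boundary of the cone. -/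
noncomputable def coneFun (S : Set (EuclideanSpace ℝ (Fin m))) (e x : EuclideanSpace ℝ (Fin m)) :
    ℝ := gauge ((fun y => y + e) ⁻¹' S) (x - e) - 1

variable {S : Set (EuclideanSpace ℝ (Fin m))} {e : EuclideanSpace ℝ (Fin m)}

lemma shift_nhds (he : e ∈ interior S) : (fun y => y + e) ⁻¹' S ∈ nhds (0 : EuclideanSpace ℝ (Fin m)) := by
  have : ContinuousAt (fun y : EuclideanSpace ℝ (Fin m) => y + e) 0 := by fun_prop
  refine this ?_
  simpa using mem_interior_iff_mem_nhds.1 he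

lemma shift_convex (hS : Convex ℝ S) : Convex ℝ ((fun y => y + e) ⁻¹' S) :=
  hS.translate_preimage_left e

lemma shift_interior : interior ((fun y => y + e) ⁻¹' S) = (fun y => y + e) ⁻¹' interior S :=
  ((Homeomorph.addRight e).preimage_interior S).symm

lemma coneFun_lt (hS : Convex ℝ S) (he : e ∈ interior S) (x) :
    coneFun S e x < 0 ↔ x ∈ interior S := by
  unfold coneFun
  rw [sub_neg, gauge_lt_one_iff_mem_interior (shift_convex hS) (shift_nhds he), shift_interior]
  simp

lemma coneFun_le (hS : Convex ℝ S) (hSc : IsClosed S) (he : e ∈ interior S) (x) :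
    coneFun S e x ≤ 0 ↔ x ∈ S := by
  unfold coneFun
  rw [sub_nonpos, gauge_le_one_iff_mem_closure (shift_convex hS) (shift_nhds he),
    IsClosed.closure_eq (hSc.preimage (by fun_prop))]
  simp

lemma coneFun_lip (hS : Convex ℝ S) (he : e ∈ interior S) :
    ∃ D : ℝ≥0, LipschitzWith D (coneFun S e) := by
  obtain ⟨D, hD⟩ := (shift_convex hS).lipschitz_gauge (shift_nhds he)
  refine ⟨D, LipschitzWith.of_dist_le_mul fun x y => ?_⟩
  have := hD.dist_le_mul (x - e) (y - e)
  rw [dist_sub_right] at this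
  unfold coneFun
  rwa [dist_sub_right]

lemma coneFun_convex (hS : Convex ℝ S) (he : e ∈ interior S) : ConvexOn ℝ univ (coneFun S e) := by
  have h1 := gauge_convexOn (shift_convex hS) (shift_nhds he)
  refine ⟨convex_univ, fun x _ y _ a b ha hb hab => ?_⟩
  have := h1.2 (mem_univ (x - e)) (mem_univ (y - e)) ha hb hab
  unfold coneFun
  have e1 : a • x + b • y - e = a • (x - e) + b • (y - e) := by
    obtain rfl : b = 1 - a := by linarith
    module
  rw [e1]
  simp only [smul_eq_mul] at this ⊢
  nlinarith

lemma coneFun_fderiv (x) :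
    fderiv ℝ (coneFun S e) x = fderiv ℝ (gauge ((fun y => y + e) ⁻¹' S)) (x - e) := by
  unfold coneFun
  rw [fderiv_sub_const, fderiv_comp_sub]

/-- Homogeneity of the cone function about the apex. -/
lemma coneFun_homog {t : ℝ} (ht : 0 ≤ t) (z) :
    coneFun S e (e + t • (z - e)) = t * (coneFun S e z + 1) - 1 := by
  unfold coneFun
  rw [add_sub_cancel_left, gauge_smul_of_nonneg ht, smul_eq_mul]
  ring

lemma coneFun_pos (hSc : IsCompact S) (he : e ∈ interior S) {x} (hx : x ≠ e) :
    -1 < coneFun S e x := by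
  unfold coneFun
  have hb : Bornology.IsVonNBounded ℝ ((fun y => y + e) ⁻¹' S) := by
    rw [NormedSpace.isVonNBounded_iff]
    have : (fun y => y + e) ⁻¹' S = (Homeomorph.addRight e) ⁻¹' S := rfl
    rw [this]
    exact ((Homeomorph.addRight e).isCompact_preimage.2 hSc).isBounded
  have := (gauge_pos (absorbent_nhds_zero (shift_nhds he)) hb).2 (sub_ne_zero.2 hx)
  linarith

lemma wulff_cone {W : Set (EuclideanSpace ℝ (Fin m))} {φ : EuclideanSpace ℝ (Fin m) → ℝ}
    (hS : Convex ℝ S) (hSc : IsCompact S) (he : e ∈ interior S)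
    (hm : 0 < m) (hW : IsCompact W) (hφ : Continuous φ) (hWφ : ∀ z ∈ W, ∀ y, ⟪y, z⟫ ≤ φ y)
    {r : ℝ} (hr : 0 < r) (hKW : μ (interior S) = ENNReal.ofReal (r ^ m) * μ W) :
    ENNReal.ofReal (r ^ (m - 1)) * μ W ≤
      ∫⁻ x in interior S, ENNReal.ofReal
        (φ (-((InnerProductSpace.toDual ℝ _).symm (fderiv ℝ (coneFun S e) x)))) ∂μ := by
  have hmeas : μ (interior ((fun y => y + e) ⁻¹' S)) = μ (interior S) := by
    rw [shift_interior, measure_preimage_add_right]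
  have hfin : μ (interior S) ≠ ∞ :=
    ne_top_of_le_ne_top hSc.measure_lt_top.ne (measure_mono interior_subset)
  have h1 := wulff_ineq μ (shift_convex hS) (shift_nhds he) (by rwa [hmeas]) hm hW hφ hWφ hr
    (by rwa [hmeas])
  refine h1.trans (le_of_eq ?_)
  rw [← lintegral_indicator isOpen_interior.measurableSet,
    ← lintegral_indicator isOpen_interior.measurableSet, ← lintegral_sub_right_eq_self _ e]
  refine lintegral_congr fun x => ?_
  simp only [coneFun_fderiv]
  by_cases hx : x ∈ interior S
  · rw [indicator_of_mem hx, indicator_of_mem]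
    rw [shift_interior]; simpa using hx
  · rw [indicator_of_notMem hx, indicator_of_notMem]
    rw [shift_interior]; simpa using hx

end

section geom
variable {m n : ℕ} (ι : EuclideanSpace ℝ (Fin m) →ₗᵢ[ℝ] EuclideanSpace ℝ (Fin n))
  {ν : EuclideanSpace ℝ (Fin n)} {h : ℝ}
  {S : Set (EuclideanSpace ℝ (Fin m))} {e : EuclideanSpace ℝ (Fin m)}

lemma cone_mem_decomp {y : EuclideanSpace ℝ (Fin n)}
    (hS : Convex ℝ S) (hSc : IsCompact S) (he : e ∈ interior S)
    (hy : y ∈ coneOver (-h • ν) (ι '' S)) :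
    ∃ z s, y = ι z + s • (ι e + h • ν) ∧ coneFun S e z ≤ s := by
  obtain ⟨t, ⟨ht0, ht1⟩, _, ⟨x, hx, rfl⟩, rfl⟩ := hy
  refine ⟨e + t • (x - e), t - 1, ?_, ?_⟩
  · simp only [map_add, map_smul, map_sub]
    module
  · rw [coneFun_homog ht0]
    have := (coneFun_le hS hSc.isClosed he x).2 hx
    nlinarith

lemma decomp_unique (hν : ‖ν‖ = 1) (hι : ∀ x, ⟪ι x, ν⟫ = 0) (hh : 0 < h)
    {z z' : EuclideanSpace ℝ (Fin m)} {s s' : ℝ}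
    (H : ι z + s • (ι e + h • ν) = ι z' + s' • (ι e + h • ν)) : z = z' ∧ s = s' := by
  have h1 := congrArg (fun y => ⟪y, ν⟫) H
  simp only [inner_add_left, inner_smul_left, hι, real_inner_self_eq_norm_sq, hν,
    conj_trivial] at h1
  have hs : s = s' := by
    have : (s - s') * h = 0 := by linarith
    rcases mul_eq_zero.1 this with h2 | h2
    · linarith
    · exact absurd h2 hh.ne'
  subst hs
  exact ⟨ι.injective (add_right_cancel H), rfl⟩

lemma gmap_eq_cone (hSc : IsCompact S) (he : e ∈ interior S)
    {x : EuclideanSpace ℝ (Fin m)} (hx : x ≠ e) :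
    ∃ w, coneFun S e w = 0 ∧ gmap ι ν e h (coneFun S e) x =
      (1 - (coneFun S e x + 1)) • (-h • ν) + (coneFun S e x + 1) • ι w := by
  have ht := coneFun_pos hSc he hx
  set t := coneFun S e x + 1 with htd
  have ht0 : 0 < t := by linarith
  refine ⟨e + t⁻¹ • (x - e), ?_, ?_⟩
  · rw [coneFun_homog (inv_nonneg.2 ht0.le), ← htd, inv_mul_cancel₀ ht0.ne', sub_self]
  · have : coneFun S e x = t - 1 := by linarith
    simp only [gmap, this, map_add, map_smul, map_sub, smul_add, smul_smul,
      mul_inv_cancel₀ ht0.ne']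
    module

lemma gmap_mem_cone (hSc : IsCompact S) (hS : Convex ℝ S) (he : e ∈ interior S)
    {x : EuclideanSpace ℝ (Fin m)} (hx : x ∈ S) :
    gmap ι ν e h (coneFun S e) x ∈ coneOver (-h • ν) (ι '' S) := by
  by_cases hxe : x = e
  · subst hxe
    refine ⟨0, ⟨le_rfl, zero_le_one⟩, ι x, ⟨x, hx, rfl⟩, ?_⟩
    have : coneFun S x x = -1 := by simp [coneFun]
    simp only [gmap, this]
    module
  · obtain ⟨w, hw, hxw⟩ := gmap_eq_cone ι (ν := ν) (h := h) hSc he hxe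
    refine ⟨_, ⟨?_, ?_⟩, ι w, ⟨w, (coneFun_le hS hSc.isClosed he w).1 hw.le, rfl⟩, hxw⟩
    · have := coneFun_pos hSc he hxe
      linarith
    · have := (coneFun_le hS hSc.isClosed he x).2 hx
      linarith

lemma gmap_mem_lat (hι : ∀ x, ⟪ι x, ν⟫ = 0) (hSc : IsCompact S) (hS : Convex ℝ S)
    (he : e ∈ interior S)
    {x : EuclideanSpace ℝ (Fin m)} (hx : x ∈ S) (hxe : x ≠ e) :
    gmap ι ν e h (coneFun S e) x ∈ coneOver (-h • ν) (relBoundary {x | ⟪x, ν⟫ = 0} (ι '' S)) := by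
  obtain ⟨w, hw, hxw⟩ := gmap_eq_cone ι (ν := ν) (h := h) hSc he hxe
  refine ⟨_, ⟨?_, ?_⟩, ι w, ⟨⟨w, (coneFun_le hS hSc.isClosed he w).1 hw.le, rfl⟩, ?_⟩, hxw⟩
  · have := coneFun_pos hSc he hxe
    linarith
  · have := (coneFun_le hS hSc.isClosed he x).2 hx
    linarith
  · rintro ⟨ε, hε, hsub⟩
    have : w ∈ interior S := by
      rw [mem_interior_iff_mem_nhds]
      refine Filter.mem_of_superset (ball_mem_nhds w hε) fun y hy => ?_
      have hy' : ι y ∈ ι '' S := by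
        refine hsub ⟨?_, hι y⟩
        rw [mem_ball, ι.dist_map]
        exact hy
      obtain ⟨y', hy', e'⟩ := hy'
      rwa [← ι.injective e']
    have := (coneFun_lt hS he w).2 this
    linarith

lemma gmap_mem_frontier (hν : ‖ν‖ = 1) (hι : ∀ x, ⟪ι x, ν⟫ = 0) (hh : 0 < h)
    (hSc : IsCompact S) (hS : Convex ℝ S) (he : e ∈ interior S)
    {x : EuclideanSpace ℝ (Fin m)} (hx : x ∈ S) :
    gmap ι ν e h (coneFun S e) x ∈ frontier (coneOver (-h • ν) (ι '' S)) := by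
  refine ⟨subset_closure (gmap_mem_cone ι hSc hS he hx), fun hinter => ?_⟩
  have hc : ContinuousAt (fun δ : ℝ => ι x + (coneFun S e x - δ) • (ι e + h • ν)) 0 := by fun_prop
  have h1 : ∀ᶠ δ : ℝ in nhds 0, ι x + (coneFun S e x - δ) • (ι e + h • ν) ∈
      coneOver (-h • ν) (ι '' S) := by
    refine hc ?_
    simp only [sub_zero]
    exact mem_interior_iff_mem_nhds.1 hinter
  have h2 : ∀ᶠ δ : ℝ in nhdsWithin 0 (Ioi 0), ι x + (coneFun S e x - δ) • (ι e + h • ν) ∈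
      coneOver (-h • ν) (ι '' S) := nhdsWithin_le_nhds h1
  obtain ⟨δ, hδ, hδ0⟩ := (h2.and self_mem_nhdsWithin).exists
  obtain ⟨z, s, hzs, hle⟩ := cone_mem_decomp ι hS hSc he hδ
  obtain ⟨rfl, rfl⟩ := decomp_unique ι hν hι hh hzs
  have : 0 < δ := hδ0
  linarith

lemma one_add_nonneg (hSc : IsCompact S) (hS : Convex ℝ S) (he : e ∈ interior S) (h0 : 0 ∈ S)
    {x : EuclideanSpace ℝ (Fin m)} {L : EuclideanSpace ℝ (Fin m) →L[ℝ] ℝ}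
    (hL : HasFDerivAt (coneFun S e) L x) : 0 ≤ 1 + L e := by
  have hcv := coneFun_convex hS he
  have h1 := convex_grad_ineq hcv hL (-x)
  have h2 := convex_grad_ineq hcv hL (x - e)
  have h3 : coneFun S e (x + (x - e)) = 2 * (coneFun S e x + 1) - 1 := by
    rw [← coneFun_homog two_pos.le]
    congr 1
    module
  have h4 := (coneFun_le hS hSc.isClosed he 0).2 h0
  rw [h3, map_sub] at h2
  rw [map_neg, add_neg_cancel] at h1
  linarith

lemma normal_eq (hν : ‖ν‖ = 1) (hι : ∀ x, ⟪ι x, ν⟫ = 0)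
    (hsurj : ∀ y, ⟪y, ν⟫ = 0 → ∃ x, ι x = y) (hh : 0 < h)
    (hSc : IsCompact S) (hS : Convex ℝ S) (he : e ∈ interior S)
    {x : EuclideanSpace ℝ (Fin m)} (hx : x ∈ interior S)
    {L : EuclideanSpace ℝ (Fin m) →L[ℝ] ℝ}
    (hL : HasFDerivAt (coneFun S e) L x) {v : EuclideanSpace ℝ (Fin n)}
    (hv : IsInnerNormalAt (coneOver (-h • ν) (ι '' S)) (gmap ι ν e h (coneFun S e) x) v) :
    0 < ‖nrm ι ν e h L‖ ∧ v = ‖nrm ι ν e h L‖⁻¹ • nrm ι ν e h L := by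
  obtain ⟨hv1, hv2⟩ := hv
  set c := ⟪v, ι e + h • ν⟫ with hc
  have hfx := (coneFun_lt hS he x).2 hx
  have hc0 : 0 ≤ c := by
    have h1 := hv2 (ι x) ⟨1, ⟨zero_le_one, le_rfl⟩, ι x, ⟨x, interior_subset hx, rfl⟩, by simp⟩
    have e1 : ι x - gmap ι ν e h (coneFun S e) x = (-coneFun S e x) • (ι e + h • ν) := by
      simp only [gmap]; module
    rw [e1, inner_smul_right, ← hc] at h1
    nlinarith
  have hder : ∀ w, ⟪v, ι w⟫ + L w * c = 0 := by
    have hmin : IsLocalMin (fun z => ⟪v, ι z⟫ + coneFun S e z * c) x := by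
      filter_upwards [isOpen_interior.mem_nhds hx] with z hz
      have := hv2 _ (gmap_mem_cone ι (ν := ν) (h := h) hSc hS he (interior_subset hz))
      simp only [gmap, inner_sub_right, inner_add_right, inner_smul_right] at this
      simp only [hc, inner_add_right, inner_smul_right]
      linarith
    have hd : HasFDerivAt (fun z => ⟪v, ι z⟫ + coneFun S e z * c)
        ((innerSL ℝ v).comp ι.toContinuousLinearMap + c • L) x := by
      refine HasFDerivAt.add ?_ (hL.mul_const c)
      exact ((innerSL ℝ v).comp ι.toContinuousLinearMap).hasFDerivAt
    have h0 := hmin.hasFDerivAt_eq_zero hd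
    intro w
    have := DFunLike.congr_fun h0 w
    simp at this
    linarith
  have hvν : ⟪v - ⟪v, ν⟫ • ν, ν⟫ = 0 := by
    rw [inner_sub_left, inner_smul_left, real_inner_self_eq_norm_sq, hν]
    simp
  obtain ⟨u, hu⟩ := hsurj _ hvν
  set l := (InnerProductSpace.toDual ℝ _).symm L with hl
  have hlL : ∀ w, ⟪l, w⟫ = L w := fun w => InnerProductSpace.toDual_symm_apply
  have hvu : v = ⟪v, ν⟫ • ν + ι u := by rw [hu]; module
  have huw : ∀ w, ⟪v, ι w⟫ = ⟪u, w⟫ := by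
    intro w
    conv_lhs => rw [hvu]
    rw [inner_add_left, inner_smul_left, real_inner_comm (ι w) ν, hι, ι.inner_map_map]
    simp
  have hul : u = -c • l := by
    refine ext_inner_right ℝ fun w => ?_
    rw [inner_smul_left, hlL, ← huw]
    have := hder w
    simp only [conj_trivial]
    linarith
  have hca : h * ⟪v, ν⟫ = c * (1 + L e) := by
    have : c = ⟪v, ι e⟫ + h * ⟪v, ν⟫ := by rw [hc, inner_add_right, inner_smul_right]
    have := hder e
    linarith
  have hvn : v = (c / h) • nrm ι ν e h L := by
    have ha : ⟪v, ν⟫ = (c / h) * (1 + L e) := by field_simp; linarith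
    rw [hvu, ha, hul]
    simp only [nrm, ← hl, map_smul]
    match_scalars
    · ring
    · field_simp
  have hn : (c / h) * ‖nrm ι ν e h L‖ = 1 := by
    have := congrArg norm hvn
    rw [hv1, norm_smul, Real.norm_of_nonneg (by positivity)] at this
    exact this.symm
  have hpos : 0 < ‖nrm ι ν e h L‖ := by
    rcases (norm_nonneg (nrm ι ν e h L)).eq_or_lt with h0 | h0
    · rw [← h0] at hn; simp at hn
    · exact h0
  refine ⟨hpos, ?_⟩
  rw [← eq_inv_of_mul_eq_one_left hn]
  exact hvn

lemma Phi_lower {Φ : EuclideanSpace ℝ (Fin n) → ℝ} {g : ℝ × ℝ → ℝ}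
    {φ : EuclideanSpace ℝ (Fin n) → ℝ}
    (hφ0 : ∀ z : EuclideanSpace ℝ (Fin n), ⟪z, ν⟫ = 0 → 0 ≤ φ z)
    (hφhom : ∀ l : ℝ, 0 < l → ∀ z : EuclideanSpace ℝ (Fin n), ⟪z, ν⟫ = 0 →
      φ (l • z) = l * φ z)
    (hadm : ∀ x : EuclideanSpace ℝ (Fin n), 0 ≤ ⟪x, ν⟫ →
      g (φ (x - ⟪x, ν⟫ • ν), ⟪x, ν⟫) ≤ Φ x)
    {α β : ℝ} (hαβ : ∀ s t, 0 ≤ s → 0 ≤ t → α * s + β * t ≤ g (s, t))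
    (hν : ‖ν‖ = 1) (hι : ∀ x, ⟪ι x, ν⟫ = 0) (hh : 0 < h)
    {L : EuclideanSpace ℝ (Fin m) →L[ℝ] ℝ} (hLe : 0 ≤ 1 + L e)
    (hN : 0 < ‖nrm ι ν e h L‖) :
    (α * h * φ (ι (-((InnerProductSpace.toDual ℝ _).symm L))) + β * (1 + L e)) / ‖nrm ι ν e h L‖ ≤
      Φ (‖nrm ι ν e h L‖⁻¹ • nrm ι ν e h L) := by
  set N := ‖nrm ι ν e h L‖ with hNd
  set l := (InnerProductSpace.toDual ℝ _).symm L with hl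
  have h1 : ⟪N⁻¹ • nrm ι ν e h L, ν⟫ = (1 + L e) / N := by
    simp only [nrm, inner_smul_left, inner_sub_left, hι, real_inner_self_eq_norm_sq, hν,
      conj_trivial]
    ring
  have h2 : N⁻¹ • nrm ι ν e h L - ((1 + L e) / N) • ν = (h / N) • ι (-l) := by
    simp only [nrm, ← hl, map_neg]
    match_scalars
    · ring
    · ring
  have h3 := hadm (N⁻¹ • nrm ι ν e h L) (by rw [h1]; positivity)
  rw [h1, h2, hφhom _ (by positivity) _ (hι _)] at h3
  refine le_trans ?_ h3
  have h4 := hφ0 _ (hι (-l))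
  refine le_trans (le_of_eq ?_) (hαβ _ _ (by positivity) (by positivity))
  field_simp

end geom

lemma ofReal_integral_le {X : Type*} [MeasurableSpace X] {μ : Measure X} {f : X → ℝ}
    (hf : Integrable f μ) : ENNReal.ofReal (∫ x, f x ∂μ) ≤ ∫⁻ x, ENNReal.ofReal (f x) ∂μ := by
  have h1 : ∫ x, f x ∂μ ≤ ∫ x, max (f x) 0 ∂μ :=
    integral_mono hf hf.pos_part fun x => le_max_left _ _
  refine (ENNReal.ofReal_le_ofReal h1).trans ?_
  rw [ofReal_integral_eq_lintegral_ofReal hf.pos_part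
    (Filter.Eventually.of_forall fun x => le_max_right _ _)]
  refine lintegral_mono fun x => ?_
  rw [ENNReal.ofReal_max]
  simp

lemma main_aux {m n : ℕ} (ι : EuclideanSpace ℝ (Fin m) →ₗᵢ[ℝ] EuclideanSpace ℝ (Fin n))
    {ν : EuclideanSpace ℝ (Fin n)} {h : ℝ}
    {S W : Set (EuclideanSpace ℝ (Fin m))} {e : EuclideanSpace ℝ (Fin m)} (hm : 0 < m)
    {Φ : EuclideanSpace ℝ (Fin n) → ℝ} {g : ℝ × ℝ → ℝ}
    {φ : EuclideanSpace ℝ (Fin n) → ℝ}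
    (hφ0 : ∀ z : EuclideanSpace ℝ (Fin n), ⟪z, ν⟫ = 0 → 0 ≤ φ z)
    (hφhom : ∀ l : ℝ, 0 < l → ∀ z : EuclideanSpace ℝ (Fin n), ⟪z, ν⟫ = 0 →
      φ (l • z) = l * φ z)
    (hadm : ∀ x : EuclideanSpace ℝ (Fin n), 0 ≤ ⟪x, ν⟫ →
      g (φ (x - ⟪x, ν⟫ • ν), ⟪x, ν⟫) ≤ Φ x)
    {r : ℝ} (hr : 0 < r)
    {α β : ℝ} (hα : 0 ≤ α) (hαβ : ∀ s t, 0 ≤ s → 0 ≤ t → α * s + β * t ≤ g (s, t))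
    (hαβ' : α * h + β * r = g (h, r))
    (hν : ‖ν‖ = 1) (hι : ∀ x, ⟪ι x, ν⟫ = 0)
    (hsurj : ∀ y, ⟪y, ν⟫ = 0 → ∃ x, ι x = y) (hh : 0 < h)
    (hSc : IsCompact S) (hS : Convex ℝ S) (he : e ∈ interior S) (h0 : 0 ∈ S)
    (hW : IsCompact W) (hφ : Continuous fun x => φ (ι x)) (hWφ : ∀ z ∈ W, ∀ y, ⟪y, z⟫ ≤ φ (ι y))
    (hKW : r ^ m * (μH[(m : ℝ)] W).toReal = (μH[(m : ℝ)] S).toReal)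
    (νC : EuclideanSpace ℝ (Fin n) → EuclideanSpace ℝ (Fin n))
    (hνC : ∀ᵐ x ∂(μH[(m : ℝ)].restrict (frontier (coneOver (-h • ν) (ι '' S)))),
      IsInnerNormalAt (coneOver (-h • ν) (ι '' S)) x (νC x)) :
    ENNReal.ofReal ((μH[(m : ℝ)] W).toReal * r ^ (m - 1) * g (h, r)) ≤
      ∫⁻ x in coneOver (-h • ν) (relBoundary {x : EuclideanSpace ℝ (Fin n) | ⟪x, ν⟫ = 0} (ι '' S)),
        ENNReal.ofReal (Φ (νC x)) ∂μH[(m : ℝ)] := by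
  set μ : Measure (EuclideanSpace ℝ (Fin m)) := μH[(m : ℝ)] with hμ
  set f := coneFun S e with hf
  obtain ⟨D, hD⟩ := coneFun_lip hS he
  have hfm : Measurable f := hD.continuous.measurable
  have hWfin : μ W ≠ ∞ := hW.measure_lt_top.ne
  have hSfin : μ S ≠ ∞ := hSc.measure_lt_top.ne
  have hfr : μ (frontier S) = 0 := hS.addHaar_frontier μ
  have hSint : μ (interior S) = μ S := by
    refine le_antisymm (measure_mono interior_subset) ?_
    have : S ⊆ interior S ∪ frontier S := fun x hx => by
      by_cases hxi : x ∈ interior S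
      · exact Or.inl hxi
      · exact Or.inr ⟨subset_closure hx, hxi⟩
    refine (measure_mono this).trans ((measure_union_le _ _).trans ?_)
    rw [hfr, add_zero]
  have hintfin : μ (interior S) ≠ ∞ := by rwa [hSint]
  -- the integrand
  set ψ : EuclideanSpace ℝ (Fin m) → ℝ :=
    fun x => φ (ι (-((InnerProductSpace.toDual ℝ _).symm (fderiv ℝ f x)))) with hψ
  set G : EuclideanSpace ℝ (Fin m) → ℝ :=
    fun x => α * h * ψ x + β * (1 + fderiv ℝ f x e) with hG
  have hdual := ((InnerProductSpace.toDual ℝ (EuclideanSpace ℝ (Fin m))).symm).continuous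
  have hfdm : Measurable (fderiv ℝ f) := measurable_fderiv ℝ f
  have hψm : Measurable ψ :=
    (hφ.comp (continuous_neg.comp hdual)).measurable.comp hfdm
  have hdem : Measurable fun x => fderiv ℝ f x e := measurable_fderiv_apply_const ℝ f e
  have hGm : Measurable G := (hψm.const_mul _).add ((hdem.const_add 1).const_mul β)
  have hNm : Measurable fun x => ‖nrm ι ν e h (fderiv ℝ f x)‖ := by
    refine Measurable.norm ?_
    have h1 : Continuous (nrm ι ν e h) := by
      unfold nrm
      have := ι.continuous
      fun_prop
    exact h1.measurable.comp hfdm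
  have hfdb : ∀ x, ‖fderiv ℝ f x‖ ≤ D := fun x => norm_fderiv_le_of_lipschitz ℝ hD
  have hψi : IntegrableOn ψ (interior S) μ := by
    obtain ⟨M, hM⟩ := (isCompact_closedBall (0 : EuclideanSpace ℝ (Fin m)) D).exists_bound_of_continuousOn
      hφ.continuousOn
    refine IntegrableOn.of_bound hintfin.lt_top hψm.aestronglyMeasurable M
      (Filter.Eventually.of_forall fun x => hM _ ?_)
    rw [mem_closedBall_zero_iff, norm_neg, LinearIsometryEquiv.norm_map]
    exact hfdb x
  have hdi : IntegrableOn (fun x => fderiv ℝ f x e) (interior S) μ := by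
    refine IntegrableOn.of_bound hintfin.lt_top hdem.aestronglyMeasurable (D * ‖e‖)
      (Filter.Eventually.of_forall fun x => ?_)
    exact (ContinuousLinearMap.le_opNorm _ _).trans (by gcongr; exact hfdb x)
  have h1i : IntegrableOn (fun _ : EuclideanSpace ℝ (Fin m) => (1:ℝ)) (interior S) μ :=
    integrableOn_const hintfin
  have h1di : IntegrableOn (fun x => 1 + fderiv ℝ f x e) (interior S) μ := h1i.add hdi
  have hGi : IntegrableOn G (interior S) μ :=
    (hψi.const_mul _).add (h1di.const_mul β)
  have hGint : ∫ x in interior S, G x ∂μ = α * h * (∫ x in interior S, ψ x ∂μ) +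
      β * (μ S).toReal := by
    have hz := integral_deriv_zero μ hSc hS hD (coneFun_le hS hSc.isClosed he) (coneFun_lt hS he) e
    simp only [hG]
    rw [integral_add (hψi.const_mul _) (h1di.const_mul β), integral_const_mul,
      integral_const_mul]
    congr 2
    rw [integral_add h1i hdi, hz]
    simp [Measure.real, hSint]
  have hKW' : μ (interior S) = ENNReal.ofReal (r ^ m) * μ W := by
    rw [hSint, ← ENNReal.toReal_eq_toReal_iff' hSfin (ENNReal.mul_ne_top ENNReal.ofReal_ne_top hWfin),
      ENNReal.toReal_mul, ENNReal.toReal_ofReal (by positivity), hKW]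
  have hψint : r ^ (m - 1) * (μ W).toReal ≤ ∫ x in interior S, ψ x ∂μ := by
    have h1 := wulff_cone μ hS hSc he hm hW hφ hWφ hr hKW'
    have h2 : ENNReal.ofReal (∫ x in interior S, ψ x ∂μ) =
        ∫⁻ x in interior S, ENNReal.ofReal (ψ x) ∂μ :=
      ofReal_integral_eq_lintegral_ofReal hψi
        (Filter.Eventually.of_forall fun x => hφ0 _ (hι _))
    have h3 : 0 ≤ ∫ x in interior S, ψ x ∂μ :=
      integral_nonneg fun x => hφ0 _ (hι _)
    have h4 := h1.trans (le_of_eq h2.symm)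
    have h5 := ENNReal.toReal_mono ENNReal.ofReal_ne_top h4
    rwa [ENNReal.toReal_mul, ENNReal.toReal_ofReal (by positivity), ENNReal.toReal_ofReal h3] at h5
  have hlow : (μ W).toReal * r ^ (m - 1) * g (h, r) ≤ ∫ x in interior S, G x ∂μ := by
    rw [hGint, ← hαβ', ← hKW]
    have := mul_le_mul_of_nonneg_left hψint (show 0 ≤ α * h by positivity)
    have e1 : r ^ m = r ^ (m - 1) * r := by rw [← pow_succ]; congr 1; omega
    rw [e1]
    nlinarith
  -- the good set
  set A : Set (EuclideanSpace ℝ (Fin m)) := (interior S \ {e}) ∩ {x | DifferentiableAt ℝ f x} with hA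
  have hAm : MeasurableSet A := (isOpen_interior.measurableSet.diff (measurableSet_singleton e)).inter
    (measurableSet_of_differentiableAt ℝ f)
  have hAfin : μ A ≠ ∞ := ne_top_of_le_ne_top hintfin
    (measure_mono fun x hx => hx.1.1)
  have hAae : A =ᵐ[μ] interior S := by
    have : Nonempty (Fin m) := ⟨⟨0, hm⟩⟩
    have hne : ∀ᵐ x ∂μ, x ∉ ({e} : Set (EuclideanSpace ℝ (Fin m))) :=
      measure_eq_zero_iff_ae_notMem.1 (measure_singleton e)
    filter_upwards [hD.ae_differentiableAt (μ := μ), hne] with x h1 h2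
    apply propext
    exact ⟨fun hx => hx.1.1, fun hx => ⟨⟨hx, h2⟩, h1⟩⟩
  set F := gmap ι ν e h f with hF
  set P := gproj ι ν e h with hP
  have hPF : ∀ x, P (F x) = x := fun x => gproj_gmap ι ν e h hν hι hh f x
  set k : EuclideanSpace ℝ (Fin n) → ℝ≥0∞ :=
    fun y => ENNReal.ofReal (G (P y) / ‖nrm ι ν e h (fderiv ℝ f (P y))‖) with hk
  have hkm : Measurable k :=
    ((hGm.div hNm).comp P.continuous.measurable).ennreal_ofReal
  have harea := area_lintegral ι ν e h hm hν hι hh hfm hAm (fun x hx => hx.2) hAfin hkm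
  have hNpos : ∀ L : EuclideanSpace ℝ (Fin m) →L[ℝ] ℝ, 0 < ‖nrm ι ν e h L‖ := by
    intro L
    rw [norm_pos_iff]
    intro h0
    have h1 : ⟪nrm ι ν e h L, ν⟫ = 0 := by rw [h0, inner_zero_left]
    have h2 : 1 + L e = 0 := by
      simpa [nrm, inner_smul_left, inner_sub_left, hι, real_inner_self_eq_norm_sq, hν] using h1
    have h3 : ι ((InnerProductSpace.toDual ℝ _).symm L) = 0 := by
      have : nrm ι ν e h L = -(h • ι ((InnerProductSpace.toDual ℝ _).symm L)) := by
        simp [nrm, h2]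
      rw [h0] at this
      simpa [hh.ne'] using this
    have h4 : L = 0 := by
      rw [← map_zero ι] at h3
      have h5 := ι.injective h3
      rwa [EmbeddingLike.map_eq_zero_iff] at h5
    rw [h4] at h2
    simp at h2
  have hstep1 : ENNReal.ofReal ((μ W).toReal * r ^ (m - 1) * g (h, r)) ≤
      ∫⁻ x in A, ENNReal.ofReal ‖nrm ι ν e h (fderiv ℝ f x)‖ * k (F x) ∂μ := by
    refine (ENNReal.ofReal_le_ofReal hlow).trans ((ofReal_integral_le hGi).trans (le_of_eq ?_))
    rw [← setLIntegral_congr hAae]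
    refine lintegral_congr fun x => ?_
    simp only [hk]
    rw [hPF, ← ENNReal.ofReal_mul (norm_nonneg _), mul_div_cancel₀ _ (hNpos _).ne']
  refine hstep1.trans (harea.trans ?_)
  have hFfr : F '' A ⊆ frontier (coneOver (-h • ν) (ι '' S)) := by
    rintro _ ⟨x, hx, rfl⟩
    exact gmap_mem_frontier ι hν hι hh hSc hS he (interior_subset hx.1.1)
  have hFlat : F '' A ⊆ coneOver (-h • ν) (relBoundary {x | ⟪x, ν⟫ = 0} (ι '' S)) := by
    rintro _ ⟨x, hx, rfl⟩
    exact gmap_mem_lat ι hι hSc hS he (interior_subset hx.1.1) hx.1.2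
  refine le_trans ?_ (lintegral_mono_set hFlat)
  refine lintegral_mono_ae ?_
  filter_upwards [ae_restrict_of_ae_restrict_of_subset hFfr hνC,
    ae_restrict_mem (measurableSet_gmap_image ι ν e h hν hι hh hfm hAm)] with y hy hyA
  obtain ⟨x, hx, rfl⟩ := hyA
  have hdx : HasFDerivAt (coneFun S e) (fderiv ℝ f x) x := hx.2.hasFDerivAt
  obtain ⟨hN, hv⟩ := normal_eq ι hν hι hsurj hh hSc hS he hx.1.1 hdx hy
  rw [hv]
  refine ENNReal.ofReal_le_ofReal ?_
  have e1 : P (gmap ι ν e h f x) = x := hPF x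
  rw [e1]
  exact Phi_lower ι hφ0 hφhom hadm hαβ hν hι hh (one_add_nonneg hSc hS he h0 hdx) hN

lemma exists_iota {m : ℕ} {ν : EuclideanSpace ℝ (Fin (m + 1))} (hν : ‖ν‖ = 1) :
    ∃ ι : EuclideanSpace ℝ (Fin m) →ₗᵢ[ℝ] EuclideanSpace ℝ (Fin (m + 1)),
      (∀ x, ⟪ι x, ν⟫ = 0) ∧ ∀ y, ⟪y, ν⟫ = 0 → ∃ x, ι x = y := by
  have hf : Fact (Module.finrank ℝ (EuclideanSpace ℝ (Fin (m + 1))) = m + 1) :=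
    ⟨finrank_euclideanSpace_fin⟩
  have hν0 : ν ≠ 0 := by
    intro h0; rw [h0] at hν; simp at hν
  have hfin := Submodule.finrank_orthogonal_span_singleton (𝕜 := ℝ) (n := m) hν0
  set bs := (stdOrthonormalBasis ℝ (ℝ ∙ ν)ᗮ).reindex (finCongr hfin)
  refine ⟨(Submodule.subtypeₗᵢ (ℝ ∙ ν)ᗮ).comp bs.repr.symm.toLinearIsometry, fun x => ?_,
    fun y hy => ?_⟩
  · have := (bs.repr.symm x).2
    rw [Submodule.mem_orthogonal_singleton_iff_inner_left] at this
    exact this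
  · have hy' : y ∈ (ℝ ∙ ν)ᗮ := by
      rw [Submodule.mem_orthogonal_singleton_iff_inner_left]; exact hy
    refine ⟨bs.repr ⟨y, hy'⟩, ?_⟩
    simp

lemma interior_nonempty_of_span {m n : ℕ}
    (ι : EuclideanSpace ℝ (Fin m) →ₗᵢ[ℝ] EuclideanSpace ℝ (Fin n))
    {ν : EuclideanSpace ℝ (Fin n)} (hι : ∀ x, ⟪ι x, ν⟫ = 0)
    {S : Set (EuclideanSpace ℝ (Fin m))} (hS : Convex ℝ S)
    (hdim : affineSpan ℝ (ι '' S) = affineSpan ℝ {x : EuclideanSpace ℝ (Fin n) | ⟪x, ν⟫ = 0}) :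
    (interior S).Nonempty := by
  rw [hS.interior_nonempty_iff_affineSpan_eq_top]
  rw [eq_top_iff]
  intro x _
  have h1 : ι x ∈ affineSpan ℝ (ι '' S) := by
    rw [hdim]; exact subset_affineSpan ℝ _ (hι x)
  have h2 := AffineSubspace.map_span ι.toLinearMap.toAffineMap S
  have h3 : (ι.toLinearMap.toAffineMap '' S) = ι '' S := rfl
  rw [h3] at h2
  rw [← h2, AffineSubspace.mem_map] at h1
  obtain ⟨y, hy, hyx⟩ := h1
  have : y = x := ι.injective hyx
  rwa [← this]

lemma wulff_props {m n : ℕ}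
    (ι : EuclideanSpace ℝ (Fin m) →ₗᵢ[ℝ] EuclideanSpace ℝ (Fin n))
    {ν : EuclideanSpace ℝ (Fin n)} (hι : ∀ x, ⟪ι x, ν⟫ = 0)
    (hsurj : ∀ y, ⟪y, ν⟫ = 0 → ∃ x, ι x = y)
    {φ : EuclideanSpace ℝ (Fin n) → ℝ}
    (hφ0 : ∀ z : EuclideanSpace ℝ (Fin n), ⟪z, ν⟫ = 0 → 0 ≤ φ z)
    (hφhom : ∀ l : ℝ, 0 < l → ∀ z : EuclideanSpace ℝ (Fin n), ⟪z, ν⟫ = 0 →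
      φ (l • z) = l * φ z)
    (hφconv : ConvexOn ℝ {z : EuclideanSpace ℝ (Fin n) | ⟪z, ν⟫ = 0} φ)
    (hφcoer : ∀ z : EuclideanSpace ℝ (Fin n), ⟪z, ν⟫ = 0 → z ≠ 0 → 0 < φ z) :
    Continuous (fun x => φ (ι x)) ∧ ∃ W : Set (EuclideanSpace ℝ (Fin m)), IsCompact W ∧
      (∀ z ∈ W, ∀ y, ⟪y, z⟫ ≤ φ (ι y)) ∧ wulffShape ν φ = ι '' W := by
  have hcv : ConvexOn ℝ univ (fun x => φ (ι x)) := by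
    refine ⟨convex_univ, fun x _ y _ a b ha hb hab => ?_⟩
    have := hφconv.2 (hι x) (hι y) ha hb hab
    simpa only [map_add, map_smul] using this
  have hcont : Continuous (fun x => φ (ι x)) := hcv.locallyLipschitz.continuous
  have hφz : φ 0 = 0 := by
    have := hφhom 2 two_pos 0 (by simp)
    rw [smul_zero] at this
    linarith
  -- bounds on the unit sphere
  obtain ⟨M, hM⟩ := (isCompact_sphere (0 : EuclideanSpace ℝ (Fin m)) 1).exists_bound_of_continuousOn
    hcont.continuousOn
  have hscale : ∀ x : EuclideanSpace ℝ (Fin m), x ≠ 0 →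
      φ (ι x) = ‖x‖ * φ (ι (‖x‖⁻¹ • x)) ∧ ‖x‖⁻¹ • x ∈ sphere (0 : EuclideanSpace ℝ (Fin m)) 1 := by
    intro x hx
    have hn : 0 < ‖x‖ := norm_pos_iff.2 hx
    constructor
    · rw [← hφhom _ hn _ (hι _), ← map_smul, smul_smul, mul_inv_cancel₀ hn.ne', one_smul]
    · simp [norm_smul, hn.ne']
  have hub : ∀ x, φ (ι x) ≤ |M| * ‖x‖ := by
    intro x
    by_cases hx : x = 0
    · simp [hx, hφz]
    · obtain ⟨h1, h2⟩ := hscale x hx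
      rw [h1, mul_comm]
      gcongr
      exact (le_abs_self _).trans ((hM _ h2).trans (le_abs_self M))
  have hlb : ∃ c > 0, ∀ x, c * ‖x‖ ≤ φ (ι x) := by
    rcases (sphere (0 : EuclideanSpace ℝ (Fin m)) 1).eq_empty_or_nonempty with he | hne
    · refine ⟨1, one_pos, fun x => ?_⟩
      by_cases hx : x = 0
      · simp [hx, hφz]
      · have := (hscale x hx).2
        rw [he] at this
        exact this.elim
    · obtain ⟨x0, hx0, hmin⟩ := (isCompact_sphere (0 : EuclideanSpace ℝ (Fin m)) 1).exists_isMinOn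
        hne hcont.continuousOn
      have hx00 : x0 ≠ 0 := by
        intro h0; rw [h0] at hx0; simp at hx0
      refine ⟨φ (ι x0), hφcoer _ (hι _) (fun h0 => hx00 (ι.injective (by rw [h0, map_zero]))), fun x => ?_⟩
      by_cases hx : x = 0
      · simp [hx, hφz]
      · obtain ⟨h1, h2⟩ := hscale x hx
        rw [h1, mul_comm]
        gcongr
        exact hmin h2
  obtain ⟨c, hc, hlb⟩ := hlb
  have hchar : ι ⁻¹' (wulffShape ν φ) = {z | ∀ y, ⟪y, z⟫ ≤ φ (ι y)} := by
    ext z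
    constructor
    · rintro ⟨_, hz⟩ y
      have hbdd : BddAbove {s : ℝ | ∃ w : EuclideanSpace ℝ (Fin n), ⟪w, ν⟫ = 0 ∧ φ w < 1 ∧
          s = ⟪ι z, w⟫} := by
        refine ⟨‖z‖ * c⁻¹, ?_⟩
        rintro _ ⟨w, hw, hw1, rfl⟩
        obtain ⟨x, rfl⟩ := hsurj w hw
        rw [ι.inner_map_map]
        refine (real_inner_le_norm _ _).trans ?_
        gcongr
        rw [← one_div, le_div_iff₀ hc]
        have := hlb x
        linarith
      have hstep : ∀ ε : ℝ, 0 < ε → ⟪y, z⟫ ≤ φ (ι y) + ε := by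
        intro ε hε
        have hp : 0 < φ (ι y) + ε := by have := hφ0 _ (hι y); linarith
        have h1 : ⟪ι z, ι ((φ (ι y) + ε)⁻¹ • y)⟫ ≤ 1 := by
          refine le_trans (le_csSup hbdd ⟨_, hι _, ?_, rfl⟩) hz
          rw [map_smul, hφhom _ (by positivity) _ (hι _), inv_mul_lt_iff₀ hp]
          linarith
        rw [ι.inner_map_map, inner_smul_right, inv_mul_le_iff₀ hp, real_inner_comm] at h1
        linarith
      exact le_of_forall_pos_le_add hstep
    · intro hz
      refine ⟨hι z, ?_⟩
      refine csSup_le ⟨_, 0, by simp, by rw [hφz]; exact one_pos, rfl⟩ ?_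
      rintro _ ⟨w, hw, hw1, rfl⟩
      obtain ⟨x, rfl⟩ := hsurj w hw
      rw [ι.inner_map_map, real_inner_comm]
      exact (hz x).trans hw1.le
  refine ⟨hcont, ι ⁻¹' (wulffShape ν φ), ?_, ?_, ?_⟩
  · refine Metric.isCompact_of_isClosed_isBounded ?_ ?_
    · rw [hchar]
      have : {z : EuclideanSpace ℝ (Fin m) | ∀ y, ⟪y, z⟫ ≤ φ (ι y)} =
          ⋂ y, {z | ⟪y, z⟫ ≤ φ (ι y)} := by ext z; simp
      rw [this]
      exact isClosed_iInter fun y => isClosed_le (by fun_prop) continuous_const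
    · refine (Metric.isBounded_closedBall (x := 0) (r := |M|)).subset fun z hz => ?_
      rw [hchar] at hz
      rw [mem_closedBall_zero_iff]
      have h1 := (hz z).trans (hub z)
      rw [real_inner_self_eq_norm_sq] at h1
      by_contra hcon
      push Not at hcon
      have : 0 < ‖z‖ := (abs_nonneg M).trans_lt hcon
      nlinarith
  · intro z hz
    rw [hchar] at hz
    exact hz
  · rw [image_preimage_eq_of_subset]
    intro y hy
    obtain ⟨x, hx⟩ := hsurj y hy.1
    exact ⟨x, hx⟩

end aux

/-- Anisotropic cone lemma: for an admissible `Φ` with data `(g_ν, φ_ν)`, the lateral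
`Φ`-perimeter of the cone of height `h` over an `(n-1)`-dimensional convex body
`E ⊆ ν^⊥` with `0 ∈ E` is at least `ℋ^{n-1}(W_ν) r^{n-2} g_ν(h, r)`, where
`r^{n-1} ℋ^{n-1}(W_ν) = ℋ^{n-1}(E)`. -/
theorem anisotropic_cone_lateral_perimeter_lower_bound
    (n : ℕ) (hn : 2 ≤ n)
    (Φ : EuclideanSpace ℝ (Fin n) → ℝ)
    (hΦ0 : ∀ x, 0 ≤ Φ x)
    (hΦhom : ∀ l : ℝ, 0 < l → ∀ x, Φ (l • x) = l * Φ x)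
    (hΦconv : ConvexOn ℝ Set.univ Φ)
    (ν : EuclideanSpace ℝ (Fin n)) (hν : ‖ν‖ = 1)
    -- admissibility data in direction ν:
    (g : ℝ × ℝ → ℝ) (φ : EuclideanSpace ℝ (Fin n) → ℝ)
    (hg0 : ∀ p : ℝ × ℝ, 0 ≤ p.1 → 0 ≤ p.2 → 0 ≤ g p)
    (hgne : ∃ p : ℝ × ℝ, 0 ≤ p.1 ∧ 0 ≤ p.2 ∧ g p ≠ 0)
    (hghom : ∀ l : ℝ, 0 < l → ∀ p : ℝ × ℝ, 0 ≤ p.1 → 0 ≤ p.2 →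
      g (l * p.1, l * p.2) = l * g p)
    (hgconv : ConvexOn ℝ (Set.Ici (0 : ℝ) ×ˢ Set.Ici (0 : ℝ)) g)
    (hgmono : ∀ t : ℝ, 0 ≤ t → MonotoneOn (fun s => g (s, t)) (Set.Ici (0 : ℝ)))
    (hφ0 : ∀ z : EuclideanSpace ℝ (Fin n), ⟪z, ν⟫ = 0 → 0 ≤ φ z)
    (hφhom : ∀ l : ℝ, 0 < l → ∀ z : EuclideanSpace ℝ (Fin n), ⟪z, ν⟫ = 0 →
      φ (l • z) = l * φ z)
    (hφconv : ConvexOn ℝ {z : EuclideanSpace ℝ (Fin n) | ⟪z, ν⟫ = 0} φ)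
    (hφcoer : ∀ z : EuclideanSpace ℝ (Fin n), ⟪z, ν⟫ = 0 → z ≠ 0 → 0 < φ z)
    (hadm : ∀ x : EuclideanSpace ℝ (Fin n), 0 ≤ ⟪x, ν⟫ →
      g (φ (x - ⟪x, ν⟫ • ν), ⟪x, ν⟫) ≤ Φ x)
    -- the base of the cone:
    (E : Set (EuclideanSpace ℝ (Fin n)))
    (hEcp : IsCompact E) (hEcv : Convex ℝ E) (h0E : (0 : EuclideanSpace ℝ (Fin n)) ∈ E)
    (hEsub : E ⊆ {x : EuclideanSpace ℝ (Fin n) | ⟪x, ν⟫ = 0})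
    (hEdim : affineSpan ℝ E = affineSpan ℝ {x : EuclideanSpace ℝ (Fin n) | ⟪x, ν⟫ = 0})
    (h : ℝ) (hh : 0 < h)
    (b : EuclideanSpace ℝ (Fin n)) (hb : b = -h • ν)
    (r : ℝ) (hr : 0 < r)
    (hrE : r ^ (n - 1) * (μH[(n : ℝ) - 1] (wulffShape ν φ)).toReal =
      (μH[(n : ℝ) - 1] E).toReal)
    -- the inner unit normal of the cone:
    (νC : EuclideanSpace ℝ (Fin n) → EuclideanSpace ℝ (Fin n))
    (hνC : ∀ᵐ x ∂(μH[(n : ℝ) - 1].restrict (frontier (coneOver b E))),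
      IsInnerNormalAt (coneOver b E) x (νC x)) :
    ENNReal.ofReal ((μH[(n : ℝ) - 1] (wulffShape ν φ)).toReal * r ^ (n - 2) * g (h, r)) ≤
      ∫⁻ x in coneOver b
          (relBoundary {x : EuclideanSpace ℝ (Fin n) | ⟪x, ν⟫ = 0} E),
        ENNReal.ofReal (Φ (νC x)) ∂μH[(n : ℝ) - 1] := by
  obtain ⟨m, rfl⟩ : ∃ m, n = m + 1 := ⟨n - 1, by omega⟩
  have hm : 0 < m := by omega
  have hcast : ((m + 1 : ℕ) : ℝ) - 1 = (m : ℝ) := by push_cast; ring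
  have e1 : m + 1 - 1 = m := by omega
  have e2 : m + 1 - 2 = m - 1 := by omega
  rw [hcast, e1] at hrE
  rw [hcast] at hνC
  rw [hcast, e2]
  obtain ⟨ι, hι, hsurj⟩ := exists_iota hν
  obtain ⟨hcont, W, hWc, hWφ, hWeq⟩ := wulff_props ι hι hsurj hφ0 hφhom hφconv hφcoer
  obtain ⟨α, β, hα, hαβ, hαβ'⟩ := support_line g hghom hgconv hgmono hh hr
  have hES : ι '' (ι ⁻¹' E) = E := by
    rw [Set.image_preimage_eq_of_subset]
    intro y hy
    obtain ⟨x, hx⟩ := hsurj y (hEsub hy)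
    exact ⟨x, hx⟩
  have hSc : IsCompact (ι ⁻¹' E) := ι.isometry.isClosedEmbedding.isCompact_preimage hEcp
  have hS : Convex ℝ (ι ⁻¹' E) := hEcv.linear_preimage ι.toLinearMap
  obtain ⟨e, he⟩ := interior_nonempty_of_span ι hι hS (by rw [hES]; exact hEdim)
  have hmW : (μH[(m : ℝ)] (wulffShape ν φ)) = μH[(m : ℝ)] W := by
    rw [hWeq, ι.isometry.hausdorffMeasure_image (Or.inl (Nat.cast_nonneg m))]
  have hmE : (μH[(m : ℝ)] E) = μH[(m : ℝ)] (ι ⁻¹' E) := by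
    conv_lhs => rw [← hES]
    rw [ι.isometry.hausdorffMeasure_image (Or.inl (Nat.cast_nonneg m))]
  rw [hmW, hmE] at hrE
  rw [hmW]
  subst hb
  have h0 : (0 : EuclideanSpace ℝ (Fin m)) ∈ ι ⁻¹' E := by simpa using h0E
  have hmain := main_aux ι hm hφ0 hφhom hadm hr hα hαβ hαβ' hν hι hsurj hh hSc hS he h0 hWc hcont
    hWφ hrE νC (by rw [hES]; exact hνC)
  rw [hES] at hmain
  exact hmain
end
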